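/- arXiv:1905.06031 — 6 statements merged into one kernel-verified Lean document; each statement's English description precedes it below -/
import Mathlib

section
/- Let k ≥ 4. For any K_k-minor-free multigraph G of maximum degree Δ, the strong clique number of G satisfies ω₂'(G) ≤ (3/2)(k−2)Δ. -/
/-!
Let `S` be a strong clique, let `G` be the underlying simple graph of the multigraph, and let `H`
be the subgraph of `G` formed by the edges in `S`.

*From edges to cycles.*  The matrix of multiplicities in `S`, with the missing degrees filled in on
the diagonal, is `Δ` times a doubly stochastic matrix.  By Birkhoff's theorem it is an average of
permutation matrices, so some permutation moves at least `2 |S| / Δ` vertices, each along an edge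
of `H` (`exists_perm`).  Its nontrivial cycles are disjoint cycles of `H`, where a single edge
counts as a cycle of length two (`exists_cycles`).  It remains to show that disjoint cycles of `H`
cover at most `3 (k - 2)` vertices (`sum_card_le`).

*Reduction to extremal families.*  Any two disjoint edges of `H` are joined by an edge of `G`, so
contracting a matching of `H` with `k` edges gives a clique minor of order `k`.  A cycle of length
`n` has a matching with `⌊n / 2⌋ ≥ n / 3` edges, with equality only for triangles.  Hence if more
than `3 (k - 2)` vertices were covered, the maximum matching of the cycles would have exactly
`k - 1` edges and almost all cycles would be triangles: `∑ (3 ⌊n / 2⌋ - n) ≤ 2`.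

*One more branch set.*  Let `v v'` be an edge of one odd cycle `C`.  Besides a matching of size
`k - 1` avoiding `v`, an extra branch set is grown from `v`.  A triangle in which `v'` has no
neighbour contains two neighbours of `v`, and one of these, put into the branch set of `v`, reaches
any prescribed edge or triangle in which `v` has no neighbour (`exists_host`); the rest of that
triangle is still an edge.  So the minor exists whenever `v'` misses at least as many triangles as
`v` misses triangles and matching edges (`hasCliqueMinor_of_missed_le`).  Exchanging `v` and `v'`
shows that, in the absence of the minor, the two together miss at least two matching edges
(`two_le_missed`), whereas no edge disjoint from `v v'` is missed by both.  Applied along a triangle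
or a pentagon this excludes all extremal families with few nontriangular edges outright, and the
remaining ones, two pentagons or a heptagon together with triangles, by counting the missed edges
around a cycle.  A lone heptagon, for `k = 4`, is treated separately (`heptagon_minor`).
-/

/-- `G` contains a clique minor of order `k`: there are `k` pairwise disjoint nonempty
connected branch sets with an edge of `G` between every two of them. -/
def HasCliqueMinor {α : Type} (G : SimpleGraph α) (k : ℕ) : Prop :=
  ∃ S : Fin k → Set α,
    (∀ i, (G.induce (S i)).Connected) ∧
    (∀ i j, i ≠ j → Disjoint (S i) (S j)) ∧
    (∀ i j, i ≠ j → ∃ u ∈ S i, ∃ v ∈ S j, G.Adj u v)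

/-- A strong clique of the multigraph with edge type `E` and endpoint map `ends`:
a set of edges every two of which are incident or joined by an edge. -/
def IsMStrongCliqueSet {V E : Type} (ends : E → Sym2 V) (S : Set E) : Prop :=
  ∀ e ∈ S, ∀ f ∈ S, e ≠ f →
    (∃ x, x ∈ ends e ∧ x ∈ ends f) ∨
    ∃ x y, x ∈ ends e ∧ y ∈ ends f ∧ ∃ g, ends g = s(x, y)

open Finset

/-! ### Assembling clique minors -/

section Minors

variable {V : Type}

theorem hasCliqueMinor_of_fintype {G : SimpleGraph V} {J : Type} [Fintype J] {n : ℕ}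
    (hn : n ≤ Fintype.card J) (B : J → Set V)
    (hc : ∀ j, (G.induce (B j)).Connected)
    (hd : ∀ i j, i ≠ j → Disjoint (B i) (B j))
    (ha : ∀ i j, i ≠ j → ∃ u ∈ B i, ∃ v ∈ B j, G.Adj u v) : HasCliqueMinor G n := by
  have e : Fin (Fintype.card J) ≃ J := (Fintype.equivFin J).symm
  have hi : Function.Injective (fun i : Fin n => e (Fin.castLE hn i)) :=
    e.injective.comp (Fin.castLE_injective hn)
  exact ⟨fun i => B (e (Fin.castLE hn i)), fun i => hc _,
    fun i j hij => hd _ _ (hi.ne hij), fun i j hij => ha _ _ (hi.ne hij)⟩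

theorem connected_star {G : SimpleGraph V} {X : Set V} {v : V} (hv : v ∈ X)
    (h : ∀ x ∈ X, x ≠ v → G.Adj v x) : (G.induce X).Connected := by
  rw [SimpleGraph.connected_iff_exists_forall_reachable]
  refine ⟨⟨v, hv⟩, fun ⟨x, hx⟩ => ?_⟩
  by_cases hxv : x = v
  · subst hxv; exact SimpleGraph.Reachable.refl _
  · exact SimpleGraph.Adj.reachable (by simpa using h x hx hxv)

/-- `H` is the graph of a strong clique in `G`: any two vertex-disjoint edges of `H` are joined
by an edge of `G`. -/
def StrongIn (H G : SimpleGraph V) : Prop :=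
  ∀ a b c d, H.Adj a b → H.Adj c d → a ≠ c → a ≠ d → b ≠ c → b ≠ d →
    G.Adj a c ∨ G.Adj a d ∨ G.Adj b c ∨ G.Adj b d

variable [DecidableEq V]

/-- `m` is the vertex set of an edge of `H`. -/
def IsPair (H : SimpleGraph V) (m : Finset V) : Prop := ∃ a b, H.Adj a b ∧ m = {a, b}

/-- `t` is the vertex set of a triangle of `H`. -/
def IsTri (H : SimpleGraph V) (t : Finset V) : Prop :=
  ∃ a b c, H.Adj a b ∧ H.Adj b c ∧ H.Adj a c ∧ t = {a, b, c}

theorem IsPair.connected {H G : SimpleGraph V} (hHG : H ≤ G) {m : Finset V} (hm : IsPair H m) :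
    (G.induce (m : Set V)).Connected := by
  obtain ⟨a, b, hab, rfl⟩ := hm
  refine connected_star (v := a) (by simp) ?_
  intro x hx hxa
  simp only [coe_insert, coe_singleton, Set.mem_insert_iff, Set.mem_singleton_iff] at hx
  rcases hx with rfl | rfl
  · exact absurd rfl hxa
  · exact hHG hab

theorem IsPair.joined {H G : SimpleGraph V} (hst : StrongIn H G) {m m' : Finset V}
    (hm : IsPair H m) (hm' : IsPair H m') (hd : Disjoint m m') :
    ∃ u ∈ m, ∃ v ∈ m', G.Adj u v := by
  obtain ⟨a, b, hab, rfl⟩ := hm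
  obtain ⟨c, d, hcd, rfl⟩ := hm'
  simp only [disjoint_insert_left, mem_insert, mem_singleton, not_or,
    disjoint_singleton_left] at hd
  rcases hst a b c d hab hcd hd.1.1 hd.1.2 hd.2.1 hd.2.2 with h | h | h | h
  · exact ⟨a, by simp, c, by simp, h⟩
  · exact ⟨a, by simp, d, by simp, h⟩
  · exact ⟨b, by simp, c, by simp, h⟩
  · exact ⟨b, by simp, d, by simp, h⟩

theorem IsTri.exists_pair {H : SimpleGraph V} {t : Finset V} (ht : IsTri H t) {x : V}
    (hx : x ∈ t) : ∃ p ⊆ t, IsPair H p ∧ x ∈ p := by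
  obtain ⟨a, b, c, hab, hbc, hac, rfl⟩ := ht
  simp only [mem_insert, mem_singleton] at hx
  rcases hx with rfl | rfl | rfl
  · exact ⟨{x, b}, by intro y; simp; tauto, ⟨x, b, hab, rfl⟩, by simp⟩
  · exact ⟨{a, x}, by intro y; simp; tauto, ⟨a, x, hab, rfl⟩, by simp⟩
  · exact ⟨{a, x}, by intro y; simp; tauto, ⟨a, x, hac, rfl⟩, by simp⟩

theorem IsTri.exists_pair_erase {H : SimpleGraph V} {t : Finset V} (ht : IsTri H t) {x : V}
    (hx : x ∈ t) : ∃ p ⊆ t, IsPair H p ∧ x ∉ p ∧ ∃ y ∈ p, H.Adj x y := by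
  obtain ⟨a, b, c, hab, hbc, hac, rfl⟩ := ht
  simp only [mem_insert, mem_singleton] at hx
  rcases hx with rfl | rfl | rfl
  · exact ⟨{b, c}, by intro y; simp; tauto, ⟨b, c, hbc, rfl⟩, by simp [hab.ne, hac.ne],
      b, by simp, hab⟩
  · exact ⟨{a, c}, by intro y; simp; tauto, ⟨a, c, hac, rfl⟩, by simp [hab.ne', hbc.ne],
      a, by simp, hab.symm⟩
  · exact ⟨{a, b}, by intro y; simp; tauto, ⟨a, b, hab, rfl⟩, by simp [hac.ne', hbc.ne'],
      a, by simp, hac.symm⟩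

theorem IsPair.nonempty {H : SimpleGraph V} {m : Finset V} (hm : IsPair H m) : m.Nonempty := by
  obtain ⟨a, b, -, rfl⟩ := hm; simp

theorem IsTri.nonempty {H : SimpleGraph V} {m : Finset V} (hm : IsTri H m) : m.Nonempty := by
  obtain ⟨a, b, c, -, -, -, rfl⟩ := hm; simp

/-- Contracting the edges of a matching of a strong clique yields a clique minor. -/
theorem hasCliqueMinor_of_matching {H G : SimpleGraph V} (hHG : H ≤ G) (hst : StrongIn H G)
    {M : Finset (Finset V)} (hM : ∀ m ∈ M, IsPair H m) (hd : (M : Set (Finset V)).PairwiseDisjoint id)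
    {n : ℕ} (hn : n ≤ #M) : HasCliqueMinor G n := by
  refine hasCliqueMinor_of_fintype (J := M) (by simpa using hn) (fun j => ((j : Finset V) : Set V))
    (fun j => (hM _ j.2).connected hHG) ?_ ?_
  · intro i j hij
    exact_mod_cast hd i.2 j.2 (fun h => hij (Subtype.ext h))
  · intro i j hij
    exact (hM _ i.2).joined hst (hM _ j.2) (hd i.2 j.2 (fun h => hij (Subtype.ext h)))

/-- Disjoint edges of a strong clique together with one further connected set that has a
neighbour in each of them. -/
theorem hasCliqueMinor_of_matching_add_one {H G : SimpleGraph V} (hHG : H ≤ G)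
    (hst : StrongIn H G) {J : Type} [Fintype J] (p : J → Finset V) (hp : ∀ j, IsPair H (p j))
    (hd : ∀ i j, i ≠ j → Disjoint (p i) (p j)) (X : Set V) (hX : (G.induce X).Connected)
    (hpX : ∀ j, ∀ x ∈ p j, x ∉ X) (ht : ∀ j, ∃ x ∈ X, ∃ y ∈ p j, G.Adj x y) :
    HasCliqueMinor G (Fintype.card J + 1) := by
  refine hasCliqueMinor_of_fintype (J := Option J) (by simp)
    (fun j => j.elim X (fun j => (p j : Set V))) ?_ ?_ ?_
  · rintro (_ | j)
    · exact hX
    · exact (hp j).connected hHG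
  · rintro (_ | i) (_ | j) hij
    · exact absurd rfl hij
    · exact Set.disjoint_right.2 fun x hx => hpX j x hx
    · exact Set.disjoint_left.2 fun x hx => hpX i x hx
    · exact Finset.disjoint_coe.2 (hd i j (fun h => hij (by rw [h])))
  · rintro (_ | i) (_ | j) hij
    · exact absurd rfl hij
    · exact ht j
    · obtain ⟨x, hx, y, hy, h⟩ := ht i
      exact ⟨y, hy, x, hx, h.symm⟩
    · exact (hp i).joined hst (hp j) (hd i j (fun h => hij (by rw [h])))

end Minors

/-! ### The extra branch set -/

section Core

variable {V : Type} [DecidableEq V]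

open Classical in
/-- The number of members of the family `M` that contain no neighbour of `v`. -/
noncomputable def missed (G : SimpleGraph V) (v : V) (M : Finset (Finset V)) : ℕ :=
  #{m ∈ M | ∀ y ∈ m, ¬ G.Adj v y}

/-- If `v'` has no neighbour in the triangle `t`, then `v` has two neighbours in `t`; as these
span an edge of the strong clique, one of them has a neighbour in any other edge `u`. -/
theorem exists_host {H G : SimpleGraph V} (hst : StrongIn H G) {v v' : V} (hvv : H.Adj v v')
    {t u : Finset V} (ht : IsTri H t) (hu : IsPair H u) (hv : v ∉ t) (hv' : v' ∉ t)
    (hd : Disjoint t u) (hmiss : ∀ y ∈ t, ¬ G.Adj v' y) :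
    ∃ x ∈ t, G.Adj v x ∧ ∃ y ∈ u, G.Adj x y := by
  obtain ⟨a, b, c, hab, hbc, hac, rfl⟩ := ht
  simp only [mem_insert, mem_singleton, not_or] at hv hv'
  have key : ∀ x y, H.Adj x y → x ∈ ({a, b, c} : Finset V) → y ∈ ({a, b, c} : Finset V) →
      G.Adj v x ∨ G.Adj v y := by
    intro x y hxy hx hy
    have hx' := hmiss x hx
    have hy' := hmiss y hy
    simp only [mem_insert, mem_singleton] at hx hy
    have := hst v v' x y hvv hxy (by rintro rfl; tauto) (by rintro rfl; tauto)
      (by rintro rfl; tauto) (by rintro rfl; tauto)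
    tauto
  have fin : ∀ x y, H.Adj x y → x ∈ ({a, b, c} : Finset V) → y ∈ ({a, b, c} : Finset V) →
      G.Adj v x → G.Adj v y → ∃ x ∈ ({a, b, c} : Finset V), G.Adj v x ∧ ∃ y ∈ u, G.Adj x y := by
    intro x y hxy hx hy hvx hvy
    have hp : IsPair H {x, y} := ⟨x, y, hxy, rfl⟩
    obtain ⟨z, hz, w, hw, hzw⟩ := hp.joined hst hu
      (hd.mono_left (by
        intro z hz
        simp only [mem_insert, mem_singleton] at hz
        rcases hz with rfl | rfl
        · exact hx
        · exact hy))
    simp only [mem_insert, mem_singleton] at hz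
    rcases hz with rfl | rfl
    · exact ⟨z, hx, hvx, w, hw, hzw⟩
    · exact ⟨z, hy, hvy, w, hw, hzw⟩
  have h1 := key a b hab (by simp) (by simp)
  have h2 := key b c hbc (by simp) (by simp)
  have h3 := key a c hac (by simp) (by simp)
  by_cases ha : G.Adj v a
  · by_cases hb : G.Adj v b
    · exact fin a b hab (by simp) (by simp) ha hb
    · exact fin a c hac (by simp) (by simp) ha (by tauto)
  · exact fin b c hbc (by simp) (by simp) (by tauto) (by tauto)

open Classical in
/-- The main construction.  Every triangle of `T` missed by `v'` can host one vertex adjacent to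
`v` and to a prescribed triangle or edge missed by `v`.  If there are enough such triangles,
`v` and the hosts form a connected set with a neighbour in one edge of each triangle of `T` and
in each edge of `M`, whence a clique minor of order `#T + #M + 1`. -/
theorem hasCliqueMinor_of_missed_le {H G : SimpleGraph V} (hHG : H ≤ G) (hst : StrongIn H G)
    {T M : Finset (Finset V)} (hT : ∀ t ∈ T, IsTri H t) (hM : ∀ m ∈ M, IsPair H m)
    (hTd : (T : Set (Finset V)).PairwiseDisjoint id)
    (hMd : (M : Set (Finset V)).PairwiseDisjoint id)
    (hTM : ∀ t ∈ T, ∀ m ∈ M, Disjoint t m) {v v' : V} (hvv : H.Adj v v')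
    (hvT : ∀ t ∈ T, v ∉ t) (hvM : ∀ m ∈ M, v ∉ m) (hvT' : ∀ t ∈ T, v' ∉ t)
    (hcard : missed G v T + missed G v M ≤ missed G v' T) :
    HasCliqueMinor G (#T + #M + 1) := by
  have hdisj : Disjoint T M := by
    rw [Finset.disjoint_left]
    intro w hw hw'
    have := hTM w hw w hw'
    rw [disjoint_self_iff_empty] at this
    exact (hM w hw').nonempty.ne_empty this
  have hall : ((T ∪ M : Finset (Finset V)) : Set (Finset V)).PairwiseDisjoint id := by
    intro x hx y hy hxy
    simp only [coe_union, Set.mem_union, mem_coe] at hx hy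
    rcases hx with hx | hx <;> rcases hy with hy | hy
    · exact hTd hx hy hxy
    · exact hTM x hx y hy
    · exact (hTM y hy x hx).symm
    · exact hMd hx hy hxy
  set U : Finset (Finset V) := {m ∈ T ∪ M | ∀ y ∈ m, ¬ G.Adj v y} with hU
  set B : Finset (Finset V) := {t ∈ T | ∀ y ∈ t, ¬ G.Adj v' y} with hB
  have hUB : #U ≤ #B := by
    refine le_trans ?_ hcard
    rw [hU, filter_union]
    exact card_union_le _ _
  obtain ⟨f⟩ : Nonempty (U ↪ B) := Function.Embedding.nonempty_of_card_le (by simpa using hUB)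
  have hBT : ∀ t : B, (t : Finset V) ∈ T := fun t => (mem_filter.1 t.2).1
  have hUTM : ∀ u : U, (u : Finset V) ∈ T ∪ M := fun u => (mem_filter.1 u.2).1
  have hpairU : ∀ w ∈ T ∪ M, ∃ p ⊆ w, IsPair H p := by
    intro w hw
    rcases mem_union.1 hw with hw | hw
    · obtain ⟨x, hx⟩ := (hT w hw).nonempty
      obtain ⟨p, hp, hp', -⟩ := (hT w hw).exists_pair hx
      exact ⟨p, hp, hp'⟩
    · exact ⟨w, subset_rfl, hM w hw⟩
  have hhost : ∀ u : U, ∃ x ∈ (f u : Finset V), G.Adj v x ∧ ∃ y ∈ (u : Finset V), G.Adj x y := by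
    intro u
    obtain ⟨p, hpu, hp⟩ := hpairU _ (hUTM u)
    have hfm := (mem_filter.1 (f u).2).2
    have hne : (f u : Finset V) ≠ (u : Finset V) := by
      -- a triangle missed by both `v` and `v'` would contradict the strong clique property
      intro he
      obtain ⟨q, hq, hq'⟩ := hpairU _ (mem_union_left M (hBT (f u)))
      have hum := (mem_filter.1 u.2).2
      have hp2 : IsPair H {v, v'} := ⟨v, v', hvv, rfl⟩
      obtain ⟨x, hx, y, hy, hxy⟩ := hp2.joined hst hq' (by
        rw [Finset.disjoint_left]
        intro x hx hxq
        simp only [mem_insert, mem_singleton] at hx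
        rcases hx with rfl | rfl
        · exact hvT _ (hBT (f u)) (hq hxq)
        · exact hvT' _ (hBT (f u)) (hq hxq))
      simp only [mem_insert, mem_singleton] at hx
      rcases hx with rfl | rfl
      · exact hum y (he ▸ hq hy) hxy
      · exact hfm y (hq hy) hxy
    obtain ⟨x, hx, hvx, y, hy, hxy⟩ := exists_host hst hvv (hT _ (hBT (f u))) hp
      (hvT _ (hBT _)) (hvT' _ (hBT _))
      ((hall (mem_union_left M (hBT (f u))) (hUTM u) hne).mono_right hpu) hfm
    exact ⟨x, hx, hvx, y, hpu hy, hxy⟩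
  choose h hhf hvh hhu using hhost
  set X : Set V := insert v (Set.range h) with hX
  have hXc : (G.induce X).Connected := by
    refine connected_star (v := v) (by simp [hX]) ?_
    rintro x (rfl | ⟨u, rfl⟩) hxv
    · exact absurd rfl hxv
    · exact hvh u
  have hvall : ∀ w ∈ T ∪ M, v ∉ w := by
    intro w hw
    rcases mem_union.1 hw with hw | hw
    · exact hvT w hw
    · exact hvM w hw
  -- a member of `T ∪ M` meets `X` only in its own host
  have hXw : ∀ w ∈ T ∪ M, ∀ x ∈ w, x ∈ X → ∃ u : U, (f u : Finset V) = w ∧ x = h u := by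
    rintro w hw x hxw (rfl | ⟨u, rfl⟩)
    · exact absurd hxw (hvall w hw)
    · refine ⟨u, ?_, rfl⟩
      by_contra hne
      exact Finset.disjoint_left.1 (hall (mem_union_left M (hBT (f u))) hw hne) (hhf u) hxw
  have htouch : ∀ w ∈ T ∪ M, ∃ x ∈ X, ∃ y ∈ w, G.Adj x y := by
    intro w hw
    by_cases hwU : w ∈ U
    · obtain ⟨y, hy, hxy⟩ := hhu ⟨w, hwU⟩
      exact ⟨_, Or.inr ⟨⟨w, hwU⟩, rfl⟩, y, hy, hxy⟩
    · simp only [hU, mem_filter, not_and, not_forall, not_not] at hwU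
      obtain ⟨y, hy, hvy⟩ := hwU hw
      exact ⟨v, Or.inl rfl, y, hy, hvy⟩
  have hp : ∀ w : (T ∪ M : Finset (Finset V)), ∃ p ⊆ (w : Finset V), IsPair H p ∧
      (∀ x ∈ p, x ∉ X) ∧ ∃ x ∈ X, ∃ y ∈ p, G.Adj x y := by
    rintro ⟨w, hw⟩
    by_cases hf : ∃ u : U, (f u : Finset V) = w
    · obtain ⟨u, rfl⟩ := hf
      obtain ⟨p, hpw, hp, hup, y, hy, hxy⟩ := (hT _ (hBT (f u))).exists_pair_erase (hhf u)
      refine ⟨p, hpw, hp, ?_, h u, Or.inr ⟨u, rfl⟩, y, hy, hHG hxy⟩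
      intro x hx hxX
      obtain ⟨u', hu', rfl⟩ := hXw _ hw x (hpw hx) hxX
      have : u' = u := f.injective (Subtype.ext hu')
      exact hup (this ▸ hx)
    · have hwX : ∀ x ∈ w, x ∉ X := fun x hx hxX => by
        obtain ⟨u, hu, -⟩ := hXw w hw x hx hxX
        exact hf ⟨u, hu⟩
      obtain ⟨x, hx, y, hy, hxy⟩ := htouch w hw
      obtain ⟨p, hpw, hp, hyp⟩ : ∃ p ⊆ w, IsPair H p ∧ y ∈ p := by
        rcases mem_union.1 hw with hw | hw
        · exact (hT w hw).exists_pair hy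
        · exact ⟨w, subset_rfl, hM w hw, hy⟩
      exact ⟨p, hpw, hp, fun z hz => hwX z (hpw hz), x, hx, y, hyp, hxy⟩
  choose p hpw hpp hpX hpt using hp
  have := hasCliqueMinor_of_matching_add_one hHG hst p hpp
    (fun i j hij => (hall i.2 j.2 (fun he => hij (Subtype.ext he))).mono (hpw i) (hpw j)) X hXc
    hpX hpt
  rwa [Fintype.card_coe, card_union_of_disjoint hdisj] at this

theorem missed_union_le {G : SimpleGraph V} (v : V) (P M : Finset (Finset V)) :
    missed G v (P ∪ M) ≤ missed G v P + missed G v M := by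
  classical
  unfold missed
  rw [filter_union]
  exact card_union_le _ _

/-- The two ends `v`, `v'` of an edge inside `C` compete: `P` and `P'` are the edges used inside
`C` when `v`, respectively `v'`, is the root of the extra branch set.  If no clique minor arises
from either, then `v` and `v'` together miss at least two of the edges in use. -/
theorem two_le_missed {H G : SimpleGraph V} (hHG : H ≤ G) (hst : StrongIn H G) {k : ℕ}
    (hk : ¬ HasCliqueMinor G k)
    {T M : Finset (Finset V)} (hT : ∀ t ∈ T, IsTri H t) (hM : ∀ m ∈ M, IsPair H m)
    (hTd : (T : Set (Finset V)).PairwiseDisjoint id)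
    (hMd : (M : Set (Finset V)).PairwiseDisjoint id)
    (hTM : ∀ t ∈ T, ∀ m ∈ M, Disjoint t m) {C : Finset V} (hCT : ∀ t ∈ T, Disjoint C t)
    (hCM : ∀ m ∈ M, Disjoint C m) {P P' : Finset (Finset V)}
    (hP : ∀ m ∈ P, IsPair H m) (hP' : ∀ m ∈ P', IsPair H m)
    (hPd : (P : Set (Finset V)).PairwiseDisjoint id)
    (hPd' : (P' : Set (Finset V)).PairwiseDisjoint id)
    {v v' : V} (hv : v ∈ C) (hv' : v' ∈ C) (hvv : H.Adj v v')
    (hPC : ∀ m ∈ P, m ⊆ C ∧ v ∉ m) (hPC' : ∀ m ∈ P', m ⊆ C ∧ v' ∉ m)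
    (hc : #T + #M + #P + 1 = k) (hc' : #P = #P') :
    2 ≤ missed G v P + missed G v M + (missed G v' P' + missed G v' M) := by
  by_contra hlt
  have main : ∀ (P : Finset (Finset V)) (v v' : V), (∀ m ∈ P, IsPair H m) →
      (P : Set (Finset V)).PairwiseDisjoint id → v ∈ C → v' ∈ C → H.Adj v v' →
      (∀ m ∈ P, m ⊆ C ∧ v ∉ m) → #T + #M + #P + 1 = k →
      ¬ (missed G v T + (missed G v P + missed G v M) ≤ missed G v' T) := by
    intro P v v' hP hPd hv hv' hvv hPC hc hle
    have hPM : Disjoint P M := by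
      rw [Finset.disjoint_left]
      intro w hw hw'
      have := (hCM w hw').mono_left (hPC w hw).1
      rw [disjoint_self_iff_empty] at this
      exact (hM w hw').nonempty.ne_empty this
    apply hk
    have := hasCliqueMinor_of_missed_le hHG hst (T := T) (M := P ∪ M) hT
      (by intro m hm; rcases mem_union.1 hm with hm | hm; exacts [hP m hm, hM m hm]) hTd
      (by
        intro x hx y hy hxy
        simp only [coe_union, Set.mem_union, mem_coe] at hx hy
        rcases hx with hx | hx <;> rcases hy with hy | hy
        · exact hPd hx hy hxy
        · exact (hCM y hy).mono_left (hPC x hx).1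
        · exact ((hCM x hx).mono_left (hPC y hy).1).symm
        · exact hMd hx hy hxy)
      (by
        intro t ht m hm
        rcases mem_union.1 hm with hm | hm
        · exact ((hCT t ht).mono_left (hPC m hm).1).symm
        · exact hTM t ht m hm)
      hvv (fun t ht => Finset.disjoint_left.1 (hCT t ht) hv)
      (by
        intro m hm
        rcases mem_union.1 hm with hm | hm
        · exact (hPC m hm).2
        · exact Finset.disjoint_left.1 (hCM m hm) hv)
      (fun t ht => Finset.disjoint_left.1 (hCT t ht) hv')
      (by have := missed_union_le (G := G) v P M; omega)
    rw [card_union_of_disjoint hPM] at this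
    convert this using 1
    omega
  have h1 := main P v v' hP hPd hv hv' hvv hPC hc
  have h2 := main P' v' v hP' hPd' hv' hv hvv.symm hPC' (by omega)
  omega

end Core

/-! ### Cycles of the strong clique and their matchings -/

section Cycles

variable {V : Type}

open Classical in
/-- Equal to `1` if `v` has no neighbour on the edge `c j c (j + 1)`, and to `0` otherwise. -/
noncomputable def missEdge (G : SimpleGraph V) (v : V) (c : ℕ → V) (j : ℕ) : ℕ :=
  if G.Adj v (c j) ∨ G.Adj v (c (j + 1)) then 0 else 1

theorem missEdge_shift (G : SimpleGraph V) (v : V) (c : ℕ → V) (a j : ℕ) :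
    missEdge G v (fun i => c (i + a)) j = missEdge G v c (j + a) := by
  have e : c (j + 1 + a) = c (j + a + 1) := by congr 1; omega
  unfold missEdge
  rw [← e]

theorem missEdge_le_one (G : SimpleGraph V) (v : V) (c : ℕ → V) (j : ℕ) :
    missEdge G v c j ≤ 1 := by
  unfold missEdge; split_ifs <;> omega

theorem missEdge_eq_zero {G : SimpleGraph V} {v : V} {c : ℕ → V} {j : ℕ}
    (h : G.Adj v (c j) ∨ G.Adj v (c (j + 1))) : missEdge G v c j = 0 := by
  unfold missEdge; simp [h]

variable [DecidableEq V]

/-- `c` runs periodically through a cycle of `H` with vertex set `C`, each period visiting every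
vertex of `C` once.  A single edge counts as a cycle of length two. -/
def IsCyc (H : SimpleGraph V) (C : Finset V) (c : ℕ → V) : Prop :=
  (∀ i, H.Adj (c i) (c (i + 1))) ∧ (∀ i, c (i + #C) = c i) ∧ 0 < #C ∧ C = (range #C).image c

theorem IsCyc.mem {H : SimpleGraph V} {C : Finset V} {c : ℕ → V} (h : IsCyc H C c) (i : ℕ) :
    c i ∈ C := by
  obtain ⟨-, hp, hpos, hC⟩ := h
  have hper : Function.Periodic c #C := hp
  rw [← hper.map_mod_nat i, hC]
  apply mem_image_of_mem
  rw [← hC]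
  exact mem_range.2 (Nat.mod_lt _ hpos)

theorem IsCyc.shift {H : SimpleGraph V} {C : Finset V} {c : ℕ → V} (h : IsCyc H C c) :
    IsCyc H C (fun i => c (i + 1)) := by
  have hm := h.mem
  obtain ⟨ha, hp, hpos, hC⟩ := h
  refine ⟨fun i => ha _, fun i => ?_, hpos, ?_⟩
  · have := hp (i + 1)
    rw [show i + 1 + #C = i + #C + 1 by omega] at this
    exact this
  · apply Finset.Subset.antisymm
    · intro x hx
      rw [hC] at hx
      obtain ⟨j, hj, rfl⟩ := mem_image.1 hx
      rw [mem_range] at hj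
      rcases Nat.eq_zero_or_pos j with rfl | hj0
      · refine mem_image.2 ⟨#C - 1, mem_range.2 (by omega), ?_⟩
        have := hp 0
        rw [show 0 + #C = #C - 1 + 1 by omega] at this
        exact this
      · exact mem_image.2 ⟨j - 1, mem_range.2 (by omega), by
          show c (j - 1 + 1) = c j
          rw [show j - 1 + 1 = j by omega]⟩
    · intro x hx
      obtain ⟨j, -, rfl⟩ := mem_image.1 hx
      exact hm _

theorem IsCyc.shift_add {H : SimpleGraph V} {C : Finset V} {c : ℕ → V} (h : IsCyc H C c)
    (a : ℕ) : IsCyc H C (fun i => c (i + a)) := by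
  induction a with
  | zero => exact h
  | succ a ih =>
    have := ih.shift
    convert this using 3
    omega

theorem IsCyc.inj {H : SimpleGraph V} {C : Finset V} {c : ℕ → V} (h : IsCyc H C c) {i j : ℕ}
    (hi : i < #C) (hj : j < #C) (hij : c i = c j) : i = j := by
  have : Set.InjOn c (range #C : Set ℕ) := by
    rw [← card_image_iff, ← h.2.2.2, card_range]
  exact this (by simpa using hi) (by simpa using hj) hij

theorem IsCyc.two_le {H : SimpleGraph V} {C : Finset V} {c : ℕ → V} (h : IsCyc H C c) :
    2 ≤ #C := by
  by_contra hlt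
  have h1 : #C = 1 := by have := h.2.2.1; omega
  have := h.2.1 0
  rw [h1] at this
  exact (h.1 0).ne this.symm

/-- The `l` edges `c 0 c 1`, `c 2 c 3`, … on the cycle `c`. -/
def altPairs (c : ℕ → V) (l : ℕ) : Finset (Finset V) :=
  (range l).image fun i => {c (2 * i), c (2 * i + 1)}

theorem isPair_altPairs {H : SimpleGraph V} {C : Finset V} {c : ℕ → V} (h : IsCyc H C c) (l : ℕ) :
    ∀ m ∈ altPairs c l, IsPair H m := by
  intro m hm
  obtain ⟨i, -, rfl⟩ := mem_image.1 hm
  exact ⟨_, _, h.1 _, rfl⟩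

theorem altPairs_subset {H : SimpleGraph V} {C : Finset V} {c : ℕ → V} (h : IsCyc H C c) (l : ℕ) :
    ∀ m ∈ altPairs c l, m ⊆ C := by
  intro m hm
  obtain ⟨i, -, rfl⟩ := mem_image.1 hm
  intro x hx
  simp only [mem_insert, mem_singleton] at hx
  rcases hx with rfl | rfl <;> exact h.mem _

theorem notMem_altPairs {H : SimpleGraph V} {C : Finset V} {c : ℕ → V} (h : IsCyc H C c) {l j : ℕ}
    (hl : 2 * l ≤ j) (hj : j < #C) : ∀ m ∈ altPairs c l, c j ∉ m := by
  intro m hm hcj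
  obtain ⟨i, hi, rfl⟩ := mem_image.1 hm
  rw [mem_range] at hi
  simp only [mem_insert, mem_singleton] at hcj
  rcases hcj with e | e
  · have := h.inj hj (by omega) e; omega
  · have := h.inj hj (by omega) e; omega

theorem altPairs_index {H : SimpleGraph V} {C : Finset V} {c : ℕ → V} (h : IsCyc H C c) {l : ℕ}
    (hl : 2 * l ≤ #C) {i j : ℕ} (hi : i < l) (hj : j < l) (hij : i ≠ j) :
    Disjoint ({c (2 * i), c (2 * i + 1)} : Finset V) {c (2 * j), c (2 * j + 1)} := by
  rw [Finset.disjoint_left]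
  intro x hx hy
  simp only [mem_insert, mem_singleton] at hx hy
  rcases hx with rfl | rfl <;> rcases hy with e | e <;>
  · have := h.inj (by omega) (by omega) e
    omega

theorem pairwiseDisjoint_altPairs {H : SimpleGraph V} {C : Finset V} {c : ℕ → V}
    (h : IsCyc H C c) {l : ℕ} (hl : 2 * l ≤ #C) :
    (altPairs c l : Set (Finset V)).PairwiseDisjoint id := by
  intro x hx y hy hxy
  obtain ⟨i, hi, rfl⟩ := mem_image.1 hx
  obtain ⟨j, hj, rfl⟩ := mem_image.1 hy
  exact altPairs_index h hl (mem_range.1 hi) (mem_range.1 hj) (by rintro rfl; exact hxy rfl)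

theorem altPairs_injOn {H : SimpleGraph V} {C : Finset V} {c : ℕ → V}
    (h : IsCyc H C c) {l : ℕ} (hl : 2 * l ≤ #C) :
    Set.InjOn (fun i => ({c (2 * i), c (2 * i + 1)} : Finset V)) (range l : Set ℕ) := by
  intro i hi j hj hij
  by_contra hne
  have := altPairs_index h hl (by simpa using hi) (by simpa using hj) hne
  simp only at hij
  rw [hij, disjoint_self_iff_empty] at this
  simp at this

theorem card_altPairs {H : SimpleGraph V} {C : Finset V} {c : ℕ → V} (h : IsCyc H C c) {l : ℕ}
    (hl : 2 * l ≤ #C) : #(altPairs c l) = l := by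
  rw [altPairs, card_image_of_injOn (altPairs_injOn h hl), card_range]

theorem missed_altPairs {H G : SimpleGraph V} {C : Finset V} {c : ℕ → V} (h : IsCyc H C c) {l : ℕ}
    (hl : 2 * l ≤ #C) (v : V) :
    missed G v (altPairs c l) = ∑ i ∈ range l, missEdge G v c (2 * i) := by
  classical
  unfold missed altPairs
  rw [filter_image, card_image_of_injOn ((altPairs_injOn h hl).mono
    (coe_subset.2 (filter_subset _ _))), card_filter]
  apply sum_congr rfl
  intro i _
  unfold missEdge
  simp only [mem_insert, mem_singleton, forall_eq_or_imp, forall_eq]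
  split_ifs <;> tauto

theorem missEdge_period {G H : SimpleGraph V} {C : Finset V} {c : ℕ → V} (h : IsCyc H C c) (v : V)
    (j : ℕ) : missEdge G v c (j + #C) = missEdge G v c j := by
  unfold missEdge
  have h1 := h.2.1 j
  have h2 := h.2.1 (j + 1)
  rw [show j + 1 + #C = j + #C + 1 by omega] at h2
  rw [h1, h2]

open Classical in
/-- The edges of `M` missed by `v` and those missed by `v'` are distinct, if `v v'` is an edge of
the strong clique. -/
theorem disjoint_missed {H G : SimpleGraph V} (hst : StrongIn H G) {M : Finset (Finset V)}
    (hM : ∀ m ∈ M, IsPair H m) {v v' : V} (hvv : H.Adj v v') (hv : ∀ m ∈ M, v ∉ m)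
    (hv' : ∀ m ∈ M, v' ∉ m) :
    Disjoint {m ∈ M | ∀ y ∈ m, ¬ G.Adj v y} {m ∈ M | ∀ y ∈ m, ¬ G.Adj v' y} := by
  rw [Finset.disjoint_left]
  intro m h1 h2
  obtain ⟨hm, h1⟩ := mem_filter.1 h1
  obtain ⟨-, h2⟩ := mem_filter.1 h2
  have hp : IsPair H {v, v'} := ⟨v, v', hvv, rfl⟩
  obtain ⟨x, hx, y, hy, hxy⟩ := hp.joined hst (hM m hm) (by
    simp [hv m hm, hv' m hm])
  simp only [mem_insert, mem_singleton] at hx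
  rcases hx with rfl | rfl
  · exact h1 y hy hxy
  · exact h2 y hy hxy

theorem missed_add_le {H G : SimpleGraph V} (hst : StrongIn H G) {M : Finset (Finset V)}
    (hM : ∀ m ∈ M, IsPair H m) {v v' : V} (hvv : H.Adj v v') (hv : ∀ m ∈ M, v ∉ m)
    (hv' : ∀ m ∈ M, v' ∉ m) : missed G v M + missed G v' M ≤ #M := by
  classical
  unfold missed
  rw [← card_union_of_disjoint (disjoint_missed hst hM hvv hv hv')]
  exact card_le_card (union_subset (filter_subset _ _) (filter_subset _ _))

theorem missed_add_add_le {H G : SimpleGraph V} (hst : StrongIn H G) {M : Finset (Finset V)}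
    (hM : ∀ m ∈ M, IsPair H m) {a b c : V} (hab : H.Adj a b) (hbc : H.Adj b c) (hac : H.Adj a c)
    (ha : ∀ m ∈ M, a ∉ m) (hb : ∀ m ∈ M, b ∉ m) (hc : ∀ m ∈ M, c ∉ m) :
    missed G a M + missed G b M + missed G c M ≤ #M := by
  classical
  unfold missed
  rw [← card_union_of_disjoint (disjoint_missed hst hM hab ha hb),
    ← card_union_of_disjoint (disjoint_union_left.2
      ⟨disjoint_missed hst hM hac ha hc, disjoint_missed hst hM hbc hb hc⟩)]
  exact card_le_card (union_subset (union_subset (filter_subset _ _) (filter_subset _ _))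
    (filter_subset _ _))

/-- Disjoint cycles contain a matching with `⌊n / 2⌋` edges on each cycle of length `n`. -/
theorem exists_matching {H : SimpleGraph V} {D : Finset (Finset V)}
    (hD : ∀ C ∈ D, ∃ c, IsCyc H C c) (hd : (D : Set (Finset V)).PairwiseDisjoint id) :
    ∃ M : Finset (Finset V), (∀ m ∈ M, IsPair H m) ∧ (M : Set (Finset V)).PairwiseDisjoint id ∧
      #M = ∑ C ∈ D, #C / 2 ∧ ∀ m ∈ M, ∃ C ∈ D, m ⊆ C := by
  induction D using Finset.induction_on with
  | empty => exact ⟨∅, by simp, by simp, by simp, by simp⟩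
  | insert C D hCD ih =>
    obtain ⟨M, hM, hMd, hMc, hMD⟩ := ih (fun C' h => hD C' (mem_insert_of_mem h))
      (hd.subset (by simp))
    obtain ⟨c, hc⟩ := hD C (mem_insert_self _ _)
    have hdis : ∀ x ∈ altPairs c (#C / 2), ∀ y ∈ M, Disjoint x y := by
      intro x hx y hy
      obtain ⟨C', hC', hy'⟩ := hMD y hy
      exact (hd (by simp) (by simp [hC']) (by rintro rfl; exact hCD hC') :
        Disjoint (id C) (id C')).mono (altPairs_subset hc _ x hx) hy'
    refine ⟨altPairs c (#C / 2) ∪ M, ?_, ?_, ?_, ?_⟩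
    · intro m hm
      rcases mem_union.1 hm with hm | hm
      exacts [isPair_altPairs hc _ m hm, hM m hm]
    · intro x hx y hy hxy
      simp only [coe_union, Set.mem_union, mem_coe] at hx hy
      rcases hx with hx | hx <;> rcases hy with hy | hy
      · exact pairwiseDisjoint_altPairs hc (by omega) hx hy hxy
      · exact hdis x hx y hy
      · exact (hdis y hy x hx).symm
      · exact hMd hx hy hxy
    · rw [card_union_of_disjoint, card_altPairs hc (by omega), hMc, sum_insert hCD]
      rw [Finset.disjoint_left]
      intro w hw hw'
      have := hdis w hw w hw'
      rw [disjoint_self_iff_empty] at this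
      exact (hM w hw').nonempty.ne_empty this
    · intro m hm
      rcases mem_union.1 hm with hm | hm
      · exact ⟨C, mem_insert_self _ _, altPairs_subset hc _ m hm⟩
      · obtain ⟨C', h, h'⟩ := hMD m hm
        exact ⟨C', mem_insert_of_mem h, h'⟩

end Cycles

/-! ### Excluding the extremal cycle families -/

section Cases

variable {V : Type} [DecidableEq V]

theorem isTri_of_isCyc {H : SimpleGraph V} {C : Finset V} (hC : #C = 3)
    (h : ∃ c, IsCyc H C c) : IsTri H C := by
  obtain ⟨c, h⟩ := h
  have h3 := h.2.1 0
  rw [hC] at h3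
  refine ⟨c 0, c 1, c 2, h.1 0, h.1 1, ?_, ?_⟩
  · have := h.1 2
    rw [show c (2 + 1) = c 0 from h3] at this
    exact this.symm
  · have := h.2.2.2
    rw [hC] at this
    rw [this, show range 3 = {0, 1, 2} by decide]
    simp

/-- A triangle `a b c` of the strong clique, in presence of further disjoint triangles `T` and
edges `M`, one edge of each making up a matching of size `k - 1`.  Any two of `a`, `b`, `c` miss at
least two edges of `M` by `two_le_missed`, while no edge of `M` is missed twice. -/
theorem triangle_base {H G : SimpleGraph V} (hHG : H ≤ G) (hst : StrongIn H G) {k : ℕ}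
    (hk : ¬ HasCliqueMinor G k)
    {T M : Finset (Finset V)} (hT : ∀ t ∈ T, IsTri H t) (hM : ∀ m ∈ M, IsPair H m)
    (hTd : (T : Set (Finset V)).PairwiseDisjoint id)
    (hMd : (M : Set (Finset V)).PairwiseDisjoint id)
    (hTM : ∀ t ∈ T, ∀ m ∈ M, Disjoint t m) {a b c : V}
    (hab : H.Adj a b) (hbc : H.Adj b c) (hac : H.Adj a c)
    (hCT : ∀ t ∈ T, Disjoint {a, b, c} t) (hCM : ∀ m ∈ M, Disjoint {a, b, c} m)
    (hc : #T + #M + 2 = k) :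
    3 ≤ #M ∧ (#M = 3 → missed G a M = 1) := by
  classical
  have main : ∀ x y z : V, H.Adj x y → H.Adj y z → H.Adj x z →
      ({x, y, z} : Finset V) = {a, b, c} → 2 ≤ missed G x M + missed G y M := by
    intro x y z hxy hyz hxz hs
    have h0 : ∀ u w w' : V, H.Adj u w → missed G u {{w, w'}} = 0 := by
      intro u w w' huw
      unfold missed
      rw [card_eq_zero, filter_eq_empty_iff]
      intro m hm
      rw [mem_singleton] at hm
      subst hm
      exact fun hmiss => hmiss w (by simp) (hHG huw)
    have := two_le_missed hHG hst hk hT hM hTd hMd hTM hCT hCM (P := {{y, z}}) (P' := {{x, z}})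
      (by intro m hm; rw [mem_singleton] at hm; exact ⟨y, z, hyz, hm⟩)
      (by intro m hm; rw [mem_singleton] at hm; exact ⟨x, z, hxz, hm⟩)
      (by simp) (by simp) (v := x) (v' := y) (by rw [← hs]; simp) (by rw [← hs]; simp) hxy
      (by
        intro m hm
        rw [mem_singleton] at hm
        subst hm
        rw [← hs]
        exact ⟨by intro w; simp; tauto, by simp [hxy.ne, hxz.ne]⟩)
      (by
        intro m hm
        rw [mem_singleton] at hm
        subst hm
        rw [← hs]
        exact ⟨by intro w; simp; tauto, by simp [hxy.ne', hyz.ne]⟩)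
      (by simp; omega) (by simp)
    rw [h0 x y z hxy, h0 y x z hxy.symm] at this
    omega
  have h1 := main a b c hab hbc hac rfl
  have h2 := main b c a hbc hac.symm hab.symm (by ext; simp; tauto)
  have h3 := main a c b hac hbc.symm hab (by ext; simp; tauto)
  have h4 := missed_add_add_le (G := G) hst hM hab hbc hac
    (fun m hm => Finset.disjoint_left.1 (hCM m hm) (by simp))
    (fun m hm => Finset.disjoint_left.1 (hCM m hm) (by simp))
    (fun m hm => Finset.disjoint_left.1 (hCM m hm) (by simp))
  constructor
  · omega
  · intro; omega

/-- A pentagon of the strong clique, in presence of disjoint triangles `T` and edges `M`, which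
together contain a matching of size `k - 1`.  Consecutive vertices of the pentagon miss at least
two edges of `M` by `two_le_missed`, while no edge of `M` is missed by both. -/
theorem pentagon_base {H G : SimpleGraph V} (hHG : H ≤ G) (hst : StrongIn H G) {k : ℕ}
    (hk : ¬ HasCliqueMinor G k)
    {T M : Finset (Finset V)} (hT : ∀ t ∈ T, IsTri H t) (hM : ∀ m ∈ M, IsPair H m)
    (hTd : (T : Set (Finset V)).PairwiseDisjoint id)
    (hMd : (M : Set (Finset V)).PairwiseDisjoint id)
    (hTM : ∀ t ∈ T, ∀ m ∈ M, Disjoint t m) {C : Finset V} {c : ℕ → V} (hC : IsCyc H C c)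
    (h5 : #C = 5) (hCT : ∀ t ∈ T, Disjoint C t) (hCM : ∀ m ∈ M, Disjoint C m)
    (hc : #T + #M + 3 = k) :
    2 ≤ #M ∧ (#M = 2 → missed G (c 0) M = 1) := by
  have main : ∀ d : ℕ → V, IsCyc H C d → 2 ≤ missed G (d 0) M + missed G (d 1) M := by
    -- both edges left over by a vertex of a pentagon contain a neighbour of that vertex
    have h0 : ∀ d : ℕ → V, IsCyc H C d → missed G (d 0) (altPairs (fun i => d (i + 1)) 2) = 0 := by
      intro d hd
      rw [missed_altPairs (hd.shift_add 1) (by omega)]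
      simp only [sum_range_succ, range_zero, sum_empty, missEdge_shift]
      rw [missEdge_eq_zero (Or.inl (hHG (hd.1 0))), missEdge_eq_zero (Or.inr ?_)]
      have h4 := hd.1 4
      have := hd.2.1 0
      rw [h5] at this
      rw [show d (4 + 1) = d 0 from this] at h4
      exact hHG h4.symm
    intro d hd
    have hav : ∀ d : ℕ → V, IsCyc H C d → ∀ m ∈ altPairs (fun i => d (i + 1)) 2,
        m ⊆ C ∧ d 0 ∉ m := by
      intro d hd m hm
      refine ⟨altPairs_subset (hd.shift_add 1) 2 m hm, ?_⟩
      have := notMem_altPairs (hd.shift_add 1) (l := 2) (j := 4) (by omega) (by omega) m hm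
      have h50 := hd.2.1 0
      rw [h5] at h50
      rwa [show d (4 + 1) = d 0 from h50] at this
    have hav1 : ∀ m ∈ altPairs (fun i => d (i + 1 + 1)) 2, m ⊆ C ∧ d 1 ∉ m :=
      hav (fun i => d (i + 1)) (hd.shift_add 1)
    have := two_le_missed hHG hst hk hT hM hTd hMd hTM hCT hCM
      (P := altPairs (fun i => d (i + 1)) 2) (P' := altPairs (fun i => d (i + 1 + 1)) 2)
      (isPair_altPairs (hd.shift_add 1) 2) (isPair_altPairs ((hd.shift_add 1).shift_add 1) 2)
      (pairwiseDisjoint_altPairs (hd.shift_add 1) (by omega))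
      (pairwiseDisjoint_altPairs ((hd.shift_add 1).shift_add 1) (by omega))
      (v := d 0) (v' := d 1) (hd.mem 0) (hd.mem 1) (hd.1 0) (hav d hd) hav1
      (by rw [card_altPairs (hd.shift_add 1) (by omega)]; omega)
      (by rw [card_altPairs (hd.shift_add 1) (by omega),
            card_altPairs ((hd.shift_add 1).shift_add 1) (by omega)])
    have e1 := h0 d hd
    have e2 := h0 _ (hd.shift_add 1)
    simp only [zero_add] at e2
    rw [e1, e2] at this
    omega
  have hle : ∀ i, missed G (c i) M + missed G (c (i + 1)) M ≤ #M := fun i =>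
    missed_add_le hst hM (hC.1 i) (fun m hm => Finset.disjoint_left.1 (hCM m hm) (hC.mem i))
      (fun m hm => Finset.disjoint_left.1 (hCM m hm) (hC.mem (i + 1)))
  have hge : ∀ i, 2 ≤ missed G (c i) M + missed G (c (i + 1)) M := by
    intro i
    have := main _ (hC.shift_add i)
    simpa [add_comm] using this
  refine ⟨(hge 0).trans (hle 0), fun h2 => ?_⟩
  -- neighbouring values sum to two around a cycle of odd length
  have hper := hC.2.1 0
  rw [h5] at hper
  have hper' : c 5 = c 0 := hper
  have a0 := hle 0; have a1 := hle 1; have a2 := hle 2; have a3 := hle 3; have a4 := hle 4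
  have b0 := hge 0; have b1 := hge 1; have b2 := hge 2; have b3 := hge 3; have b4 := hge 4
  simp only [zero_add, Nat.reduceAdd, hper'] at a0 a1 a2 a3 a4 b0 b1 b2 b3 b4
  omega

/-- A heptagon which is a strong clique on its own contains a clique minor of order four: either
some vertex has a neighbour on the opposite edge, or all short chords are present. -/
theorem heptagon_minor {H G : SimpleGraph V} (hHG : H ≤ G) (hst : StrongIn H G)
    {C : Finset V} {c : ℕ → V} (hC : IsCyc H C c) (h7 : #C = 7) : HasCliqueMinor G 4 := by
  by_contra hk
  have hper : ∀ i, c (i + 7) = c i := by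
    have := hC.2.1
    rwa [h7] at this
  have hinj : ∀ {i j}, i < 7 → j < 7 → i ≠ j → c i ≠ c j := fun hi hj hij e =>
    hij (hC.inj (by omega) (by omega) e)
  have main : ∀ d : ℕ → V, IsCyc H C d → ¬ G.Adj (d 0) (d 3) ∧ ¬ G.Adj (d 0) (d 4) := by
    have hle : ∀ d : ℕ → V, IsCyc H C d →
        missed G (d 0) (altPairs (fun i => d (i + 1)) 3) ≤ missEdge G (d 0) d 3 := by
      intro d hd
      rw [missed_altPairs (hd.shift_add 1) (by omega)]
      simp only [sum_range_succ, range_zero, sum_empty, missEdge_shift]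
      rw [missEdge_eq_zero (Or.inl (hHG (hd.1 0))),
        missEdge_eq_zero (v := d 0) (j := 2 * 2 + 1) (Or.inr ?_)]
      · simp
      have h6 := hd.1 6
      have := hd.2.1 0
      rw [h7] at this
      rw [show d (6 + 1) = d 0 from this] at h6
      exact hHG h6.symm
    have hav : ∀ d : ℕ → V, IsCyc H C d → ∀ m ∈ altPairs (fun i => d (i + 1)) 3,
        m ⊆ C ∧ d 0 ∉ m := by
      intro d hd m hm
      refine ⟨altPairs_subset (hd.shift_add 1) 3 m hm, ?_⟩
      have := notMem_altPairs (hd.shift_add 1) (l := 3) (j := 6) (by omega) (by omega) m hm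
      have h70 := hd.2.1 0
      rw [h7] at h70
      rwa [show d (6 + 1) = d 0 from h70] at this
    intro d hd
    have hav1 : ∀ m ∈ altPairs (fun i => d (i + 1 + 1)) 3, m ⊆ C ∧ d 1 ∉ m :=
      hav (fun i => d (i + 1)) (hd.shift_add 1)
    have := two_le_missed hHG hst hk (T := ∅) (M := ∅) (by simp) (by simp) (by simp) (by simp)
      (by simp) (C := C) (by simp) (by simp)
      (P := altPairs (fun i => d (i + 1)) 3) (P' := altPairs (fun i => d (i + 1 + 1)) 3)
      (isPair_altPairs (hd.shift_add 1) 3) (isPair_altPairs ((hd.shift_add 1).shift_add 1) 3)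
      (pairwiseDisjoint_altPairs (hd.shift_add 1) (by omega))
      (pairwiseDisjoint_altPairs ((hd.shift_add 1).shift_add 1) (by omega))
      (v := d 0) (v' := d 1) (hd.mem 0) (hd.mem 1) (hd.1 0) (hav d hd) hav1
      (by rw [card_altPairs (hd.shift_add 1) (by omega)]; simp)
      (by rw [card_altPairs (hd.shift_add 1) (by omega),
            card_altPairs ((hd.shift_add 1).shift_add 1) (by omega)])
    have e1 := hle d hd
    have e2 := hle _ (hd.shift_add 1)
    have e3 := missEdge_le_one G (d (0 + 1)) (fun i => d (i + 1)) 3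
    simp only [zero_add] at e2 e3
    simp only [missed, filter_empty, card_empty] at this e1 e2
    have e4 : missEdge G (d 0) d 3 ≠ 0 := by omega
    unfold missEdge at e4
    by_contra hcon
    rw [if_pos (by tauto)] at e4
    exact e4 rfl
  have m0 := main c hC
  have m1 := main _ (hC.shift_add 1)
  have m6 := main _ (hC.shift_add 6)
  simp only [Nat.reduceAdd, zero_add] at m0 m1 m6
  have h9 : c 9 = c 2 := hper 2
  have h10 : c 10 = c 3 := hper 3
  have h70 : c 7 = c 0 := hper 0
  rw [h9, h10] at m6
  have h60 : H.Adj (c 6) (c 0) := by have := hC.1 6; rwa [show c (6 + 1) = c 0 from h70] at this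
  have h02 : G.Adj (c 0) (c 2) := by
    have := hst _ _ _ _ h60 (hC.1 2) (hinj (by omega) (by omega) (by omega))
      (hinj (by omega) (by omega) (by omega)) (hinj (by omega) (by omega) (by omega))
      (hinj (by omega) (by omega) (by omega))
    simp only [Nat.reduceAdd] at this
    tauto
  have h13 : G.Adj (c 1) (c 3) := by
    have := hst _ _ _ _ (hC.1 0) (hC.1 3) (hinj (by omega) (by omega) (by omega))
      (hinj (by omega) (by omega) (by omega)) (hinj (by omega) (by omega) (by omega))
      (hinj (by omega) (by omega) (by omega))
    simp only [Nat.reduceAdd, zero_add] at this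
    tauto
  apply hk
  -- branch sets `{c 0}`, `{c 1}`, `{c 2}` and the path `c 3 c 4 c 5 c 6`
  have hpath : (G.induce ({c 3, c 4, c 5} ∪ {c 5, c 6} : Set V)).Connected := by
    apply SimpleGraph.induce_union_connected
    · refine (connected_star (v := c 4) (by simp) ?_).preconnected
      rintro x (rfl | rfl | rfl) hx
      · exact hHG (hC.1 3).symm
      · exact absurd rfl hx
      · exact hHG (hC.1 4)
    · refine (connected_star (v := c 5) (by simp) ?_).preconnected
      rintro x (rfl | rfl) hx
      · exact absurd rfl hx
      · exact hHG (hC.1 5)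
    · exact ⟨c 5, by simp, by simp⟩
  set Y : Set V := {c 3, c 4, c 5} ∪ {c 5, c 6} with hY
  have hYmem : ∀ x ∈ Y, ∃ j, 3 ≤ j ∧ j < 7 ∧ x = c j := by
    rintro x ((rfl | rfl | rfl) | (rfl | rfl))
    exacts [⟨3, by omega, by omega, rfl⟩, ⟨4, by omega, by omega, rfl⟩,
      ⟨5, by omega, by omega, rfl⟩, ⟨5, by omega, by omega, rfl⟩, ⟨6, by omega, by omega, rfl⟩]
  have hadj3 : ∀ i j : Fin 3, i ≠ j → G.Adj (c i) (c j) := by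
    have h01 : G.Adj (c 0) (c 1) := hHG (hC.1 0)
    have h12 : G.Adj (c 1) (c 2) := hHG (hC.1 1)
    intro i j hij
    fin_cases i <;> fin_cases j <;> first
      | exact absurd rfl hij
      | assumption
      | (apply SimpleGraph.Adj.symm; assumption)
  have hadjY : ∀ i : Fin 3, ∃ y ∈ Y, G.Adj (c i) y := by
    intro i
    fin_cases i
    · exact ⟨c 6, by simp [hY], hHG h60.symm⟩
    · exact ⟨c 3, by simp [hY], h13⟩
    · exact ⟨c 3, by simp [hY], hHG (hC.1 2)⟩
  have hnot : ∀ i : Fin 3, c i ∉ Y := by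
    intro i hi
    obtain ⟨j, hj, hj7, e⟩ := hYmem _ hi
    have := i.2
    exact hinj (by omega) hj7 (by omega) e
  refine hasCliqueMinor_of_fintype (J := Option (Fin 3)) (by simp)
    (fun j => j.elim Y (fun i => {c i})) ?_ ?_ ?_
  · rintro (_ | i)
    · exact hpath
    · exact connected_star (v := c i) rfl (fun x hx hne => absurd hx hne)
  · rintro (_ | i) (_ | j) hij
    · exact absurd rfl hij
    · exact Set.disjoint_singleton_right.2 (hnot j)
    · exact Set.disjoint_singleton_left.2 (hnot i)
    · exact Set.disjoint_singleton.2 (hadj3 i j (fun h => hij (by rw [h]))).ne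
  · rintro (_ | i) (_ | j) hij
    · exact absurd rfl hij
    · obtain ⟨y, hy, h⟩ := hadjY j
      exact ⟨y, hy, c j, rfl, h.symm⟩
    · obtain ⟨y, hy, h⟩ := hadjY i
      exact ⟨c i, rfl, y, hy, h⟩
    · exact ⟨c i, rfl, c j, rfl, hadj3 i j (fun h => hij (by rw [h]))⟩

end Cases

/-! ### Families of disjoint cycles covering many vertices -/

section Family

variable {V : Type}

/-- The amount by which the vertex count of a cycle falls short of three times the size of its
maximum matchings. -/
def deficit (C : Finset V) : ℕ := 3 * (#C / 2) - #C

theorem pairwiseDisjoint_mono {A B : Finset (Finset V)} (h : A ⊆ B)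
    (hd : (B : Set (Finset V)).PairwiseDisjoint id) : (A : Set (Finset V)).PairwiseDisjoint id :=
  Set.PairwiseDisjoint.subset hd (by exact_mod_cast h)

theorem disjoint_of_subset_family {A : Finset (Finset V)}
    (hd : (A : Set (Finset V)).PairwiseDisjoint id) {C D m : Finset V} (hC : C ∈ A) (hD : D ∈ A)
    (hne : C ≠ D) (hm : m ⊆ D) : Disjoint C m :=
  Finset.disjoint_of_subset_right hm (hd (by exact_mod_cast hC) (by exact_mod_cast hD) hne)

variable [DecidableEq V]

/-- An extremal family cannot contain a pentagon.  Since the other non-triangles `D` have total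
deficit at most one, there is at most one of them, and it is an edge or a second pentagon.  In the
latter case the vertex `c 0` of the first pentagon misses exactly one edge of each two-edge
matching of the second one; summing over the five such matchings contradicts parity. -/
theorem no_pentagon {H G : SimpleGraph V} (hHG : H ≤ G) (hst : StrongIn H G) {k : ℕ}
    (hk : ¬ HasCliqueMinor G k) {T D : Finset (Finset V)} {C : Finset V}
    (hT : ∀ t ∈ T, #t = 3) (hD : ∀ t ∈ D, #t ≠ 3) (hC5 : #C = 5) (hCD : C ∉ D)
    (hcT : ∀ t ∈ T, ∃ c, IsCyc H t c) (hcD : ∀ t ∈ D, ∃ c, IsCyc H t c)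
    (hcC : ∃ c, IsCyc H C c)
    (hd : ((insert C (T ∪ D) : Finset (Finset V)) : Set (Finset V)).PairwiseDisjoint id)
    (hdef : ∑ t ∈ D, deficit t ≤ 1) (hn : #T + (∑ t ∈ D, #t / 2) + 3 = k) : False := by
  obtain ⟨c, hc⟩ := hcC
  have hCT : ∀ t ∈ T, Disjoint C t := fun t ht =>
    disjoint_of_subset_family hd (by simp) (by simp [ht])
      (by rintro rfl; have := hT _ ht; omega) subset_rfl
  have base : ∀ M : Finset (Finset V), (∀ m ∈ M, IsPair H m) →
      (M : Set (Finset V)).PairwiseDisjoint id → (∀ m ∈ M, ∃ t ∈ D, m ⊆ t) →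
      #M = ∑ t ∈ D, #t / 2 → 2 ≤ #M ∧ (#M = 2 → missed G (c 0) M = 1) := by
    intro M hM hMd hMD hMc
    refine pentagon_base hHG hst hk (fun t ht => isTri_of_isCyc (hT t ht) (hcT t ht)) hM
      (pairwiseDisjoint_mono (fun t ht => by simp [ht]) hd) hMd ?_ hc hC5 hCT ?_ (by omega)
    · intro t ht m hm
      obtain ⟨s, hs, hms⟩ := hMD m hm
      exact disjoint_of_subset_family hd (by simp [ht]) (by simp [hs])
        (by rintro rfl; exact hD _ hs (hT _ ht)) hms
    · intro m hm
      obtain ⟨s, hs, hms⟩ := hMD m hm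
      exact disjoint_of_subset_family hd (by simp) (by simp [hs])
        (by rintro rfl; exact hCD hs) hms
  have hpos : ∀ t ∈ D, 1 ≤ deficit t := by
    intro t ht
    obtain ⟨d, hd⟩ := hcD t ht
    have := hd.two_le
    have := hD t ht
    unfold deficit
    omega
  have hcard : #D ≤ 1 := by
    have := Finset.card_nsmul_le_sum D deficit 1 hpos
    simp only [smul_eq_mul, mul_one] at this
    exact this.trans hdef
  have hDd : (D : Set (Finset V)).PairwiseDisjoint id :=
    pairwiseDisjoint_mono (fun t ht => by simp [ht]) hd
  obtain ⟨M, hM, hMd, hMc, hMD⟩ := exists_matching hcD hDd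
  have hM2 := (base M hM hMd hMD hMc).1
  rw [hMc] at hM2
  rcases Finset.card_le_one_iff_subset_singleton.1 hcard with ⟨X, hX⟩
  rcases Finset.subset_singleton_iff.1 hX with rfl | rfl
  · simp at hM2
  · simp only [sum_singleton] at hM2 hdef hn base
    obtain ⟨d, hcd⟩ := hcD X (by simp)
    have h5 : #X = 5 := by
      have := hD X (by simp)
      unfold deficit at hdef
      omega
    have hsum : ∀ b, missEdge G (c 0) d b + missEdge G (c 0) d (b + 2) = 1 := by
      intro b
      have hb := hcd.shift_add b
      have hcardM := card_altPairs hb (l := 2) (by omega)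
      have := (base (altPairs (fun i => d (i + b)) 2) (isPair_altPairs hb 2)
        (pairwiseDisjoint_altPairs hb (by omega))
        (fun m hm => ⟨X, by simp, altPairs_subset hb 2 m hm⟩) (by omega)).2 hcardM
      rw [missed_altPairs hb (by omega)] at this
      simp only [sum_range_succ, range_zero, sum_empty, missEdge_shift] at this
      rw [show b + 2 = 2 * 1 + b by omega]
      simpa using this
    have hper : ∀ j, missEdge G (c 0) d (j + 5) = missEdge G (c 0) d j := by
      intro j
      have := missEdge_period (G := G) hcd (c 0) j
      rwa [h5] at this
    have := hsum 0; have := hsum 1; have := hsum 2; have := hsum 3; have := hsum 4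
    have := hper 0; have := hper 1
    simp only [zero_add, Nat.reduceAdd] at *
    omega

/-- An extremal family cannot consist of triangles and one heptagon.  If there is a triangle, a
vertex `x` of it misses exactly one edge of each three-edge matching of the heptagon; summing over
the seven such matchings shows that three times the number of missed edges is seven. -/
theorem no_heptagon {H G : SimpleGraph V} (hHG : H ≤ G) (hst : StrongIn H G) {k : ℕ}
    (hk : ¬ HasCliqueMinor G k) {T : Finset (Finset V)} {C : Finset V}
    (hT : ∀ t ∈ T, #t = 3) (hC7 : #C = 7)
    (hcT : ∀ t ∈ T, ∃ c, IsCyc H t c) (hcC : ∃ c, IsCyc H C c)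
    (hd : ((insert C T : Finset (Finset V)) : Set (Finset V)).PairwiseDisjoint id)
    (hn : #T + 4 = k) : False := by
  obtain ⟨d, hcd⟩ := hcC
  rcases T.eq_empty_or_nonempty with rfl | ⟨t₀, ht₀⟩
  · simp only [card_empty, zero_add] at hn
    exact hk (hn ▸ heptagon_minor hHG hst hcd hC7)
  obtain ⟨x, y, z, hxy, hyz, hxz, rfl⟩ := isTri_of_isCyc (hT _ ht₀) (hcT _ ht₀)
  have hsum : ∀ b, missEdge G x d b + missEdge G x d (b + 2) + missEdge G x d (b + 4) = 1 := by
    intro b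
    have hb := hcd.shift_add b
    have hcardM := card_altPairs hb (l := 3) (by omega)
    have hTC : ∀ t ∈ T, ∀ m ∈ altPairs (fun i => d (i + b)) 3, Disjoint t m := fun t ht m hm =>
      disjoint_of_subset_family hd (by simp [ht]) (by simp)
        (by rintro rfl; have := hT _ ht; omega) (altPairs_subset hb 3 m hm)
    have := (triangle_base hHG hst hk (T := T.erase {x, y, z})
      (M := altPairs (fun i => d (i + b)) 3)
      (fun t ht => isTri_of_isCyc (hT t (mem_of_mem_erase ht)) (hcT t (mem_of_mem_erase ht)))
      (isPair_altPairs hb 3)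
      (pairwiseDisjoint_mono (fun t ht => mem_insert_of_mem (mem_of_mem_erase ht)) hd)
      (pairwiseDisjoint_altPairs hb (by omega))
      (fun t ht => hTC t (mem_of_mem_erase ht)) hxy hyz hxz
      (fun t ht => disjoint_of_subset_family hd (mem_insert_of_mem ht₀)
        (mem_insert_of_mem (mem_of_mem_erase ht)) (ne_of_mem_erase ht).symm subset_rfl)
      (hTC _ ht₀)
      (by rw [hcardM, card_erase_of_mem ht₀]; have := card_pos.2 ⟨_, ht₀⟩; omega)).2 hcardM
    rw [missed_altPairs hb (by omega)] at this
    simp only [sum_range_succ, range_zero, sum_empty, missEdge_shift] at this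
    rw [show b + 2 = 2 * 1 + b by omega, show b + 4 = 2 * 2 + b by omega]
    simpa using this
  have hper : ∀ j, missEdge G x d (j + 7) = missEdge G x d j := by
    intro j
    have := missEdge_period (G := G) hcd x j
    rwa [hC7] at this
  have := hsum 0; have := hsum 1; have := hsum 2; have := hsum 3; have := hsum 4
  have := hsum 5; have := hsum 6
  have := hper 0; have := hper 1; have := hper 2; have := hper 3
  simp only [zero_add, Nat.reduceAdd] at *
  omega

/-- Disjoint cycles of a strong clique cover at most `3 (k - 2)` vertices when there is no clique
minor of order `k`.  Otherwise the cycles contain a matching of exactly `k - 1` edges, and their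
total deficit is at most two; this leaves only the few families treated here. -/
theorem sum_card_le {H G : SimpleGraph V} (hHG : H ≤ G) (hst : StrongIn H G) {k : ℕ}
    (hk4 : 4 ≤ k) (hk : ¬ HasCliqueMinor G k) {A : Finset (Finset V)}
    (hA : ∀ C ∈ A, ∃ c, IsCyc H C c) (hd : (A : Set (Finset V)).PairwiseDisjoint id) :
    ∑ C ∈ A, #C ≤ 3 * (k - 2) := by
  by_contra! hN
  have hn : ∑ C ∈ A, #C / 2 < k := by
    by_contra! hge
    obtain ⟨M, hM, hMd, hMc, -⟩ := exists_matching hA hd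
    exact hk (hasCliqueMinor_of_matching hHG hst hM hMd (by omega))
  have hdefsum : ∑ C ∈ A, #C + ∑ C ∈ A, deficit C = 3 * ∑ C ∈ A, #C / 2 := by
    rw [← sum_add_distrib, mul_sum]
    refine sum_congr rfl fun C hC => ?_
    obtain ⟨c, hc⟩ := hA C hC
    have := hc.two_le
    unfold deficit
    omega
  set T := A.filter (fun C => #C = 3) with hTdef
  set R := A.filter (fun C => ¬ #C = 3) with hRdef
  have hTR : T ∪ R = A := filter_union_filter_not_eq _ _
  have hTA : T ⊆ A := filter_subset _ _
  have hRA : R ⊆ A := filter_subset _ _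
  have hT : ∀ t ∈ T, #t = 3 := fun t ht => (mem_filter.1 ht).2
  have hR : ∀ t ∈ R, #t ≠ 3 := fun t ht => (mem_filter.1 ht).2
  have hsplit1 : #T + ∑ C ∈ R, #C / 2 = ∑ C ∈ A, #C / 2 := by
    rw [← sum_filter_add_sum_filter_not A (fun C => #C = 3) (fun C => #C / 2), card_eq_sum_ones]
    congr 1
    exact sum_congr rfl fun t ht => by rw [hT t ht]
  have hsplit2 : ∑ C ∈ R, deficit C = ∑ C ∈ A, deficit C := by
    rw [← sum_filter_add_sum_filter_not A (fun C => #C = 3) deficit]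
    rw [sum_eq_zero (s := A.filter (fun C => #C = 3))
      (fun t ht => by simp [deficit, hT t ht]), zero_add]
  have hdef2 : ∑ C ∈ R, deficit C ≤ 2 := by omega
  have hnk : #T + (∑ C ∈ R, #C / 2) + 1 = k := by omega
  by_cases h5 : ∃ C ∈ R, #C = 5
  · obtain ⟨C, hC, hC5⟩ := h5
    rw [← add_sum_erase _ _ hC] at hdef2 hnk
    have hdC : deficit C = 1 := by unfold deficit; rw [hC5]
    rw [hdC] at hdef2
    rw [hC5] at hnk
    refine no_pentagon hHG hst hk (D := R.erase C) hT (fun t ht => hR t (mem_of_mem_erase ht)) hC5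
      (by simp) (fun t ht => hA t (hTA ht)) (fun t ht => hA t (hRA (mem_of_mem_erase ht)))
      (hA C (hRA hC)) (pairwiseDisjoint_mono ?_ hd) (by omega) (by omega)
    exact insert_subset (hRA hC) (union_subset hTA ((erase_subset _ _).trans hRA))
  by_cases h7 : ∃ C ∈ R, #C = 7
  · obtain ⟨C, hC, hC7⟩ := h7
    rw [← add_sum_erase _ _ hC] at hdef2 hnk
    have hdC : deficit C = 2 := by unfold deficit; rw [hC7]
    rw [hdC] at hdef2
    rw [hC7] at hnk
    have hemp : R.erase C = ∅ := by
      rw [eq_empty_iff_forall_notMem]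
      intro D hD
      have h1 := single_le_sum (f := deficit) (fun i _ => Nat.zero_le _) hD
      obtain ⟨c, hc⟩ := hA D (hRA (mem_of_mem_erase hD))
      have := hc.two_le
      have := hR D (mem_of_mem_erase hD)
      unfold deficit at h1 hdef2
      omega
    rw [hemp, sum_empty] at hnk
    exact no_heptagon hHG hst hk hT hC7 (fun t ht => hA t (hTA ht)) (hA C (hRA hC))
      (pairwiseDisjoint_mono (insert_subset (hRA hC) hTA) hd) (by omega)
  -- every odd length other than 3, 5, 7 has deficit at least three, so these cycles are even
  have heven : ∑ C ∈ R, #C / 2 = ∑ C ∈ R, deficit C := by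
    refine sum_congr rfl fun C hC => ?_
    have h1 := single_le_sum (f := deficit) (fun i _ => Nat.zero_le _) hC
    have h2 : deficit C ≤ 2 := h1.trans hdef2
    obtain ⟨c, hc⟩ := hA C (hRA hC)
    have := hc.two_le
    have := hR C hC
    have : #C ≠ 5 := fun h => h5 ⟨C, hC, h⟩
    have : #C ≠ 7 := fun h => h7 ⟨C, hC, h⟩
    unfold deficit at h2 ⊢
    omega
  obtain ⟨t₀, ht₀⟩ : T.Nonempty := card_pos.1 (by omega)
  obtain ⟨M, hM, hMd, hMc, hMR⟩ := exists_matching (fun C hC => hA C (hRA hC))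
    (pairwiseDisjoint_mono hRA hd)
  obtain ⟨x, y, z, hxy, hyz, hxz, rfl⟩ := isTri_of_isCyc (hT _ ht₀) (hA _ (hTA ht₀))
  have hTM : ∀ t ∈ T, ∀ m ∈ M, Disjoint t m := by
    intro t ht m hm
    obtain ⟨s, hs, hms⟩ := hMR m hm
    exact disjoint_of_subset_family hd (hTA ht) (hRA hs)
      (by rintro rfl; exact hR _ hs (hT _ ht)) hms
  have := (triangle_base hHG hst hk (T := T.erase {x, y, z}) (M := M)
    (fun t ht => isTri_of_isCyc (hT t (mem_of_mem_erase ht)) (hA t (hTA (mem_of_mem_erase ht))))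
    hM (pairwiseDisjoint_mono ((erase_subset _ _).trans hTA) hd) hMd
    (fun t ht => hTM t (mem_of_mem_erase ht)) hxy hyz hxz
    (fun t ht => disjoint_of_subset_family hd (hTA ht₀)
      (hTA (mem_of_mem_erase ht)) (ne_of_mem_erase ht).symm subset_rfl)
    (hTM _ ht₀)
    (by rw [card_erase_of_mem ht₀]; have := card_pos.2 ⟨_, ht₀⟩; omega)).1
  omega

end Family

/-! ### From weighted degrees to cycles -/

section Birkhoff

theorem isCyc_of_isCycleOn {V : Type} [DecidableEq V] {H : SimpleGraph V} {σ : Equiv.Perm V}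
    {C : Finset V} (hσ : σ.IsCycleOn C) {x : V} (hx : x ∈ C) (hadj : ∀ y ∈ C, H.Adj y (σ y)) :
    IsCyc H C (fun i => (σ ^ i) x) := by
  have hmem : ∀ i : ℕ, (σ ^ i) x ∈ C := fun i => hσ.1.mapsTo.perm_pow i hx
  refine ⟨fun i => ?_, fun i => ?_, card_pos.2 ⟨x, hx⟩, ?_⟩
  · have := hadj _ (hmem i)
    rwa [← Equiv.Perm.mul_apply, ← pow_succ'] at this
  · show (σ ^ (i + #C)) x = (σ ^ i) x
    rw [pow_add, Equiv.Perm.mul_apply, hσ.pow_card_apply hx]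
  · ext y
    rw [mem_image]
    constructor
    · intro hy
      obtain ⟨n, hn, rfl⟩ := hσ.exists_pow_eq hx hy
      exact ⟨n, mem_range.2 hn, rfl⟩
    · rintro ⟨n, -, rfl⟩
      exact hmem n

/-- A permutation that moves vertices only along edges of `H` gives disjoint cycles of `H` covering
the vertices it moves. -/
theorem exists_cycles {V : Type} [DecidableEq V] [Fintype V] {H : SimpleGraph V}
    {σ : Equiv.Perm V} (hσ : ∀ v, σ v ≠ v → H.Adj v (σ v)) :
    ∃ A : Finset (Finset V), (∀ C ∈ A, ∃ c, IsCyc H C c) ∧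
      (A : Set (Finset V)).PairwiseDisjoint id ∧ ∑ C ∈ A, #C = #σ.support := by
  have hdis : ∀ p ∈ σ.cycleFactorsFinset, ∀ q ∈ σ.cycleFactorsFinset, p ≠ q →
      Disjoint p.support q.support := fun p hp q hq hpq =>
    (σ.cycleFactorsFinset_pairwise_disjoint (by exact_mod_cast hp) (by exact_mod_cast hq)
      hpq).disjoint_support
  have hne : ∀ p ∈ σ.cycleFactorsFinset, p.support.Nonempty := fun p hp =>
    (Equiv.Perm.mem_cycleFactorsFinset_iff.1 hp).1.nonempty_support
  refine ⟨σ.cycleFactorsFinset.image Equiv.Perm.support, ?_, ?_, ?_⟩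
  · intro C hC
    obtain ⟨p, hp, rfl⟩ := mem_image.1 hC
    obtain ⟨x, hx⟩ := hne p hp
    refine ⟨_, isCyc_of_isCycleOn (Equiv.Perm.isCycleOn_support_of_mem_cycleFactorsFinset hp) hx
      fun y hy => hσ y ?_⟩
    exact Equiv.Perm.mem_support.1 (Equiv.Perm.mem_cycleFactorsFinset_support_le hp hy)
  · intro C hC D hD hCD
    obtain ⟨p, hp, rfl⟩ := mem_image.1 (mem_coe.1 hC)
    obtain ⟨q, hq, rfl⟩ := mem_image.1 (mem_coe.1 hD)
    exact hdis p hp q hq (fun h => hCD (by rw [h]))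
  · rw [sum_image, ← Equiv.Perm.sum_cycleType, Equiv.Perm.cycleType_def]
    · rfl
    · intro p hp q hq hpq
      by_contra h
      have := hdis p hp q hq h
      rw [show p.support = q.support from hpq, disjoint_self_iff_empty] at this
      exact (hne q hq).ne_empty this

/-- In a multigraph of maximum degree at most `Δ`, some permutation moves vertices along edges of
the given edge set `S` only, and moves at least `2 |S| / Δ` vertices.  The matrix of edge
multiplicities, with the missing degrees filled in on the diagonal, is `Δ` times a doubly
stochastic matrix, and the permutation is found among those in its Birkhoff decomposition by
averaging the number of moved vertices. -/
theorem exists_perm {V E : Type} [DecidableEq V] [Fintype V] (ends : E → Sym2 V)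
    (hloop : ∀ e, ¬ (ends e).IsDiag) (S : Finset E) {Δ : ℕ} (hpos : 0 < Δ)
    (hdeg : ∀ v, #(S.filter (fun e => v ∈ ends e)) ≤ Δ) :
    ∃ σ : Equiv.Perm V, (∀ v, σ v ≠ v → ∃ e ∈ S, ends e = s(v, σ v)) ∧
      2 * #S ≤ #σ.support * Δ := by
  classical
  set N : V → V → ℝ := fun u v => (#(S.filter (fun e => ends e = s(u, v))) : ℝ) with hN
  set deg : V → ℝ := fun v => (#(S.filter (fun e => v ∈ ends e)) : ℝ) with hdegdef
  have hΔ : (0 : ℝ) < Δ := by exact_mod_cast hpos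
  have hsymm : ∀ u v, N u v = N v u := fun u v => by simp only [hN, Sym2.eq_swap]
  have hN0 : ∀ u, N u u = 0 := by
    intro u
    simp only [hN, Nat.cast_eq_zero, card_eq_zero, filter_eq_empty_iff]
    intro e _ he
    exact hloop e (by rw [he]; simp)
  have hrow : ∀ u, ∑ v, N u v = deg u := by
    intro u
    simp only [hN, hdegdef]
    rw [← Nat.cast_sum]
    congr 1
    rw [← card_biUnion]
    · congr 1
      ext e
      simp only [mem_biUnion, mem_univ, true_and, mem_filter, Sym2.mem_iff_exists]
      tauto
    · intro v _ w _ hvw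
      rw [Function.onFun, disjoint_filter]
      intro e _ h1 h2
      exact hvw (Sym2.congr_right.1 (h1.symm.trans h2))
  have hdegsum : ∑ u, deg u = 2 * #S := by
    have h2 : ∀ e, #(univ.filter (fun u => u ∈ ends e)) = 2 := by
      intro e
      have := hloop e
      induction h : ends e with
      | _ x y =>
        rw [h] at this
        rw [show univ.filter (fun u => u ∈ s(x, y)) = {x, y} by ext; simp]
        exact card_pair (by simpa using this)
    simp only [hdegdef]
    have hcount : ∑ u, #(S.filter (fun e => u ∈ ends e)) =
        ∑ e ∈ S, #(univ.filter (fun u => u ∈ ends e)) :=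
      sum_card_bipartiteAbove_eq_sum_card_bipartiteBelow (fun u e => u ∈ ends e)
    rw [← Nat.cast_sum, hcount, sum_congr rfl (fun e _ => h2 e)]
    simp [mul_comm]
  set M : Matrix V V ℝ := fun u v => (N u v + if u = v then Δ - deg u else 0) / Δ with hM
  have hMrow : ∀ u, ∑ v, M u v = 1 := by
    intro u
    simp only [hM]
    rw [← sum_div, sum_add_distrib, hrow, sum_ite_eq, if_pos (mem_univ _), div_eq_one_iff_eq hΔ.ne']
    ring
  have hMsymm : ∀ u v, M u v = M v u := by
    intro u v
    simp only [hM]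
    rw [hsymm]
    by_cases h : u = v
    · subst h; rfl
    · rw [if_neg h, if_neg (Ne.symm h)]
  have hMds : M ∈ doublyStochastic ℝ V := by
    rw [mem_doublyStochastic_iff_sum]
    refine ⟨fun u v => ?_, hMrow, fun v => ?_⟩
    · refine div_nonneg (add_nonneg (Nat.cast_nonneg _) ?_) hΔ.le
      split_ifs
      · exact sub_nonneg.2 (Nat.cast_le.2 (hdeg u))
      · exact le_rfl
    · rw [← hMrow v]
      exact sum_congr rfl fun u _ => hMsymm u v
  obtain ⟨w, hw0, hw1, hwM⟩ := exists_eq_sum_perm_of_mem_doublyStochastic hMds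
  have hentry : ∀ u v, ∑ σ, w σ * (if σ u = v then 1 else 0) = M u v := by
    intro u v
    rw [← hwM, Matrix.sum_apply]
    refine sum_congr rfl fun σ _ => ?_
    rw [Matrix.smul_apply, Equiv.Perm.permMatrix, PEquiv.toMatrix_apply, smul_eq_mul]
    simp [eq_comm]
  have hsupp : ∀ σ : Equiv.Perm V, (#σ.support : ℝ) = ∑ u, (1 - if σ u = u then (1 : ℝ) else 0) := by
    intro σ
    rw [Equiv.Perm.support, card_eq_sum_ones, sum_filter]
    push_cast
    refine sum_congr rfl fun u _ => ?_
    by_cases h : σ u = u <;> simp [h]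
  have havg : ∑ σ, w σ * (#σ.support : ℝ) = 2 * #S / Δ := by
    have hdiag : ∀ u, 1 - M u u = deg u / Δ := by
      intro u
      simp only [hM, hN0, if_true]
      field_simp
      ring
    simp only [hsupp, mul_sum]
    rw [sum_comm, ← hdegsum, sum_div]
    refine sum_congr rfl fun u _ => ?_
    simp only [mul_sub, mul_one]
    rw [sum_sub_distrib, hentry, hw1, hdiag]
  obtain ⟨σ, hσ, hσ2⟩ : ∃ σ, 0 < w σ ∧ (2 * #S / Δ : ℝ) ≤ #σ.support := by
    by_contra! hcon
    obtain ⟨τ, -, hτ⟩ : ∃ τ ∈ (univ : Finset (Equiv.Perm V)), 0 < w τ := by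
      apply exists_lt_of_sum_lt
      simp [hw1]
    have : ∑ σ, w σ * (#σ.support : ℝ) < ∑ σ, w σ * (2 * #S / Δ : ℝ) := by
      refine sum_lt_sum (fun σ _ => ?_) ⟨τ, mem_univ _, mul_lt_mul_of_pos_left (hcon τ hτ) hτ⟩
      rcases (hw0 σ).eq_or_lt with h | h
      · simp [← h]
      · exact mul_le_mul_of_nonneg_left (hcon σ h).le h.le
    rw [← sum_mul, hw1, havg, one_mul] at this
    exact lt_irrefl _ this
  refine ⟨σ, fun v hv => ?_, ?_⟩
  · have h1 : w σ ≤ M v (σ v) := by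
      rw [← hentry]
      have := single_le_sum (f := fun τ => w τ * (if τ v = σ v then (1 : ℝ) else 0))
        (fun τ _ => mul_nonneg (hw0 τ) (by split_ifs <;> norm_num)) (mem_univ σ)
      simpa using this
    have h2 : N v (σ v) ≠ 0 := by
      intro h
      simp only [hM, h, if_neg (Ne.symm hv)] at h1
      simp at h1
      linarith
    simp only [hN, Nat.cast_ne_zero, card_ne_zero] at h2
    obtain ⟨e, he⟩ := h2
    exact ⟨e, (mem_filter.1 he).1, (mem_filter.1 he).2⟩
  · rw [div_le_iff₀ hΔ] at hσ2
    exact_mod_cast hσ2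

end Birkhoff

/-- Let `k ≥ 4`.  Any `K_k`-minor-free multigraph of maximum degree `Δ` has strong clique
number at most `(3/2)(k-2)Δ`. -/
theorem stmt_9 (k : ℕ) (hk : 4 ≤ k) {V E : Type} [Fintype V] [Fintype E]
    (ends : E → Sym2 V) (hloop : ∀ e, ¬ (ends e).IsDiag)
    (hminor : ¬ HasCliqueMinor (SimpleGraph.fromEdgeSet (Set.range ends)) k)
    (Δ : ℕ) (hΔ : ∀ v : V, {e : E | v ∈ ends e}.ncard ≤ Δ)
    (S : Finset E) (hS : IsMStrongCliqueSet ends (S : Set E)) :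
    (S.card : ℝ) ≤ 3 / 2 * ((k : ℝ) - 2) * (Δ : ℝ) := by
  classical
  have hdeg : ∀ v, #(S.filter (fun e => v ∈ ends e)) ≤ Δ := by
    intro v
    refine le_trans ?_ (hΔ v)
    rw [← Set.ncard_coe_finset]
    exact Set.ncard_le_ncard (fun e he => by simpa using (mem_filter.1 (mem_coe.1 he)).2)
      (Set.toFinite _)
  rcases Nat.eq_zero_or_pos Δ with rfl | hpos
  · have hS0 : S = ∅ := by
      rw [eq_empty_iff_forall_notMem]
      intro e he
      have h := hdeg (ends e).out.1
      rw [Nat.le_zero, card_eq_zero, filter_eq_empty_iff] at h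
      exact h he (Sym2.out_fst_mem _)
    simp [hS0]
  obtain ⟨σ, hσ, hcard⟩ := exists_perm ends hloop S hpos hdeg
  have hHG : SimpleGraph.fromEdgeSet (ends '' (S : Set E)) ≤
      SimpleGraph.fromEdgeSet (Set.range ends) :=
    SimpleGraph.fromEdgeSet_mono (Set.image_subset_range _ _)
  have hst : StrongIn (SimpleGraph.fromEdgeSet (ends '' (S : Set E)))
      (SimpleGraph.fromEdgeSet (Set.range ends)) := by
    intro a b c d hab hcd hac had hbc hbd
    rw [SimpleGraph.fromEdgeSet_adj] at hab hcd
    obtain ⟨⟨e, heS, he⟩, -⟩ := hab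
    obtain ⟨⟨f, hfS, hf⟩, -⟩ := hcd
    have hef : e ≠ f := by
      rintro rfl
      have : a ∈ s(c, d) := by rw [← hf, he]; simp
      rw [Sym2.mem_iff] at this
      tauto
    rcases hS e heS f hfS hef with ⟨x, hx, hy⟩ | ⟨x, y, hx, hy, g, hg⟩
    · rw [he, Sym2.mem_iff] at hx
      rw [hf, Sym2.mem_iff] at hy
      rcases hx with rfl | rfl <;> rcases hy with rfl | rfl <;> contradiction
    · rw [he, Sym2.mem_iff] at hx
      rw [hf, Sym2.mem_iff] at hy
      simp only [SimpleGraph.fromEdgeSet_adj]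
      have hr : s(x, y) ∈ Set.range ends := ⟨g, hg⟩
      rcases hx with rfl | rfl <;> rcases hy with rfl | rfl <;> tauto
  obtain ⟨A, hA, hAd, hAc⟩ := exists_cycles
    (H := SimpleGraph.fromEdgeSet (ends '' (S : Set E))) (σ := σ) (by
      intro v hv
      obtain ⟨e, heS, he⟩ := hσ v hv
      rw [SimpleGraph.fromEdgeSet_adj]
      exact ⟨⟨e, heS, he⟩, hv.symm⟩)
  have hle := sum_card_le hHG hst hk hminor hA hAd
  rw [hAc] at hle
  have h2 : 2 * #S ≤ 3 * (k - 2) * Δ := hcard.trans (Nat.mul_le_mul_right _ hle)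
  have h3 : (2 * #S : ℝ) ≤ 3 * ((k : ℝ) - 2) * Δ := by
    have h4 : ((2 * #S : ℕ) : ℝ) ≤ ((3 * (k - 2) * Δ : ℕ) : ℝ) := by exact_mod_cast h2
    rw [Nat.cast_mul (3 * (k - 2)), Nat.cast_mul 3, Nat.cast_sub (by omega)] at h4
    push_cast at h4
    exact h4
  linarith
end

section
/- Let k ≥ 5. For any K_k-minor-free multigraph G of maximum degree Δ such that every two of its edges are incident or joined by an edge of G, the strong clique number of G satisfies ω₂'(G) ≤ (k − 1/2)Δ. -/
/-! ### Matchings in the join with a complete graph -/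

/-- The join of `G` with the complete graph on `d` new vertices. -/
def joinComplete {V : Type} (G : SimpleGraph V) (d : ℕ) : SimpleGraph (V ⊕ Fin d) where
  Adj x y := x ≠ y ∧ ∀ v w, x = Sum.inl v → y = Sum.inl w → G.Adj v w
  symm := ⟨fun _ _ h => ⟨h.1.symm, fun v w hv hw => (h.2 w v hw hv).symm⟩⟩
  loopless := ⟨fun _ h => h.1 rfl⟩

theorem joinComplete_adj_inl {V : Type} (G : SimpleGraph V) (d : ℕ) (v w : V) :
    (joinComplete G d).Adj (Sum.inl v) (Sum.inl w) ↔ G.Adj v w := by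
  constructor
  · intro h
    exact h.2 v w rfl rfl
  · intro h
    refine ⟨fun e => h.ne (Sum.inl_injective e), ?_⟩
    intro a b ha hb
    rw [← Sum.inl_injective ha, ← Sum.inl_injective hb]
    exact h

theorem joinComplete_adj_inr {V : Type} (G : SimpleGraph V) (d : ℕ) (i : Fin d)
    (y : V ⊕ Fin d) (h : Sum.inr i ≠ y) : (joinComplete G d).Adj (Sum.inr i) y :=
  ⟨h, fun _ _ hv _ => by cases hv⟩

/-- A perfect matching of the join with `d` new vertices leaves at least `n - d ≥ 2k` old vertices
matched among themselves, hence `k` disjoint edges of `G`. -/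
theorem exists_disjoint_edges_of_perfectMatching {V : Type} [Fintype V] (G : SimpleGraph V)
    (k d : ℕ) (hd : 2 * k + d ≤ Fintype.card V) (M : (joinComplete G d).Subgraph)
    (hM : M.IsPerfectMatching) :
    ∃ f : Fin k → Sym2 V, (∀ i, f i ∈ G.edgeSet) ∧
      ∀ i j, i ≠ j → ∀ x, x ∈ f i → x ∉ f j := by
  classical
  rw [SimpleGraph.Subgraph.isPerfectMatching_iff] at hM
  choose m hm huniq using hM
  simp only at hm huniq
  have hinv : ∀ x, m (m x) = x := fun x => (huniq (m x) x (hm x).symm).symm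
  -- the old vertices matched to an old vertex
  let P : Finset V := Finset.univ.filter fun v => ∃ w, m (Sum.inl v) = Sum.inl w
  have hPc : (Finset.univ.filter fun v : V => ¬ ∃ w, m (Sum.inl v) = Sum.inl w).card ≤ d := by
    have hex : ∀ v : V, (¬ ∃ w, m (Sum.inl v) = Sum.inl w) →
        ∃ i : Fin d, m (Sum.inl v) = Sum.inr i := by
      intro v hv
      rcases h : m (Sum.inl v) with w | i
      · exact (hv ⟨w, h⟩).elim
      · exact ⟨i, rfl⟩
    have := Finset.card_le_card_of_injOn
      (s := Finset.univ.filter fun v : V => ¬ ∃ w, m (Sum.inl v) = Sum.inl w)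
      (t := Finset.univ.image (Sum.inr : Fin d → V ⊕ Fin d)) (fun v => m (Sum.inl v))
      (by
        intro v hv
        obtain ⟨i, hi⟩ := hex v (by simpa using hv)
        simp [hi])
      (by
        intro v _ w _ h
        have h2 := congrArg m h
        simp only [hinv] at h2
        exact Sum.inl_injective h2)
    refine this.trans (Finset.card_image_le.trans (by simp))
  have hP : 2 * k ≤ P.card := by
    have := Finset.card_filter_add_card_filter_not (s := (Finset.univ : Finset V))
      (fun v : V => ∃ w, m (Sum.inl v) = Sum.inl w)
    rw [Finset.card_univ] at this
    change P.card + _ = _ at this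
    omega
  have hpart : ∀ v, ∃ w, v ∈ P → m (Sum.inl v) = Sum.inl w := by
    intro v
    by_cases h : v ∈ P
    · obtain ⟨w, hw⟩ := (Finset.mem_filter.1 h).2
      exact ⟨w, fun _ => hw⟩
    · exact ⟨v, fun h' => (h h').elim⟩
  choose p hp using hpart
  have hpP : ∀ v ∈ P, p v ∈ P := by
    intro v hv
    refine Finset.mem_filter.2 ⟨Finset.mem_univ _, v, ?_⟩
    rw [← hp v hv, hinv]
  have hpp : ∀ v ∈ P, p (p v) = v := by
    intro v hv
    apply Sum.inl_injective (β := Fin d)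
    rw [← hp _ (hpP v hv), ← hp v hv, hinv]
  let F : V → Sym2 V := fun v => s(v, p v)
  have hF : ∀ v ∈ P, ∀ x, x ∈ F v → F v = F x := by
    intro v hv x hx
    rcases Sym2.mem_iff.1 hx with rfl | rfl
    · rfl
    · simp only [F]
      rw [hpp v hv, Sym2.eq_swap]
  have hcard : P.card ≤ 2 * (P.image F).card := by
    refine Finset.card_le_mul_card_image P 2 ?_
    intro b hb
    obtain ⟨v, hv, rfl⟩ := Finset.mem_image.1 hb
    refine (Finset.card_le_card (t := {v, p v}) ?_).trans Finset.card_le_two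
    intro a ha
    have h2 := (Finset.mem_filter.1 ha).2
    have : a ∈ F v := h2 ▸ Sym2.mem_mk_left a (p a)
    simpa [F] using this
  have hk : k ≤ (P.image F).card := by omega
  obtain ⟨T, hT, hTc⟩ := Finset.exists_subset_card_eq hk
  let e := T.equivFinOfCardEq hTc
  have hmem : ∀ i, ∃ v ∈ P, F v = (e.symm i : Sym2 V) := fun i =>
    Finset.mem_image.1 (hT (e.symm i).2)
  refine ⟨fun i => (e.symm i : Sym2 V), ?_, ?_⟩
  · intro i
    obtain ⟨v, hv, h⟩ := hmem i
    simp only [← h, F, SimpleGraph.mem_edgeSet]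
    have h1 := (hm (Sum.inl v)).adj_sub
    rw [hp v hv] at h1
    exact (joinComplete_adj_inl G d _ _).1 h1
  · intro i j hij x hxi hxj
    obtain ⟨v, hv, h⟩ := hmem i
    obtain ⟨w, hw, h'⟩ := hmem j
    simp only [← h] at hxi
    simp only [← h'] at hxj
    apply hij
    apply e.symm.injective
    apply Subtype.ext
    rw [← h, ← h', hF v hv x hxi, hF w hw x hxj]

/-! ### Half-integral covers from Tutte violators -/

/-- If all new vertices of the join lie in the Tutte violator, its old vertices `A` together with
the unique component `K` of `G - A` containing an edge (empty if there is none) form the cover. -/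
theorem exists_cover_of_violator {V : Type} [Fintype V] (G : SimpleGraph V)
    (hG : ∀ a b c d, G.Adj a b → G.Adj c d →
      ∃ x y, (x = a ∨ x = b) ∧ (y = c ∨ y = d) ∧ (x = y ∨ G.Adj x y))
    (k d : ℕ) (hd : 2 * k + d = Fintype.card V) (U : Set (V ⊕ Fin d))
    (hU : (joinComplete G d).IsTutteViolator U) (hr : ∀ i, Sum.inr i ∈ U) :
    ∃ A K : Finset V, 2 * A.card + K.card + 1 ≤ 2 * k ∧
      ∀ u v, G.Adj u v → u ∈ A ∨ v ∈ A ∨ (u ∈ K ∧ v ∈ K) := by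
  classical
  unfold SimpleGraph.IsTutteViolator at hU
  set H := ((⊤ : (joinComplete G d).Subgraph).deleteVerts U).coe with hH
  have hmemv : ∀ x, x ∈ ((⊤ : (joinComplete G d).Subgraph).deleteVerts U).verts ↔ x ∉ U := by
    intro x; simp
  have hadj : ∀ v w (hv : Sum.inl v ∉ U) (hw : Sum.inl w ∉ U), G.Adj v w →
      H.Adj ⟨Sum.inl v, (hmemv _).2 hv⟩ ⟨Sum.inl w, (hmemv _).2 hw⟩ := by
    intro v w hv hw h
    simp [hH, hv, hw, joinComplete_adj_inl, h]
  let A : Finset V := Finset.univ.filter fun v => Sum.inl v ∈ U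
  have hA : A.card + d ≤ U.ncard := by
    have hle : ((A.disjSum (Finset.univ : Finset (Fin d)) : Finset (V ⊕ Fin d)) :
        Set (V ⊕ Fin d)) ⊆ U := by
      intro x hx
      rcases x with v | i
      · simpa [A] using hx
      · exact hr i
    have := Set.ncard_le_ncard hle (Set.toFinite _)
    rw [Set.ncard_coe_finset] at this
    simpa using this
  -- it suffices to find `K` containing all edges of `G - A`, such that at most `|K| % 2`
  -- odd components have no vertex outside `K`
  suffices hsuff : ∃ K : Finset V, Disjoint A K ∧
      (∀ u v, G.Adj u v → u ∉ A → v ∉ A → (u ∈ K ∧ v ∈ K)) ∧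
      ∃ D : Set H.ConnectedComponent, D.ncard ≤ K.card % 2 ∧
        ∀ c ∈ H.oddComponents, c ∈ D ∨ ∃ v, ∃ hv : Sum.inl v ∉ U, v ∉ K ∧
          H.connectedComponentMk ⟨Sum.inl v, (hmemv _).2 hv⟩ = c by
    obtain ⟨K, hAK, hcov, D, hD, hodd⟩ := hsuff
    refine ⟨A, K, ?_, ?_⟩
    · let R : Finset V := Finset.univ \ (A ∪ K)
      have hR : R.card + (A.card + K.card) = Fintype.card V := by
        rw [← Finset.card_union_of_disjoint hAK, ← Finset.card_univ]
        exact Finset.card_sdiff_add_card_eq_card (Finset.subset_univ _)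
      let f : R → H.ConnectedComponent := fun v => H.connectedComponentMk
        ⟨Sum.inl v.1, (hmemv _).2 (by
          intro hU'
          exact (Finset.mem_sdiff.1 v.2).2 (Finset.mem_union_left _
            (Finset.mem_filter.2 ⟨Finset.mem_univ _, hU'⟩)))⟩
      have hsub : H.oddComponents ⊆ D ∪ Set.range f := by
        intro c hc
        rcases hodd c hc with h | ⟨v, hv, hvK, h⟩
        · exact Or.inl h
        · exact Or.inr ⟨⟨v, by simp [R, A, hv, hvK]⟩, h⟩
      have h1 := Set.ncard_le_ncard hsub (Set.toFinite _)
      have h2 := Set.ncard_union_le D (Set.range f)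
      have h3 : (Set.range f).ncard ≤ R.card := by
        rw [← Set.image_univ]
        refine (Set.ncard_image_le (Set.toFinite _)).trans ?_
        rw [Set.ncard_univ]; simp
      omega
    · intro u v h
      by_cases hu : u ∈ A
      · exact Or.inl hu
      by_cases hv : v ∈ A
      · exact Or.inr (Or.inl hv)
      exact Or.inr (Or.inr (hcov u v h hu hv))
  have hrep : ∀ c : H.ConnectedComponent, ∃ v, ∃ hv : Sum.inl v ∉ U,
      H.connectedComponentMk ⟨Sum.inl v, (hmemv _).2 hv⟩ = c := by
    intro c
    induction c using SimpleGraph.ConnectedComponent.ind with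
    | _ x =>
      obtain ⟨v | i, hx⟩ := x
      · exact ⟨v, (hmemv _).1 hx, rfl⟩
      · exact ((hmemv _).1 hx (hr i)).elim
  by_cases hedge : ∃ a b, G.Adj a b ∧ a ∉ A ∧ b ∉ A
  · obtain ⟨a, b, hab, haA, hbA⟩ := hedge
    have ha : Sum.inl a ∉ U := by simpa [A] using haA
    have hb : Sum.inl b ∉ U := by simpa [A] using hbA
    set c0 := H.connectedComponentMk ⟨Sum.inl a, (hmemv _).2 ha⟩ with hc0
    have hbc : H.connectedComponentMk ⟨Sum.inl b, (hmemv _).2 hb⟩ = c0 :=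
      SimpleGraph.ConnectedComponent.sound (hadj a b ha hb hab).symm.reachable
    let K : Finset V := Finset.univ.filter fun v => ∃ hv : Sum.inl v ∉ U,
      H.connectedComponentMk ⟨Sum.inl v, (hmemv _).2 hv⟩ = c0
    have hstep : ∀ v w, v ∈ K → w ∉ A → G.Adj v w → w ∈ K := by
      intro v w hv hw h
      obtain ⟨hvU, hvc⟩ := (Finset.mem_filter.1 hv).2
      have hwU : Sum.inl w ∉ U := by simpa [A] using hw
      refine Finset.mem_filter.2 ⟨Finset.mem_univ _, hwU, ?_⟩
      rw [← hvc]
      exact SimpleGraph.ConnectedComponent.sound (hadj v w hvU hwU h).symm.reachable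
    have haK : a ∈ K := Finset.mem_filter.2 ⟨Finset.mem_univ _, ha, rfl⟩
    have hbK : b ∈ K := Finset.mem_filter.2 ⟨Finset.mem_univ _, hb, hbc⟩
    have hKcard : c0.supp.ncard = K.card := by
      rw [← Set.ncard_image_of_injective _ Subtype.val_injective,
        ← Set.ncard_coe_finset,
        ← Set.ncard_image_of_injective (K : Set V) (Sum.inl_injective (β := Fin d))]
      congr 1
      ext x
      constructor
      · rintro ⟨⟨v | i, hx⟩, hxc, rfl⟩
        · exact ⟨v, Finset.mem_coe.2 (Finset.mem_filter.2
            ⟨Finset.mem_univ _, (hmemv _).1 hx, hxc⟩), rfl⟩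
        · exact ((hmemv _).1 hx (hr i)).elim
      · rintro ⟨v, hv, rfl⟩
        obtain ⟨hvU, hvc⟩ := (Finset.mem_filter.1 (Finset.mem_coe.1 hv)).2
        exact ⟨⟨Sum.inl v, (hmemv _).2 hvU⟩, hvc, rfl⟩
    refine ⟨K, ?_, ?_, ?_⟩
    · rw [Finset.disjoint_left]
      intro v hv hvK
      exact (Finset.mem_filter.1 hvK).2.1 (Finset.mem_filter.1 hv).2
    · intro u v huv hu hv
      obtain ⟨x, y, hx, hy, hxy⟩ := hG a b u v hab huv
      have hxK : x ∈ K := by rcases hx with rfl | rfl <;> assumption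
      have hyA : y ∉ A := by rcases hy with rfl | rfl <;> assumption
      have hyK : y ∈ K := by
        rcases hxy with rfl | h
        · exact hxK
        · exact hstep x y hxK hyA h
      rcases hy with rfl | rfl
      · exact ⟨hyK, hstep _ _ hyK hv huv⟩
      · exact ⟨hstep _ _ hyK hu huv.symm, hyK⟩
    · refine ⟨{c | c = c0 ∧ Odd K.card}, ?_, ?_⟩
      · by_cases ho : Odd K.card
        · simp [ho, Nat.odd_iff.1 ho]
        · simp [ho]
      · intro c hc
        by_cases h : c = c0
        · left
          refine ⟨h, ?_⟩
          rw [← hKcard, ← h]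
          exact hc
        · right
          obtain ⟨v, hv, hvc⟩ := hrep c
          refine ⟨v, hv, ?_, hvc⟩
          intro hvK
          obtain ⟨_, h2⟩ := (Finset.mem_filter.1 hvK).2
          exact h (hvc.symm.trans h2)
  · refine ⟨∅, by simp, ?_, ∅, by simp, ?_⟩
    · intro u v huv hu hv
      exact (hedge ⟨u, v, huv, hu, hv⟩).elim
    · intro c _
      obtain ⟨v, hv, hvc⟩ := hrep c
      exact Or.inr ⟨v, hv, by simp, hvc⟩

/-- A graph whose edges are pairwise incident or joined has `k` disjoint edges, or a half-integral
vertex cover (weight `1` on `A`, weight `1/2` on `K`) of total weight at most `k - 1/2`. -/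
theorem exists_matching_or_cover {V : Type} [Fintype V] (G : SimpleGraph V)
    (hG : ∀ a b c d, G.Adj a b → G.Adj c d →
      ∃ x y, (x = a ∨ x = b) ∧ (y = c ∨ y = d) ∧ (x = y ∨ G.Adj x y)) (k : ℕ) :
    (∃ f : Fin k → Sym2 V, (∀ i, f i ∈ G.edgeSet) ∧
      ∀ i j, i ≠ j → ∀ x, x ∈ f i → x ∉ f j) ∨
    ∃ A K : Finset V, 2 * A.card + K.card + 1 ≤ 2 * k ∧
      ∀ u v, G.Adj u v → u ∈ A ∨ v ∈ A ∨ (u ∈ K ∧ v ∈ K) := by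
  classical
  by_cases hn : Fintype.card V + 1 ≤ 2 * k
  · exact Or.inr ⟨∅, Finset.univ, by simpa using hn, by simp⟩
  obtain ⟨d, hd⟩ : ∃ d, 2 * k + d = Fintype.card V :=
    ⟨Fintype.card V - 2 * k, by omega⟩
  by_cases hpm : ∃ M : (joinComplete G d).Subgraph, M.IsPerfectMatching
  · obtain ⟨M, hM⟩ := hpm
    exact Or.inl (exists_disjoint_edges_of_perfectMatching G k d hd.le M hM)
  right
  rw [SimpleGraph.tutte] at hpm
  push Not at hpm
  obtain ⟨U, hU⟩ := hpm
  refine exists_cover_of_violator G hG k d hd U hU ?_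
  -- otherwise a universal vertex survives and `G' - U` is connected, so it has at most one odd
  -- component and `U = ∅`; but the join has the even number `n + d` of vertices
  by_contra hr
  push Not at hr
  obtain ⟨i, hi⟩ := hr
  unfold SimpleGraph.IsTutteViolator at hU
  set H := ((⊤ : (joinComplete G d).Subgraph).deleteVerts U).coe with hH
  have hmemv : ∀ x, x ∈ ((⊤ : (joinComplete G d).Subgraph).deleteVerts U).verts ↔ x ∉ U := by
    intro x; simp
  have hall : ∀ c : H.ConnectedComponent,
      c = H.connectedComponentMk ⟨Sum.inr i, (hmemv _).2 hi⟩ := by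
    intro c
    induction c using SimpleGraph.ConnectedComponent.ind with
    | _ x =>
      obtain ⟨x, hx⟩ := x
      by_cases hxi : Sum.inr i = x
      · subst hxi; rfl
      · refine SimpleGraph.ConnectedComponent.sound (SimpleGraph.Adj.reachable ?_)
        have h1 := (joinComplete_adj_inr G d i x hxi).symm
        have h2 := (hmemv _).1 hx
        simp [hH, h1, h2, hi]
  have hle : H.oddComponents.ncard ≤ 1 := by
    rw [Set.ncard_le_one]
    intro a _ b _
    rw [hall a, hall b]
  have hU0 : U.ncard = 0 := by omega
  have h1 : H.oddComponents.ncard = 1 := by omega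
  have hUe : U = ∅ := by
    rwa [Set.ncard_eq_zero (Set.toFinite _)] at hU0
  have h3 := (SimpleGraph.odd_ncard_oddComponents H).1 (by rw [h1]; exact odd_one)
  rw [Nat.card_coe_set_eq] at h3
  have h4 : ((⊤ : (joinComplete G d).Subgraph).deleteVerts U).verts = Set.univ := by
    rw [hUe]; simp
  rw [h4, Set.ncard_univ, Nat.card_eq_fintype_card, Fintype.card_sum, Fintype.card_fin] at h3
  rw [Nat.odd_iff] at h3
  omega

/-! ### Clique minors and edge counting -/

theorem hasCliqueMinor_of_disjoint_edges {V : Type} (G : SimpleGraph V)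
    (hG : ∀ a b c d, G.Adj a b → G.Adj c d →
      ∃ x y, (x = a ∨ x = b) ∧ (y = c ∨ y = d) ∧ (x = y ∨ G.Adj x y)) (k : ℕ)
    (f : Fin k → Sym2 V) (hf : ∀ i, f i ∈ G.edgeSet)
    (hdis : ∀ i j, i ≠ j → ∀ x, x ∈ f i → x ∉ f j) : HasCliqueMinor G k := by
  refine ⟨fun i => {x | x ∈ f i}, ?_, ?_, ?_⟩
  · intro i
    have h := hf i
    induction hfi : f i using Sym2.ind with
    | _ a b =>
      rw [hfi, SimpleGraph.mem_edgeSet] at h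
      have : {x | x ∈ f i} = ({a, b} : Set V) := by ext; simp [hfi]
      change (G.induce {x | x ∈ f i}).Connected
      rw [this]
      exact SimpleGraph.induce_pair_connected_of_adj h
  · intro i j hij
    rw [Set.disjoint_left]
    exact hdis i j hij
  · intro i j hij
    have hi := hf i
    have hj := hf j
    have hd := hdis i j hij
    induction hfi : f i using Sym2.ind with
    | _ a b =>
      induction hfj : f j using Sym2.ind with
      | _ c d =>
        rw [hfi, SimpleGraph.mem_edgeSet] at hi
        rw [hfj, SimpleGraph.mem_edgeSet] at hj
        rw [hfi, hfj] at hd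
        obtain ⟨x, y, hx, hy, hxy⟩ := hG a b c d hi hj
        have hx' : x ∈ s(a, b) := Sym2.mem_iff.2 hx
        have hy' : y ∈ s(c, d) := Sym2.mem_iff.2 hy
        rcases hxy with rfl | h
        · exact (hd x hx' hy').elim
        · exact ⟨x, by simpa [hfi] using hx', y, by simpa [hfj] using hy', h⟩

theorem two_mul_card_le_of_cover {V E : Type} [Fintype V] [Fintype E]
    (ends : E → Sym2 V) (hloop : ∀ e, ¬ (ends e).IsDiag)
    (Δ : ℕ) (hΔ : ∀ v : V, {e : E | v ∈ ends e}.ncard ≤ Δ) (A K : Finset V)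
    (hcov : ∀ e u v, ends e = s(u, v) → u ∈ A ∨ v ∈ A ∨ (u ∈ K ∧ v ∈ K)) :
    2 * Fintype.card E ≤ (2 * A.card + K.card) * Δ := by
  classical
  have hdeg : ∀ v : V, (Finset.univ.filter fun e => v ∈ ends e).card ≤ Δ := by
    intro v
    have := hΔ v
    rwa [Set.ncard_eq_toFinset_card', Set.toFinset_ofPred] at this
  have hswap : ∀ B : Finset V, ∑ e : E, (B.filter fun v => v ∈ ends e).card ≤ B.card * Δ := by
    intro B
    have h := Finset.sum_card_bipartiteAbove_eq_sum_card_bipartiteBelow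
      (s := (Finset.univ : Finset E)) (t := B) (fun e v => v ∈ ends e)
    simp only [Finset.bipartiteAbove, Finset.bipartiteBelow] at h
    rw [h]
    exact (Finset.sum_le_card_nsmul B _ Δ fun v _ => hdeg v).trans (by simp)
  have hone : ∀ e : E, 2 ≤ 2 * (A.filter fun v => v ∈ ends e).card +
      (K.filter fun v => v ∈ ends e).card := by
    intro e
    have hl := hloop e
    have hc := hcov e
    induction he : ends e using Sym2.ind with
    | _ u v =>
      rw [he, Sym2.mk_isDiag_iff] at hl
      have hpos : ∀ x, x ∈ A → x ∈ s(u, v) → 1 ≤ (A.filter fun v' => v' ∈ s(u, v)).card := by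
        intro x hx hxe
        exact Finset.card_pos.2 ⟨x, Finset.mem_filter.2 ⟨hx, hxe⟩⟩
      rcases hc u v he with h | h | ⟨hu, hv⟩
      · have := hpos u h (by simp)
        omega
      · have := hpos v h (by simp)
        omega
      · have : ({u, v} : Finset V) ⊆ K.filter fun v' => v' ∈ s(u, v) := by
          intro x hx
          rcases Finset.mem_insert.1 hx with rfl | hx
          · simp [hu]
          · rw [Finset.mem_singleton.1 hx]; simp [hv]
        have := Finset.card_le_card this
        rw [Finset.card_pair hl] at this
        omega
  calc 2 * Fintype.card E = ∑ _e : E, 2 := by simp [mul_comm]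
    _ ≤ ∑ e : E, (2 * (A.filter fun v => v ∈ ends e).card +
        (K.filter fun v => v ∈ ends e).card) := Finset.sum_le_sum fun e _ => hone e
    _ = 2 * ∑ e : E, (A.filter fun v => v ∈ ends e).card +
        ∑ e : E, (K.filter fun v => v ∈ ends e).card := by
      rw [Finset.sum_add_distrib, Finset.mul_sum]
    _ ≤ (2 * A.card + K.card) * Δ := by
      have h1 := hswap A
      have h2 := hswap K
      nlinarith

/-- Let `k ≥ 5`.  Any `K_k`-minor-free multigraph of maximum degree `Δ` such that every two
of its edges are incident or joined by an edge has strong clique number at most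
`(k - 1/2)Δ`. -/
theorem stmt_10 (k : ℕ) (hk : 5 ≤ k) {V E : Type} [Fintype V] [Fintype E]
    (ends : E → Sym2 V) (hloop : ∀ e, ¬ (ends e).IsDiag)
    (hminor : ¬ HasCliqueMinor (SimpleGraph.fromEdgeSet (Set.range ends)) k)
    (Δ : ℕ) (hΔ : ∀ v : V, {e : E | v ∈ ends e}.ncard ≤ Δ)
    (hdiam : ∀ e f : E, e ≠ f →
      (∃ x, x ∈ ends e ∧ x ∈ ends f) ∨
      ∃ x y, x ∈ ends e ∧ y ∈ ends f ∧ ∃ g, ends g = s(x, y))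
    (S : Finset E) (hS : IsMStrongCliqueSet ends (S : Set E)) :
    (S.card : ℝ) ≤ ((k : ℝ) - 1 / 2) * (Δ : ℝ) := by
  classical
  set G := SimpleGraph.fromEdgeSet (Set.range ends) with hGdef
  have hadj : ∀ e u v, ends e = s(u, v) → G.Adj u v := by
    intro e u v he
    rw [hGdef, SimpleGraph.fromEdgeSet_adj]
    refine ⟨⟨e, he⟩, ?_⟩
    have := hloop e
    rwa [he, Sym2.mk_isDiag_iff] at this
  have hG : ∀ a b c d, G.Adj a b → G.Adj c d →
      ∃ x y, (x = a ∨ x = b) ∧ (y = c ∨ y = d) ∧ (x = y ∨ G.Adj x y) := by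
    intro a b c d hab hcd
    rw [hGdef, SimpleGraph.fromEdgeSet_adj] at hab hcd
    obtain ⟨⟨e, he⟩, -⟩ := hab
    obtain ⟨⟨f, hf⟩, -⟩ := hcd
    by_cases hef : e = f
    · subst hef
      have : a ∈ s(c, d) := by rw [← hf, he]; simp
      exact ⟨a, a, Or.inl rfl, Sym2.mem_iff.1 this, Or.inl rfl⟩
    rcases hdiam e f hef with ⟨x, hx, hy⟩ | ⟨x, y, hx, hy, g, hg⟩
    · rw [he] at hx
      rw [hf] at hy
      exact ⟨x, x, Sym2.mem_iff.1 hx, Sym2.mem_iff.1 hy, Or.inl rfl⟩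
    · rw [he] at hx
      rw [hf] at hy
      exact ⟨x, y, Sym2.mem_iff.1 hx, Sym2.mem_iff.1 hy, Or.inr (hadj g x y hg)⟩
  rcases exists_matching_or_cover G hG k with ⟨f, hf, hdis⟩ | ⟨A, K, hAK, hcov⟩
  · exact (hminor (hasCliqueMinor_of_disjoint_edges G hG k f hf hdis)).elim
  have h1 := two_mul_card_le_of_cover ends hloop Δ hΔ A K
    fun e u v he => hcov u v (hadj e u v he)
  have h2 : S.card ≤ Fintype.card E := Finset.card_le_univ S
  have h3 : 2 * S.card + Δ ≤ 2 * k * Δ := by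
    have := Nat.mul_le_mul_right Δ hAK
    nlinarith
  have h4 : (2 * S.card + Δ : ℝ) ≤ 2 * k * Δ := by exact_mod_cast h3
  linarith
end

section
/- Let k ≥ 1. For any multigraph G of maximum degree Δ that does not contain k pairwise vertex-disjoint edges every two of which are joined by an edge of G, the strong clique number of G satisfies ω₂'(G) ≤ (3/2)(k−1)Δ. -/
/-- A matching: the edges in `M` are pairwise vertex-disjoint. -/
def IsMMatching {V E : Type} (ends : E → Sym2 V) (M : Finset E) : Prop :=
  ∀ e ∈ M, ∀ f ∈ M, e ≠ f → ∀ x, x ∈ ends e → x ∉ ends f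

/-- A vertex covered by an edge of `M`. -/
def MCovered {V E : Type} (ends : E → Sym2 V) (M : Finset E) (x : V) : Prop :=
  ∃ m ∈ M, x ∈ ends m

theorem exists_maximum_matching {V E : Type} (ends : E → Sym2 V) (S : Finset E) :
    ∃ M ⊆ S, IsMMatching ends M ∧
      ∀ N ⊆ S, IsMMatching ends N → N.card ≤ M.card := by
  classical
  obtain ⟨M, hM, hmax⟩ := Finset.exists_max_image
    (S.powerset.filter (IsMMatching ends)) Finset.card ⟨∅, by simp [IsMMatching]⟩
  simp only [Finset.mem_filter, Finset.mem_powerset] at hM hmax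
  exact ⟨M, hM.1, hM.2, fun N h1 h2 => hmax N ⟨h1, h2⟩⟩

/-- Every edge of `S` meets a maximum matching of `S`. -/
theorem exists_covered_of_maximum {V E : Type} {ends : E → Sym2 V} {S M : Finset E}
    (hMS : M ⊆ S) (hM : IsMMatching ends M)
    (hmax : ∀ N ⊆ S, IsMMatching ends N → N.card ≤ M.card) {f : E} (hf : f ∈ S) :
    ∃ x ∈ ends f, MCovered ends M x := by
  classical
  by_contra! hcon
  have hfM : f ∉ M := fun h => by
    obtain ⟨x, hx⟩ : ∃ x, x ∈ ends f := ⟨_, Sym2.out_fst_mem _⟩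
    exact hcon x hx ⟨f, h, hx⟩
  have := hmax (insert f M) (Finset.insert_subset hf hMS) (by
    intro a ha b hb hab x hxa hxb
    rw [Finset.mem_insert] at ha hb
    rcases ha with rfl | ha <;> rcases hb with rfl | hb
    · exact hab rfl
    · exact hcon x hxa ⟨b, hb, hxb⟩
    · exact hcon x hxb ⟨a, ha, hxa⟩
    · exact hM a ha b hb hab x hxa hxb)
  rw [Finset.card_insert_of_notMem hfM] at this
  omega

/-- A maximum matching admits no augmenting path `w₁ u v w₂` of length three. -/
theorem eq_of_augmenting {V E : Type} {ends : E → Sym2 V} {S M : Finset E}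
    (hMS : M ⊆ S) (hM : IsMMatching ends M)
    (hmax : ∀ N ⊆ S, IsMMatching ends N → N.card ≤ M.card)
    {m f g : E} {u v w z : V} (hm : m ∈ M) (hme : ends m = s(u, v)) (huv : u ≠ v)
    (hf : f ∈ S) (hg : g ∈ S) (hfe : ends f = s(u, w)) (hge : ends g = s(v, z))
    (hw : ¬ MCovered ends M w) (hz : ¬ MCovered ends M z) : w = z := by
  classical
  by_contra hwz
  have hu : MCovered ends M u := ⟨m, hm, by simp [hme]⟩
  have hv : MCovered ends M v := ⟨m, hm, by simp [hme]⟩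
  have huz : u ≠ z := fun h => hz (h ▸ hu)
  have hwv : w ≠ v := fun h => hw (h ▸ hv)
  have hfM : f ∉ M := fun h => hw ⟨f, h, by simp [hfe]⟩
  have hgM : g ∉ M := fun h => hz ⟨g, h, by simp [hge]⟩
  have hfg : f ≠ g := by
    rintro rfl
    have : u ∈ ends f := by simp [hfe]
    rw [hge, Sym2.mem_iff] at this
    tauto
  have disj : ∀ x, x ∈ ends f → x ∉ ends g := by
    intro x hx hx'
    rw [hfe, Sym2.mem_iff] at hx
    rw [hge, Sym2.mem_iff] at hx'
    grind
  have key : ∀ a ∈ M.erase m, ∀ x, x ∈ ends a → x ∉ ends f ∧ x ∉ ends g := by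
    intro a ha x hx
    obtain ⟨ham, haM⟩ := Finset.mem_erase.1 ha
    have hxm := hM a haM m hm ham x hx
    have hxc : MCovered ends M x := ⟨a, haM, hx⟩
    rw [hme, Sym2.mem_iff, not_or] at hxm
    rw [hfe, hge, Sym2.mem_iff, Sym2.mem_iff]
    grind
  have := hmax (insert f (insert g (M.erase m)))
    (Finset.insert_subset hf (Finset.insert_subset hg ((Finset.erase_subset _ _).trans hMS))) (by
      intro a ha b hb hab x hxa hxb
      rw [Finset.mem_insert, Finset.mem_insert] at ha hb
      rcases ha with rfl | rfl | ha <;> rcases hb with rfl | rfl | hb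
      · exact hab rfl
      · exact disj x hxa hxb
      · exact (key b hb x hxb).1 hxa
      · exact disj x hxb hxa
      · exact hab rfl
      · exact (key b hb x hxb).2 hxa
      · exact (key a ha x hxa).1 hxb
      · exact (key a ha x hxa).2 hxb
      · exact hM a (Finset.mem_of_mem_erase ha) b (Finset.mem_of_mem_erase hb) hab x hxa hxb)
  rw [Finset.card_insert_of_notMem (by simp [hfg, hfM]),
    Finset.card_insert_of_notMem (by simp [hgM]), Finset.card_erase_of_mem hm] at this
  have := Finset.card_pos.2 ⟨m, hm⟩
  omega

/-- The outgoing edges meeting a given edge of a maximum matching have a common vertex. -/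
theorem exists_common_vertex {V E : Type} {ends : E → Sym2 V} {S M : Finset E}
    (hloop : ∀ e, ¬ (ends e).IsDiag) (hMS : M ⊆ S) (hM : IsMMatching ends M)
    (hmax : ∀ N ⊆ S, IsMMatching ends N → N.card ≤ M.card) {m : E} (hm : m ∈ M) :
    ∃ x, ∀ f ∈ S, (∃ w ∈ ends f, ¬ MCovered ends M w) → (∃ y ∈ ends m, y ∈ ends f) →
      x ∈ ends f := by
  obtain ⟨u, v, hme⟩ : ∃ u v, ends m = s(u, v) := by
    induction h : ends m with | _ u v => exact ⟨u, v, rfl⟩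
  have huv : u ≠ v := by simpa [hme] using hloop m
  have shape : ∀ f y w, y ∈ ends m → y ∈ ends f → w ∈ ends f → ¬ MCovered ends M w →
      ends f = s(y, w) := by
    intro f y w hy hyf hwf hw
    have hyw : y ≠ w := by
      rintro rfl
      exact hw ⟨m, hm, hy⟩
    exact (Sym2.mem_and_mem_iff hyw).1 ⟨hyf, hwf⟩
  have hum : u ∈ ends m := by simp [hme]
  have hvm : v ∈ ends m := by simp [hme]
  have aug : ∀ f ∈ S, ∀ g ∈ S, ∀ w z, u ∈ ends f → v ∈ ends g → w ∈ ends f → z ∈ ends g →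
      ¬ MCovered ends M w → ¬ MCovered ends M z → w = z := by
    intro f hf g hg w z huf hvg hwf hzg hw hz
    exact eq_of_augmenting hMS hM hmax hm hme huv hf hg (shape f u w hum huf hwf hw)
      (shape g v z hvm hvg hzg hz) hw hz
  by_cases h1 : ∃ f ∈ S, u ∈ ends f ∧ ∃ w ∈ ends f, ¬ MCovered ends M w
  · by_cases h2 : ∃ g ∈ S, v ∈ ends g ∧ ∃ z ∈ ends g, ¬ MCovered ends M z
    · obtain ⟨f, hf, huf, w, hwf, hw⟩ := h1
      obtain ⟨g, hg, hvg, z, hzg, hz⟩ := h2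
      refine ⟨w, ?_⟩
      rintro e he ⟨t, hte, ht⟩ ⟨y, hym, hye⟩
      rw [hme, Sym2.mem_iff] at hym
      rcases hym with rfl | rfl
      · rw [aug f hf g hg w z huf hvg hwf hzg hw hz, ← aug e he g hg t z hye hvg hte hzg ht hz]
        exact hte
      · rw [aug f hf e he w t huf hye hwf hte hw ht]
        exact hte
    · refine ⟨u, ?_⟩
      rintro e he ht ⟨y, hym, hye⟩
      rw [hme, Sym2.mem_iff] at hym
      rcases hym with rfl | rfl
      · exact hye
      · exact absurd ⟨e, he, hye, ht⟩ h2
  · refine ⟨v, ?_⟩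
    rintro e he ht ⟨y, hym, hye⟩
    rw [hme, Sym2.mem_iff] at hym
    rcases hym with rfl | rfl
    · exact absurd ⟨e, he, hye, ht⟩ h1
    · exact hye

theorem two_mul_card_le_of_maximum {V E : Type} {ends : E → Sym2 V} {S M : Finset E} {Δ : ℕ}
    [DecidableEq V] (hloop : ∀ e, ¬ (ends e).IsDiag)
    (hdeg : ∀ v, (S.filter (v ∈ ends ·)).card ≤ Δ)
    (hMS : M ⊆ S) (hM : IsMMatching ends M)
    (hmax : ∀ N ⊆ S, IsMMatching ends N → N.card ≤ M.card) :
    2 * S.card ≤ 3 * (M.card * Δ) := by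
  classical
  set C : Finset V := M.biUnion fun m => (ends m).toFinset with hC
  have memC : ∀ x, x ∈ C ↔ MCovered ends M x := by
    intro x
    simp [hC, MCovered]
  have cardC : C.card ≤ M.card * 2 :=
    Finset.card_biUnion_le_card_mul _ _ _ fun m _ =>
      (Sym2.card_toFinset_of_not_isDiag _ (hloop m)).le
  set Out : Finset E := S.filter fun f => ∃ w ∈ ends f, ¬ MCovered ends M w with hOut
  have cardOut : Out.card ≤ M.card * Δ := by
    have hsub : Out ⊆ M.biUnion fun m => Out.filter fun f => ∃ y ∈ ends m, y ∈ ends f := by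
      intro f hf
      obtain ⟨x, hxf, m, hm, hxm⟩ :=
        exists_covered_of_maximum hMS hM hmax (Finset.mem_filter.1 hf).1
      exact Finset.mem_biUnion.2 ⟨m, hm, Finset.mem_filter.2 ⟨hf, x, hxm, hxf⟩⟩
    refine (Finset.card_le_card hsub).trans (Finset.card_biUnion_le_card_mul _ _ _ fun m hm => ?_)
    obtain ⟨x, hx⟩ := exists_common_vertex hloop hMS hM hmax hm
    refine (Finset.card_le_card fun f hf => ?_).trans (hdeg x)
    obtain ⟨hfO, hfm⟩ := Finset.mem_filter.1 hf
    obtain ⟨hfS, hfw⟩ := Finset.mem_filter.1 hfO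
    exact Finset.mem_filter.2 ⟨hfS, hx f hfS hfw hfm⟩
  -- Each edge has two covered endpoints, or one covered endpoint and is outgoing.
  have hedge : ∀ f ∈ S, 2 ≤ (C.filter (· ∈ ends f)).card + if f ∈ Out then 1 else 0 := by
    intro f hf
    split_ifs with hfO
    · obtain ⟨x, hxf, hxc⟩ := exists_covered_of_maximum hMS hM hmax hf
      have : 0 < (C.filter (· ∈ ends f)).card :=
        Finset.card_pos.2 ⟨x, Finset.mem_filter.2 ⟨(memC x).2 hxc, hxf⟩⟩
      omega
    · rw [← Sym2.card_toFinset_of_not_isDiag _ (hloop f)]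
      refine Finset.card_le_card fun x hx => ?_
      rw [Sym2.mem_toFinset] at hx
      refine Finset.mem_filter.2 ⟨(memC x).2 ?_, hx⟩
      by_contra hxc
      exact hfO (Finset.mem_filter.2 ⟨hf, x, hx, hxc⟩)
  have hsum := Finset.sum_le_sum hedge
  rw [Finset.sum_add_distrib] at hsum
  have hdouble : ∑ f ∈ S, (C.filter (· ∈ ends f)).card
      = ∑ v ∈ C, (S.filter (v ∈ ends ·)).card :=
    (Finset.sum_card_bipartiteAbove_eq_sum_card_bipartiteBelow (fun f v => v ∈ ends f))
  have hle : ∑ v ∈ C, (S.filter (v ∈ ends ·)).card ≤ C.card * Δ :=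
    Finset.sum_le_card_nsmul _ _ _ fun v _ => hdeg v
  have hout : (∑ f ∈ S, if f ∈ Out then 1 else 0) = Out.card := by
    rw [← Finset.card_filter, Finset.filter_mem_eq_inter,
      Finset.inter_eq_right.2 (Finset.filter_subset _ _)]
  have hC2 := Nat.mul_le_mul_right Δ cardC
  rw [hdouble, hout, Finset.sum_const, smul_eq_mul] at hsum
  linarith

/-- Let `k ≥ 1`.  Any multigraph of maximum degree `Δ` that does not contain `k` pairwise
vertex-disjoint edges every two of which are joined by an edge has strong clique number at
most `(3/2)(k-1)Δ`. -/
theorem stmt_12 (k : ℕ) (hk : 1 ≤ k) {V E : Type} [Fintype V] [Fintype E]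
    (ends : E → Sym2 V) (hloop : ∀ e, ¬ (ends e).IsDiag)
    (Δ : ℕ) (hΔ : ∀ v : V, {e : E | v ∈ ends e}.ncard ≤ Δ)
    (hpack : ¬ ∃ M : Finset E, M.card = k ∧
      ∀ e ∈ M, ∀ f ∈ M, e ≠ f →
        (¬ ∃ x, x ∈ ends e ∧ x ∈ ends f) ∧
        ∃ x y, x ∈ ends e ∧ y ∈ ends f ∧ ∃ g, ends g = s(x, y))
    (S : Finset E) (hS : IsMStrongCliqueSet ends (S : Set E)) :
    (S.card : ℝ) ≤ 3 / 2 * ((k : ℝ) - 1) * (Δ : ℝ) := by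
  classical
  obtain ⟨M, hMS, hM, hmax⟩ := exists_maximum_matching ends S
  have hcard : M.card + 1 ≤ k := by
    by_contra! hlt
    obtain ⟨N, hNM, hN⟩ := Finset.exists_subset_card_eq (show k ≤ M.card by omega)
    refine hpack ⟨N, hN, fun e he f hf hef => ?_⟩
    have hdisj : ¬ ∃ x, x ∈ ends e ∧ x ∈ ends f := fun ⟨x, hxe, hxf⟩ =>
      hM e (hNM he) f (hNM hf) hef x hxe hxf
    exact ⟨hdisj, (hS e (hMS (hNM he)) f (hMS (hNM hf)) hef).resolve_left hdisj⟩
  have hdeg : ∀ v, (S.filter (v ∈ ends ·)).card ≤ Δ := by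
    intro v
    refine le_trans ?_ (hΔ v)
    rw [← Set.ncard_coe_finset]
    exact Set.ncard_le_ncard (fun e he => (Finset.mem_filter.1 he).2) (Set.toFinite _)
  have hmain : (2 : ℝ) * S.card ≤ 3 * (M.card * Δ) := by
    exact_mod_cast two_mul_card_le_of_maximum hloop hdeg hMS hM hmax
  have hcard' : (M.card : ℝ) ≤ k - 1 := by
    have : (M.card : ℝ) + 1 ≤ k := by exact_mod_cast hcard
    linarith
  have := mul_le_mul_of_nonneg_right hcard' (Nat.cast_nonneg (α := ℝ) Δ)
  linarith
end

section
/- Let k ≥ 1. For any finite simple graph G of maximum degree Δ that does not contain k pairwise vertex-disjoint edges every two of which are joined by an edge of G, the strong clique number of G satisfies ω₂'(G) ≤ (k−1)Δ + ⌊(k−1)/⌈Δ/2⌉⌋ · ⌊Δ/2⌋. -/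
/-!
A matching inside a strong clique `S` consists of pairwise disjoint edges every two of which are
joined by an edge, so the hypothesis on `G` says that the graph with edge set `S` has matching
number at most `μ = k - 1`; its maximum degree is at most `Δ`. The bound is then the
Chvátal–Hanson theorem for that graph, proved here from the Tutte–Berge formula.

*Tutte–Berge* (`StrongClique.tutte_berge`). If `n = |V| ≥ 2μ + 2`, add `d = n - 2μ - 2` vertices
adjacent to everything. A perfect matching of the new graph would contain `μ + 1` edges of the
old one, so Tutte's theorem yields a violating set. It contains every new vertex, and
deleting its trace `U` from `V` leaves components `C` with `|U| + ∑ ⌊|C| / 2⌋ ≤ μ`.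
If `n ≤ 2μ + 1`, take `U = ∅` and a single class.

*Chvátal–Hanson* (`StrongClique.chvatal_hanson`). Put
`f(m) = mΔ + ⌊m / ⌈Δ/2⌉⌋ ⌊Δ/2⌋`. At most `|U| Δ ≤ f(|U|)` edges meet `U`. A class with `n`
vertices spans at most `n · min(Δ, n - 1) / 2 ≤ f(⌊n/2⌋)` edges. As `f` is monotone and
superadditive, the total is at most `f(μ)`.
-/

/-- A strong clique of `G`: a set of edges of `G` every two of which are incident or
joined by an edge of `G`. -/
def IsStrongCliqueSet {α : Type} (G : SimpleGraph α) (S : Set (Sym2 α)) : Prop :=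
  S ⊆ G.edgeSet ∧
    ∀ e ∈ S, ∀ f ∈ S, e ≠ f →
      (∃ x, x ∈ e ∧ x ∈ f) ∨ ∃ x y, x ∈ e ∧ y ∈ f ∧ G.Adj x y

namespace StrongClique

open Finset

/-- The Chvátal–Hanson bound as a function of the matching number `m`. -/
def bound (Δ m : ℕ) : ℕ := m * Δ + (m / ((Δ + 1) / 2)) * (Δ / 2)

lemma bound_mono (Δ : ℕ) {a b : ℕ} (h : a ≤ b) : bound Δ a ≤ bound Δ b := by
  unfold bound
  gcongr

lemma bound_add_le (Δ a b : ℕ) : bound Δ a + bound Δ b ≤ bound Δ (a + b) := by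
  unfold bound
  have h : a / ((Δ + 1) / 2) + b / ((Δ + 1) / 2) ≤ (a + b) / ((Δ + 1) / 2) :=
    Nat.div_add_div_le_add_div
  have := Nat.mul_le_mul_right (Δ / 2) h
  nlinarith

lemma sum_bound_le (Δ : ℕ) {ι : Type*} (s : Finset ι) (g : ι → ℕ) :
    ∑ i ∈ s, bound Δ (g i) ≤ bound Δ (∑ i ∈ s, g i) := by
  classical
  induction s using Finset.induction_on with
  | empty => simp
  | insert a s ha ih =>
    rw [sum_insert ha, sum_insert ha]
    exact (Nat.add_le_add_left ih _).trans (bound_add_le _ _ _)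

/-- The bound for a single class of `n` vertices spanning `E` edges. -/
lemma le_bound_half {Δ n E : ℕ} (h1 : 2 * E ≤ n * Δ) (h2 : 2 * E ≤ n * (n - 1)) :
    E ≤ bound Δ (n / 2) := by
  unfold bound
  rcases Nat.eq_zero_or_pos Δ with rfl | hΔ
  · omega
  obtain ⟨m, hm⟩ : ∃ m, m = n / 2 := ⟨_, rfl⟩
  rw [← hm]
  by_cases hlt : m < (Δ + 1) / 2
  · -- here `n ≤ Δ`, and the bound `n (n - 1) / 2` is the smaller one
    have hle : E ≤ m * Δ := by
      rcases Nat.even_or_odd' n with ⟨t, rfl | rfl⟩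
      · obtain rfl : m = t := by omega
        have : 2 * m * (2 * m - 1) ≤ 2 * m * Δ := Nat.mul_le_mul_left _ (by omega)
        nlinarith
      · obtain rfl : m = t := by omega
        have : (2 * m + 1) * (2 * m + 1 - 1) ≤ Δ * (2 * m) :=
          Nat.mul_le_mul (by omega) (by omega)
        nlinarith
    omega
  · have hq : 1 ≤ m / ((Δ + 1) / 2) := by
      rw [Nat.le_div_iff_mul_le (by omega)]
      omega
    have h3 : n * Δ ≤ (2 * m + 1) * Δ := Nat.mul_le_mul_right _ (by omega)
    have h4 : Δ / 2 ≤ m / ((Δ + 1) / 2) * (Δ / 2) := Nat.le_mul_of_pos_left _ hq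
    have h5 : (2 * m + 1) * Δ = 2 * (m * Δ) + Δ := by ring
    omega

section Counting

variable {V : Type} [DecidableEq V]

/-- Double counting of incidences for the edges inside a vertex set `A`. -/
lemma two_mul_card_inside_le (S : Finset (Sym2 V)) (hdiag : ∀ e ∈ S, ¬ e.IsDiag)
    (A : Finset V) (hA : ∀ e ∈ S, ∀ x ∈ e, x ∈ A) (D : ℕ)
    (hdeg : ∀ a ∈ A, (S.filter (a ∈ ·)).card ≤ D) : 2 * S.card ≤ A.card * D := by
  have h := sum_card_bipartiteAbove_eq_sum_card_bipartiteBelow (s := A) (t := S)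
    (fun (a : V) (e : Sym2 V) => a ∈ e)
  have h1 : ∑ a ∈ A, (bipartiteAbove (fun (a : V) (e : Sym2 V) => a ∈ e) S a).card
      ≤ A.card * D := by
    rw [← smul_eq_mul]
    exact sum_le_card_nsmul _ _ _ hdeg
  have h2 : ∀ e ∈ S, (bipartiteBelow (fun (a : V) (e : Sym2 V) => a ∈ e) A e).card = 2 := by
    intro e he
    rw [← Sym2.card_toFinset_of_not_isDiag e (hdiag e he)]
    congr 1
    ext x
    simp only [mem_bipartiteBelow, Sym2.mem_toFinset]
    exact ⟨fun h => h.2, fun h => ⟨hA e he x h, h⟩⟩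
  rw [sum_congr rfl h2, sum_const, smul_eq_mul] at h
  omega

lemma card_inside_le_bound (S : Finset (Sym2 V)) (hdiag : ∀ e ∈ S, ¬ e.IsDiag)
    (A : Finset V) (hA : ∀ e ∈ S, ∀ x ∈ e, x ∈ A) (Δ : ℕ)
    (hdeg : ∀ a, (S.filter (a ∈ ·)).card ≤ Δ) : S.card ≤ bound Δ (A.card / 2) := by
  refine le_bound_half (two_mul_card_inside_le S hdiag A hA Δ fun a _ => hdeg a)
    (two_mul_card_inside_le S hdiag A hA _ fun a ha => ?_)
  rw [← card_erase_of_mem ha]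
  refine (card_le_card ?_).trans (card_image_le (f := fun b => s(a, b)))
  intro e he
  obtain ⟨heS, hae⟩ := mem_filter.1 he
  obtain ⟨b, rfl⟩ := hae
  refine mem_image.2 ⟨b, mem_erase.2 ⟨?_, hA _ heS b (by simp)⟩, rfl⟩
  rintro rfl
  exact hdiag _ heS (by simp)

/-- The Chvátal–Hanson bound, given a set `U` and a colouring `c` of the remaining vertices
constant on components, with the Tutte–Berge inequality `|U| + ∑ ⌊nᵢ / 2⌋ ≤ μ` for the sizes `nᵢ`
of the colour classes. -/
lemma chvatal_hanson [Fintype V] (S : Finset (Sym2 V)) (hdiag : ∀ e ∈ S, ¬ e.IsDiag) (Δ μ : ℕ)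
    (hdeg : ∀ a, (S.filter (a ∈ ·)).card ≤ Δ)
    (U : Finset V) {ι : Type} [Fintype ι] [DecidableEq ι] (c : V → ι)
    (hc : ∀ a b, s(a, b) ∈ S → a ∉ U → b ∉ U → c a = c b)
    (hμ : U.card + ∑ i, (univ.filter fun v => v ∉ U ∧ c v = i).card / 2 ≤ μ) :
    S.card ≤ bound Δ μ := by
  set A : ι → Finset V := fun i => univ.filter fun v => v ∉ U ∧ c v = i with hAdef
  set T : ι → Finset (Sym2 V) := fun i => S.filter fun e => ∀ x ∈ e, x ∈ A i with hTdef
  have hcover : S ⊆ (U.biUnion fun u => S.filter (u ∈ ·)) ∪ univ.biUnion T := by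
    intro e he
    induction e with
    | _ a b =>
      by_cases ha : a ∈ U
      · exact mem_union_left _ (mem_biUnion.2 ⟨a, ha, by simp [he]⟩)
      by_cases hb : b ∈ U
      · exact mem_union_left _ (mem_biUnion.2 ⟨b, hb, by simp [he]⟩)
      refine mem_union_right _ (mem_biUnion.2 ⟨c a, mem_univ _, ?_⟩)
      have := hc a b he ha hb
      simp [hTdef, hAdef, he, ha, hb, this]
  have hU : (U.biUnion fun u => S.filter (u ∈ ·)).card ≤ bound Δ U.card :=
    (card_biUnion_le_card_mul _ _ Δ fun u _ => hdeg u).trans (Nat.le_add_right _ _)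
  have hT : (univ.biUnion T).card ≤ bound Δ (∑ i, (A i).card / 2) := by
    refine card_biUnion_le.trans (le_trans (sum_le_sum fun i _ => ?_) (sum_bound_le Δ univ _))
    refine card_inside_le_bound (T i) (fun e he => hdiag e (mem_filter.1 he).1) (A i)
      (fun e he => (mem_filter.1 he).2) Δ fun a => (card_le_card ?_).trans (hdeg a)
    exact filter_subset_filter _ (filter_subset _ _)
  calc S.card ≤ _ := card_le_card hcover
    _ ≤ _ := card_union_le _ _
    _ ≤ _ := Nat.add_le_add hU hT
    _ ≤ _ := bound_add_le _ _ _
    _ ≤ _ := bound_mono Δ hμ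

end Counting

/-- Tutte's theorem phrased with a colouring by components: the sum on the right
counts the odd colour classes outside `U`. -/
lemma exists_violator {W : Type} [Fintype W] [DecidableEq W] (H : SimpleGraph W)
    (hH : ∀ M : H.Subgraph, ¬ M.IsPerfectMatching) :
    ∃ (U : Finset W) (ι : Type) (_ : Fintype ι) (_ : DecidableEq ι) (c : W → ι),
      (∀ a b, H.Adj a b → a ∉ U → b ∉ U → c a = c b) ∧
      U.card < ∑ i, (univ.filter fun v => v ∉ U ∧ c v = i).card % 2 := by
  classical
  obtain ⟨u, hu⟩ : ∃ u, H.IsTutteViolator u := by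
    by_contra! h
    obtain ⟨M, hM⟩ := SimpleGraph.tutte.2 h
    exact hH M hM
  set K := ((⊤ : H.Subgraph).deleteVerts u) with hK
  have hmem : ∀ w, w ∈ K.verts ↔ w ∉ u := by simp [hK]
  -- vertices of `u` receive the dummy colour `none`
  let c : W → Option K.coe.ConnectedComponent := fun w =>
    if h : w ∈ K.verts then some (K.coe.connectedComponentMk ⟨w, h⟩) else none
  refine ⟨u.toFinset, Option K.coe.ConnectedComponent, Fintype.ofFinite _, inferInstance, c,
    ?_, ?_⟩
  · intro a b hab ha hb
    have ha' : a ∈ K.verts := (hmem a).2 (by simpa using ha)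
    have hb' : b ∈ K.verts := (hmem b).2 (by simpa using hb)
    simp only [c, ha', hb', dif_pos]
    congr 1
    apply SimpleGraph.ConnectedComponent.connectedComponentMk_eq_of_adj
    rw [SimpleGraph.Subgraph.coe_adj]
    exact SimpleGraph.Subgraph.deleteVerts_adj.2 ⟨trivial, (hmem a).1 ha', trivial, (hmem b).1 hb', hab⟩
  · unfold SimpleGraph.IsTutteViolator at hu
    rw [Set.ncard_eq_toFinset_card' u] at hu
    refine hu.trans_le ?_
    let _ : Fintype K.coe.ConnectedComponent := Fintype.ofFinite _
    have key : ∀ x : K.coe.ConnectedComponent,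
        (univ.filter fun v => v ∉ u.toFinset ∧ c v = some x).card = x.supp.ncard := by
      intro x
      have himg : ((univ.filter fun v => v ∉ u.toFinset ∧ c v = some x : Finset W) : Set W)
          = Subtype.val '' x.supp := by
        ext w
        simp only [coe_filter, mem_univ, true_and, Set.mem_toFinset, Set.mem_ofPred_eq,
          Set.mem_image, SimpleGraph.ConnectedComponent.mem_supp_iff, c]
        constructor
        · rintro ⟨hw, h⟩
          have hw' := (hmem w).2 hw
          rw [dif_pos hw'] at h
          exact ⟨⟨w, hw'⟩, Option.some.inj h, rfl⟩
        · rintro ⟨⟨w', hw'⟩, h, rfl⟩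
          refine ⟨(hmem _).1 hw', ?_⟩
          rw [dif_pos hw', h]
      rw [← Set.ncard_coe_finset, himg, Set.ncard_image_of_injective _ Subtype.val_injective]
    calc K.coe.oddComponents.ncard
        = (univ.filter fun x : K.coe.ConnectedComponent => Odd x.supp.ncard).card := by
          rw [← Set.ncard_coe_finset]
          congr 1
          ext x
          simp
      _ = ∑ x : K.coe.ConnectedComponent, x.supp.ncard % 2 := by
          rw [card_filter]
          refine sum_congr rfl fun x _ => ?_
          split_ifs with h
          · exact (Nat.odd_iff.1 h).symm
          · exact (Nat.not_odd_iff.1 h).symm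
      _ ≤ ∑ i : Option K.coe.ConnectedComponent,
            (univ.filter fun v => v ∉ u.toFinset ∧ c v = i).card % 2 := by
          rw [Fintype.sum_option]
          simp only [key]
          exact Nat.le_add_left _ _
      _ ≤ _ := le_of_eq (by congr!)

/-- The graph with edge set `S` together with `d` new vertices adjacent to everything. -/
def cone {V : Type} (S : Finset (Sym2 V)) (d : ℕ) : SimpleGraph (V ⊕ Fin d) where
  Adj x y := x ≠ y ∧ ∀ a b, x = .inl a → y = .inl b → s(a, b) ∈ S
  symm := ⟨fun _ _ h => ⟨h.1.symm, fun a b ha hb => Sym2.eq_swap ▸ h.2 b a hb ha⟩⟩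
  loopless := ⟨fun _ h => h.1 rfl⟩

/-- A perfect matching of the cone matches all but at most `d` vertices of `V` among themselves. -/
lemma exists_matching_of_cone {V : Type} [Fintype V] [DecidableEq V] (S : Finset (Sym2 V))
    (d : ℕ) (M : (cone S d).Subgraph) (hM : M.IsPerfectMatching) :
    ∃ T ⊆ S, (∀ e ∈ T, ∀ f ∈ T, e ≠ f → ¬ ∃ x, x ∈ e ∧ x ∈ f) ∧
      Fintype.card V ≤ 2 * T.card + d := by
  classical
  rw [SimpleGraph.Subgraph.isPerfectMatching_iff] at hM
  choose p hp hpu using hM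
  set A : Finset V := univ.filter fun a => (p (.inl a)).isLeft with hA
  set T : Finset (Sym2 V) := S.filter fun e => ∀ x ∈ e, ∀ y, s(x, y) = e →
    p (.inl x) = .inl y with hT
  have hin : ∀ {e : Sym2 V} {x : V}, e ∈ T → x ∈ e → ∃ y, e = s(x, y) ∧ p (.inl x) = .inl y := by
    rintro e x he ⟨y, rfl⟩
    exact ⟨y, rfl, (mem_filter.1 he).2 x (by simp) y rfl⟩
  refine ⟨T, filter_subset _ _, ?_, ?_⟩
  · rintro e he f hf hne ⟨x, hxe, hxf⟩
    obtain ⟨y, rfl, hy⟩ := hin he hxe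
    obtain ⟨z, rfl, hz⟩ := hin hf hxf
    rw [hy] at hz
    exact hne (by rw [Sum.inl.inj hz])
  · have hA1 : A.card ≤ 2 * T.card := by
      -- `q` sends a vertex of `A` to its matching edge
      let q : V → Sym2 V := fun a => (p (.inl a)).elim (fun b => s(a, b)) (fun _ => s(a, a))
      refine card_le_mul_card_image_of_maps_to (f := q) (fun a ha => ?_) 2 fun e _ => ?_
      · obtain ⟨b, hb⟩ := Sum.isLeft_iff.1 (mem_filter.1 ha).2
        have hadj := hp (.inl a)
        rw [hb] at hadj
        have hba : p (.inl b) = .inl a := (hpu _ _ hadj.symm).symm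
        have hq : q a = s(a, b) := by simp [q, hb]
        rw [hq]
        refine mem_filter.2 ⟨(M.adj_sub hadj).2 a b rfl rfl, ?_⟩
        intro x hx y hxy
        rcases Sym2.eq_iff.1 hxy with ⟨rfl, rfl⟩ | ⟨rfl, rfl⟩
        · exact hb
        · exact hba
      · have hsub : (A.filter fun a => q a = e) ⊆ e.toFinset := by
          intro a ha
          rw [Sym2.mem_toFinset, ← (mem_filter.1 ha).2]
          cases h : p (.inl a) <;> simp [q, h]
        refine (card_le_card hsub).trans ?_
        rw [Sym2.card_toFinset]
        split_ifs <;> omega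
    have hA2 : (univ.filter fun a : V => ¬ (p (.inl a)).isLeft).card ≤ d := by
      have : (univ.filter fun a : V => ¬ (p (.inl a)).isLeft).card
          ≤ ((univ : Finset (Fin d)).image (fun j => (Sum.inr j : V ⊕ Fin d))).card := by
        refine card_le_card_of_injOn (fun a => p (.inl a)) (fun a ha => ?_) ?_
        · have ha' := (mem_filter.1 ha).2
          simp only [Bool.not_eq_true, Sum.isLeft_eq_false] at ha'
          obtain ⟨j, hj⟩ := Sum.isRight_iff.1 ha'
          simp [hj]
        · intro a _ b _ hab
          have h1 := (hp (.inl a)).symm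
          have h2 := (hp (.inl b)).symm
          dsimp only at hab
          rw [hab] at h1
          exact Sum.inl.inj ((hpu _ _ h1).trans (hpu _ _ h2).symm)
      exact this.trans (card_image_le.trans (by simp))
    have := card_filter_add_card_filter_not (s := (univ : Finset V))
      (fun a => ((p (.inl a)).isLeft : Prop))
    rw [card_univ] at this
    change A.card + _ = _ at this
    omega

/-- The nontrivial direction of the Tutte–Berge formula, for the graph with edge set `S`. -/
lemma tutte_berge {V : Type} [Fintype V] [DecidableEq V] (S : Finset (Sym2 V)) (μ : ℕ)
    (hmatch : ∀ T ⊆ S, (∀ e ∈ T, ∀ f ∈ T, e ≠ f → ¬ ∃ x, x ∈ e ∧ x ∈ f) → T.card ≤ μ)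
    (hdiag : ∀ e ∈ S, ¬ e.IsDiag) :
    ∃ (U : Finset V) (ι : Type) (_ : Fintype ι) (_ : DecidableEq ι) (c : V → ι),
      (∀ a b, s(a, b) ∈ S → a ∉ U → b ∉ U → c a = c b) ∧
      U.card + ∑ i, (univ.filter fun v => v ∉ U ∧ c v = i).card / 2 ≤ μ := by
  classical
  by_cases hn : Fintype.card V ≤ 2 * μ + 1
  · refine ⟨∅, Unit, inferInstance, inferInstance, fun _ => (), by simp, ?_⟩
    simp
    omega
  obtain ⟨d, hd⟩ : ∃ d, Fintype.card V = 2 * μ + 2 + d := ⟨Fintype.card V - (2 * μ + 2), by omega⟩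
  obtain ⟨U', ι, _, _, c, hc, hodd⟩ := exists_violator (cone S d) fun M hM => by
    obtain ⟨T, hTS, hdis, hcard⟩ := exists_matching_of_cone S d M hM
    have := hmatch T hTS hdis
    omega
  set N : ι → ℕ := fun i => (univ.filter fun v => v ∉ U' ∧ c v = i).card with hN
  have hsum : U'.card + ∑ i, N i = Fintype.card V + d := by
    have h1 : ∑ i, N i = (univ.filter fun v => v ∉ U').card := by
      rw [card_eq_sum_card_fiberwise (f := c) (t := univ) (fun _ _ => mem_coe.2 (mem_univ _))]
      simp only [hN, filter_filter]
    have h2 := card_filter_add_card_filter_not (s := (univ : Finset (V ⊕ Fin d))) (· ∈ U')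
    rw [← h1, filter_univ_mem, card_univ, Fintype.card_sum, Fintype.card_fin] at h2
    exact h2
  have hsplit : ∑ i, N i = 2 * ∑ i, N i / 2 + ∑ i, N i % 2 := by
    rw [mul_sum, ← sum_add_distrib]
    exact sum_congr rfl fun i _ => (Nat.div_add_mod _ _).symm
  -- a new vertex outside `U'` would leave a single class, contradicting parity
  have hnew : ∀ j : Fin d, Sum.inr j ∈ U' := by
    intro j
    by_contra hj
    have hcol : ∀ w, w ∉ U' → c w = c (.inr j) := by
      intro w hw
      by_cases hwj : w = .inr j
      · rw [hwj]
      · exact hc _ _ ⟨hwj, fun _ _ _ h => by simp at h⟩ hw hj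
    have hzero : ∀ i, i ≠ c (.inr j) → N i % 2 = 0 := by
      intro i hi
      have : N i = 0 := by
        rw [hN, card_eq_zero, filter_eq_empty_iff]
        rintro w _ ⟨hw, rfl⟩
        exact hi (hcol w hw)
      simp [this]
    have hone : ∑ i, N i % 2 = N (c (.inr j)) % 2 :=
      sum_eq_single _ (fun i _ hi => hzero i hi) (fun h => absurd (mem_univ _) h)
    have := Nat.mod_lt (N (c (.inr j))) (show 2 > 0 by norm_num)
    change U'.card < ∑ i, N i % 2 at hodd
    omega
  set U : Finset V := univ.filter fun v => Sum.inl v ∈ U' with hU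
  have hUcard : U.card + d ≤ U'.card := by
    have hsub : U.disjSum (univ : Finset (Fin d)) ⊆ U' := by
      intro w hw
      rcases w with v | j
      · simpa [hU] using hw
      · exact hnew j
    simpa using card_le_card hsub
  refine ⟨U, ι, inferInstance, inferInstance, fun v => c (.inl v), ?_, ?_⟩
  · intro a b hab ha hb
    refine hc _ _ ⟨?_, ?_⟩ (by simpa [hU] using ha) (by simpa [hU] using hb)
    · intro h
      rw [Sum.inl.inj h] at hab
      exact hdiag _ hab (by simp)
    · intro a' b' h1 h2
      rw [← Sum.inl.inj h1, ← Sum.inl.inj h2]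
      exact hab
  · have hle : ∑ i, (univ.filter fun v => v ∉ U ∧ c (.inl v) = i).card / 2
        ≤ ∑ i, N i / 2 := by
      refine sum_le_sum fun i _ => Nat.div_le_div_right ?_
      refine card_le_card_of_injOn Sum.inl (fun v hv => ?_) Sum.inl_injective.injOn
      simpa [hU] using hv
    change U'.card < ∑ i, N i % 2 at hodd
    change U.card + ∑ i, (univ.filter fun v => v ∉ U ∧ c (.inl v) = i).card / 2 ≤ μ
    -- parity improves the strict inequality `hodd` to a gap of two
    omega

end StrongClique

/-- Let `k ≥ 1`.  Any finite simple graph of maximum degree `Δ` that does not contain `k`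
pairwise vertex-disjoint edges every two of which are joined by an edge has strong clique
number at most `(k-1)Δ + ⌊(k-1)/⌈Δ/2⌉⌋·⌊Δ/2⌋`  (here `⌈Δ/2⌉ = (Δ+1)/2` and
`⌊Δ/2⌋ = Δ/2` in natural-number arithmetic). -/
theorem stmt_13 (k : ℕ) (hk : 1 ≤ k) {V : Type} [Fintype V] (G : SimpleGraph V)
    (Δ : ℕ) (hΔ : ∀ v : V, (G.neighborSet v).ncard ≤ Δ)
    (hpack : ¬ ∃ M : Finset (Sym2 V), (M : Set (Sym2 V)) ⊆ G.edgeSet ∧ M.card = k ∧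
      ∀ e ∈ M, ∀ f ∈ M, e ≠ f →
        (¬ ∃ x, x ∈ e ∧ x ∈ f) ∧ ∃ x y, x ∈ e ∧ y ∈ f ∧ G.Adj x y)
    (S : Finset (Sym2 V)) (hS : IsStrongCliqueSet G (S : Set (Sym2 V))) :
    S.card ≤ (k - 1) * Δ + ((k - 1) / ((Δ + 1) / 2)) * (Δ / 2) := by
  classical
  obtain ⟨hSG, hSC⟩ := hS
  have hdiag : ∀ e ∈ S, ¬ e.IsDiag := fun e he => G.not_isDiag_of_mem_edgeSet (hSG he)
  have hdeg : ∀ a, (S.filter (a ∈ ·)).card ≤ Δ := by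
    intro a
    refine le_trans ?_ (hΔ a)
    rw [Set.ncard_eq_toFinset_card']
    refine (Finset.card_le_card ?_).trans (Finset.card_image_le (f := fun b => s(a, b)))
    intro e he
    obtain ⟨heS, b, rfl⟩ := Finset.mem_filter.1 he
    exact Finset.mem_image.2 ⟨b, by simpa using hSG heS, rfl⟩
  have hmatch : ∀ T ⊆ S, (∀ e ∈ T, ∀ f ∈ T, e ≠ f → ¬ ∃ x, x ∈ e ∧ x ∈ f) →
      T.card ≤ k - 1 := by
    intro T hTS hdis
    by_contra! hlt
    obtain ⟨M, hMT, hMk⟩ := Finset.exists_subset_card_eq (show k ≤ T.card by omega)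
    refine hpack ⟨M, fun e he => hSG (hTS (hMT he)), hMk, fun e he f hf hne => ?_⟩
    have hd := hdis e (hMT he) f (hMT hf) hne
    exact ⟨hd, (hSC e (hTS (hMT he)) f (hTS (hMT hf)) hne).resolve_left hd⟩
  obtain ⟨U, ι, _, _, c, hc, hμ⟩ := StrongClique.tutte_berge S (k - 1) hmatch hdiag
  exact StrongClique.chvatal_hanson S hdiag Δ (k - 1) hdeg U c hc hμ
end

section
/- Let G = (V,E) be a finite simple graph and let w : E → ℝ be a nonnegative weight function on its edges. For a weight function u on E, write Δ(u) for the maximum over vertices v of the sum of u over the edges incident to v, and write supp u for the set of edges on which u is nonzero. Then there exist nonnegative weight functions w₁, …, w_p on E such that: (i) w₁ + ⋯ + w_p = w; (ii) Δ(w₁) + ⋯ + Δ(w_p) = Δ(w); and for every i ∈ {1, …, p}: (iii) the support of w_i is a vertex-disjoint union of odd cycles and single edges of G; and (iv) for every edge e in the support of w_i, w_i(e) = Δ(w_i)/2 if e lies on one of the odd cycles of supp w_i, and w_i(e) = Δ(w_i) if e is one of the isolated single edges of supp w_i. -/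
/-!
The proof goes through the Birkhoff–von Neumann theorem. Put `D = Δ(w)`. The symmetric matrix with
off-diagonal entries `w(uv)/D` and with the slack `1 - deg(v)/D` on the diagonal is doubly
stochastic, hence a convex combination `∑ λ_σ P_σ` of permutation matrices. Symmetrising,
`w = D ∑ λ_σ x_σ`, where `x_σ` (`permWeight σ`) is the off-diagonal part of `(P_σ + P_σᵀ)/2`: it
puts weight `1` on the transpositions of `σ` and weight `1/2` on the edges of its longer cycles.

A cycle of even length has a proper 2-colouring (`exists_color`), which splits it into its two
perfect matchings. Thus `x_σ` is the average of `x_τ` and `x_τ'` for permutations `τ, τ'` all of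
whose cycles have odd length or length 2 (`exists_split`). For such `τ` the support of `x_τ` is a
vertex-disjoint union of odd cycles and single edges with the right values, and each vertex has
degree `0` or `1` under `x_τ`. The total of the maximum degrees is therefore at most
`D ∑ λ_σ = D`, and it is at least `D` because `Δ` is subadditive.
-/

/-- The weighted degree of `v` under the edge-weight `w`: the sum of `w` over the edges
incident to `v`. -/
noncomputable def wDeg {V : Type} [Fintype V] [DecidableEq V] (w : Sym2 V → ℝ) (v : V) : ℝ :=
  ∑ e : Sym2 V, if v ∈ e then w e else 0

/-- The maximum weighted degree `Δ(w)` of an edge-weight `w`. -/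
noncomputable def wMaxDeg {V : Type} [Fintype V] [DecidableEq V] (w : Sym2 V → ℝ) : ℝ :=
  ⨆ v, wDeg w v

/-- `C` is the edge set of a cycle of odd length (at least 3). -/
def IsOddCycleEdgeSet {V : Type} (C : Set (Sym2 V)) : Prop :=
  ∃ n : ℕ, 3 ≤ n ∧ Odd n ∧ ∃ f : ZMod n → V, Function.Injective f ∧
    C = Set.range fun i : ZMod n => s(f i, f (i + 1))

open Equiv Function

set_option linter.unusedSectionVars false

section
variable {V : Type} [Fintype V] [DecidableEq V]

/-! ### Weighted degrees -/

lemma wDeg_eq (w : Sym2 V → ℝ) (v : V) : wDeg w v = ∑ u, w s(v, u) := by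
  unfold wDeg
  rw [← Finset.sum_filter]
  symm
  refine Finset.sum_bij (fun u _ => s(v, u)) ?_ ?_ ?_ ?_
  · intro u _; simp
  · intro a _ b _ h; exact Sym2.congr_right.1 h
  · intro e he
    obtain ⟨u, rfl⟩ := Sym2.mem_iff_exists.1 (Finset.mem_filter.1 he).2
    exact ⟨u, Finset.mem_univ _, rfl⟩
  · intro u _; rfl

lemma wDeg_le_wMaxDeg (w : Sym2 V → ℝ) (v : V) : wDeg w v ≤ wMaxDeg w :=
  le_ciSup (Set.finite_range _).bddAbove v

/-! ### The edge weight of a permutation -/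

/-- The off-diagonal part of `(P_σ + P_σᵀ)/2`, viewed as an edge weight: `1` on transpositions of
`σ`, `1/2` on the edges `v, σ v` of longer cycles, and `0` elsewhere. -/
noncomputable def permWeight (σ : Perm V) : Sym2 V → ℝ :=
  Sym2.lift ⟨fun u v => if u = v then 0 else
    ((if σ u = v then 1 else 0) + (if σ v = u then 1 else 0)) / 2, by
    intro u v
    by_cases h : u = v
    · simp [h]
    · simp only [h, Ne.symm h, if_false]; ring⟩

lemma permWeight_mk (σ : Perm V) (u v : V) : permWeight σ s(u, v) = if u = v then 0 else
    ((if σ u = v then 1 else 0) + (if σ v = u then 1 else 0)) / 2 := rfl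

lemma permWeight_nonneg (σ : Perm V) (e : Sym2 V) : 0 ≤ permWeight σ e := by
  induction e with
  | _ u v =>
    rw [permWeight_mk]
    split_ifs <;> norm_num

lemma wDeg_permWeight (σ : Perm V) (v : V) :
    wDeg (permWeight σ) v = if σ v = v then 0 else 1 := by
  rw [wDeg_eq]
  simp only [permWeight_mk]
  have h : ∀ u, (if v = u then (0:ℝ) else
      ((if σ v = u then 1 else 0) + (if σ u = v then 1 else 0)) / 2)
      = ((if σ v = u then 1 else 0) + (if u = σ⁻¹ v then 1 else 0)) / 2
        - (if v = u then (if σ v = v then 1 else 0) else 0) := by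
    intro u
    have h1 : (u = σ⁻¹ v) ↔ σ u = v := by rw [Perm.eq_inv_iff_eq]
    simp only [h1]
    by_cases huv : v = u
    · subst huv; by_cases h : σ v = v <;> simp [h]
    · simp [huv]
  rw [Finset.sum_congr rfl fun u _ => h u, Finset.sum_sub_distrib, ← Finset.sum_div,
    Finset.sum_add_distrib]
  simp only [Finset.sum_ite_eq, Finset.sum_ite_eq', Finset.mem_univ, if_true]
  split_ifs <;> norm_num

lemma wDeg_smul (c : ℝ) (w : Sym2 V → ℝ) (v : V) : wDeg (fun e => c * w e) v = c * wDeg w v := by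
  simp only [wDeg_eq, Finset.mul_sum]

lemma wMaxDeg_permWeight_le [Nonempty V] {c : ℝ} (hc : 0 ≤ c) (σ : Perm V) :
    wMaxDeg (fun e => c * permWeight σ e) ≤ c := by
  refine ciSup_le fun v => ?_
  rw [wDeg_smul, wDeg_permWeight]
  split_ifs <;> simp [hc]

lemma wMaxDeg_permWeight [Nonempty V] {c : ℝ} (hc : 0 ≤ c) (σ : Perm V) {v : V} (hv : σ v ≠ v) :
    wMaxDeg (fun e => c * permWeight σ e) = c := by
  refine le_antisymm (wMaxDeg_permWeight_le hc σ) ?_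
  have := wDeg_le_wMaxDeg (fun e => c * permWeight σ e) v
  rwa [wDeg_smul, wDeg_permWeight, if_neg hv, mul_one] at this

/-! ### Splitting even cycles -/

/-- `v` lies on a cycle of `σ` of odd length, expressed as: some odd power of `σ` fixes `v`. -/
def OddAt (σ : Perm V) (v : V) : Prop := ∃ k : ℤ, Odd k ∧ (σ ^ k) v = v

lemma oddAt_zpow (σ : Perm V) (v : V) (i : ℤ) : OddAt σ ((σ ^ i) v) ↔ OddAt σ v := by
  constructor
  · rintro ⟨k, hk, h⟩
    refine ⟨k, hk, (σ ^ i).injective ?_⟩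
    rw [← Perm.mul_apply, ← zpow_add, add_comm, zpow_add, Perm.mul_apply, h]
  · rintro ⟨k, hk, h⟩
    refine ⟨k, hk, ?_⟩
    rw [← Perm.mul_apply, ← zpow_add, add_comm, zpow_add, Perm.mul_apply, h]

lemma oddAt_apply (σ : Perm V) (v : V) : OddAt σ (σ v) ↔ OddAt σ v := by
  simpa using oddAt_zpow σ v 1

lemma oddAt_inv_apply (σ : Perm V) (v : V) : OddAt σ (σ.symm v) ↔ OddAt σ v := by
  simpa [zpow_neg, zpow_one] using oddAt_zpow σ v (-1)

/-- The even cycles of a permutation can be properly 2-coloured: colour a vertex by the parity of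
its distance from a chosen representative of its cycle. -/
lemma exists_color (σ : Perm V) : ∃ c : V → Prop, ∀ v, ¬ OddAt σ v → (c (σ v) ↔ ¬ c v) := by
  let r : V → V := fun v => (Quotient.mk (Perm.SameCycle.setoid σ) v).out
  have hr : ∀ v, ∃ i : ℤ, (σ ^ i) (r v) = v := fun v =>
    Quotient.exact (Quotient.out_eq (Quotient.mk (Perm.SameCycle.setoid σ) v))
  have hrσ : ∀ v, r (σ v) = r v := by
    intro v
    have : Quotient.mk (Perm.SameCycle.setoid σ) (σ v) = Quotient.mk (Perm.SameCycle.setoid σ) v :=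
      Quotient.sound (Perm.sameCycle_apply_left.2 (Perm.SameCycle.refl σ v))
    simp only [r, this]
  choose d hd using hr
  refine ⟨fun v => Even (d v), fun v hv => ?_⟩
  have h1 := hd (σ v)
  rw [hrσ] at h1
  have h2 : (σ ^ (d v + 1)) (r v) = σ v := by
    rw [add_comm, zpow_add, Perm.mul_apply, hd, zpow_one]
  have h3 : (σ ^ (d v + 1 - d (σ v))) (σ v) = σ v := by
    have : (σ ^ (d v + 1 - d (σ v))) ((σ ^ d (σ v)) (r v)) = σ v := by
      rw [← Perm.mul_apply, ← zpow_add, sub_add_cancel, h2]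
    rwa [h1] at this
  have h4 : ¬ Odd (d v + 1 - d (σ v)) := fun h =>
    hv ((oddAt_apply σ v).1 ⟨_, h, h3⟩)
  rw [Int.not_odd_iff_even] at h4
  simp only [Int.even_sub, Int.even_add_one] at h4
  exact h4.symm

open Classical in
/-- The map replacing each even cycle of `σ` by the perfect matching of those edges `v, σ v` whose
tail `v` has colour `c`. -/
noncomputable def splitFun (σ : Perm V) (c : V → Prop) (v : V) : V :=
  if OddAt σ v then σ v else if c v then σ v else σ.symm v

lemma oddAt_splitFun (σ : Perm V) (c : V → Prop) (v : V) :
    OddAt σ (splitFun σ c v) ↔ OddAt σ v := by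
  unfold splitFun
  split_ifs <;> simp [oddAt_apply, oddAt_inv_apply]

lemma splitFun_splitFun {σ : Perm V} {c : V → Prop}
    (hc : ∀ v, ¬ OddAt σ v → (c (σ v) ↔ ¬ c v)) {v : V} (hv : ¬ OddAt σ v) :
    splitFun σ c (splitFun σ c v) = v := by
  by_cases h : c v
  · have h1 : splitFun σ c v = σ v := by simp [splitFun, hv, h]
    have h2 : ¬ c (σ v) := by rw [hc v hv]; simpa using h
    rw [h1]
    simp [splitFun, oddAt_apply, hv, h2]
  · have h1 : splitFun σ c v = σ.symm v := by simp [splitFun, hv, h]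
    have h2 : c (σ.symm v) := by
      have := hc (σ.symm v) (by rwa [oddAt_inv_apply])
      rw [Equiv.apply_symm_apply] at this
      tauto
    rw [h1]
    simp [splitFun, oddAt_inv_apply, hv, h2]

lemma splitFun_bijective {σ : Perm V} {c : V → Prop}
    (hc : ∀ v, ¬ OddAt σ v → (c (σ v) ↔ ¬ c v)) : Bijective (splitFun σ c) := by
  refine Finite.injective_iff_bijective.1 fun u v h => ?_
  have huv : OddAt σ u ↔ OddAt σ v := by
    rw [← oddAt_splitFun σ c u, h, oddAt_splitFun]
  by_cases hu : OddAt σ u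
  · have hv := huv.1 hu
    simpa [splitFun, hu, hv] using h
  · have hv := fun h => hu (huv.2 h)
    rw [← splitFun_splitFun hc hu, h, splitFun_splitFun hc hv]

/-- Every cycle of `τ` has odd length (possibly 1) or length 2. -/
def GoodPerm (τ : Perm V) : Prop := ∀ v, τ (τ v) = v ∨ ∃ k : ℕ, Odd k ∧ τ^[k] v = v

lemma goodPerm_split {σ : Perm V} {c : V → Prop}
    (hc : ∀ v, ¬ OddAt σ v → (c (σ v) ↔ ¬ c v)) :
    GoodPerm (Equiv.ofBijective _ (splitFun_bijective hc)) := by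
  intro v
  by_cases hv : OddAt σ v
  · right
    have key : ∀ k : ℕ, (splitFun σ c)^[k] v = (σ ^ (k : ℤ)) v := by
      intro k
      induction k with
      | zero => simp
      | succ k ih =>
        rw [iterate_succ_apply', ih, splitFun, if_pos ((oddAt_zpow σ v k).2 hv),
          ← Perm.mul_apply, ← zpow_one_add]
        congr 2
        push_cast; ring
    obtain ⟨k, hk, h⟩ := hv
    refine ⟨k.natAbs, Int.natAbs_odd.2 hk, ?_⟩
    change (splitFun σ c)^[k.natAbs] v = v
    rw [key]
    rcases Int.natAbs_eq k with h' | h'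
    · rw [← h', h]
    · have : (k.natAbs : ℤ) = -k := by omega
      rw [this, zpow_neg, Perm.inv_eq_iff_eq, h]
  · left
    exact splitFun_splitFun hc hv

lemma exists_split (σ : Perm V) : ∃ τ : Bool → Perm V, (∀ b, GoodPerm (τ b)) ∧
    ∀ e, permWeight σ e = (permWeight (τ true) e + permWeight (τ false) e) / 2 := by
  obtain ⟨c, hc⟩ := exists_color σ
  have hc' : ∀ v, ¬ OddAt σ v → ((fun v => ¬ c v) (σ v) ↔ ¬ (fun v => ¬ c v) v) := by
    intro v hv
    have := hc v hv
    simp only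
    tauto
  refine ⟨fun b => if b then Equiv.ofBijective _ (splitFun_bijective hc)
    else Equiv.ofBijective _ (splitFun_bijective (σ := σ) (c := fun v => ¬ c v) hc'), ?_, ?_⟩
  · intro b
    cases b
    · simpa using goodPerm_split hc'
    · simpa using goodPerm_split hc
  intro e
  induction e with
  | _ u v =>
    simp only [permWeight_mk, if_true, Bool.false_eq_true, if_false, Equiv.ofBijective_apply]
    by_cases huv : u = v
    · simp [huv]
    simp only [huv, if_false]
    have hodd : ∀ x y, OddAt σ x →
        (if splitFun σ c x = y then (1:ℝ) else 0)
          + (if splitFun σ (fun v => ¬ c v) x = y then 1 else 0)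
        = 2 * if σ x = y then 1 else 0 := by
      intro x y hx
      simp only [splitFun, hx, if_true]
      ring
    have heven : ∀ x y, ¬ OddAt σ x →
        (if splitFun σ c x = y then (1:ℝ) else 0)
          + (if splitFun σ (fun v => ¬ c v) x = y then 1 else 0)
        = (if σ x = y then 1 else 0) + if σ y = x then 1 else 0 := by
      intro x y hx
      have hxy : σ.symm x = y ↔ σ y = x := by rw [Equiv.symm_apply_eq, eq_comm]
      by_cases h : c x
      · simp [splitFun, hx, h, hxy]
      · simp only [splitFun, hx, h, if_false, not_false_eq_true, if_true, hxy]
        ring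
    have hne : ∀ x y, OddAt σ x → ¬ OddAt σ y → σ x ≠ y ∧ σ y ≠ x := by
      intro x y hx hy
      constructor
      · rintro rfl; exact hy ((oddAt_apply σ x).2 hx)
      · rintro rfl; exact hy ((oddAt_apply σ y).1 hx)
    by_cases hu : OddAt σ u <;> by_cases hv : OddAt σ v
    · linarith [hodd u v hu, hodd v u hv]
    · have h1 := hodd u v hu
      have h2 := heven v u hv
      simp only [hne u v hu hv, if_false] at h1 h2 ⊢
      linarith
    · have h1 := heven u v hu
      have h2 := hodd v u hv
      simp only [hne v u hv hu, if_false] at h1 h2 ⊢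
      linarith
    · linarith [heven u v hu, heven v u hv]

/-! ### The components of the support -/

/-- The edges of the cycle of `τ` through `v`. -/
def cycleEdges (τ : Perm V) (v : V) : Set (Sym2 V) :=
  {e | ∃ u, τ.SameCycle v u ∧ e = s(u, τ u)}

lemma cycleEdges_eq {τ : Perm V} {v u : V} (h : τ.SameCycle v u) :
    cycleEdges τ v = cycleEdges τ u := by
  ext e
  constructor
  · rintro ⟨x, hx, rfl⟩; exact ⟨x, h.symm.trans hx, rfl⟩
  · rintro ⟨x, hx, rfl⟩; exact ⟨x, h.trans hx, rfl⟩

lemma sameCycle_of_mem {τ : Perm V} {v x : V} {e : Sym2 V} (he : e ∈ cycleEdges τ v)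
    (hx : x ∈ e) : τ.SameCycle v x := by
  obtain ⟨u, hu, rfl⟩ := he
  rcases Sym2.mem_iff.1 hx with rfl | rfl
  · exact hu
  · exact Perm.sameCycle_apply_right.2 hu

lemma permWeight_apply (τ : Perm V) {u : V} (hu : τ u ≠ u) :
    permWeight τ s(u, τ u) = if τ (τ u) = u then 1 else 1 / 2 := by
  rw [permWeight_mk, if_neg (Ne.symm hu), if_pos rfl]
  split_ifs <;> norm_num

lemma exists_of_permWeight_ne_zero {τ : Perm V} {e : Sym2 V} (h : permWeight τ e ≠ 0) :
    ∃ u, τ u ≠ u ∧ e = s(u, τ u) := by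
  induction e with
  | _ u v =>
    rw [permWeight_mk] at h
    by_cases huv : u = v
    · simp [huv] at h
    by_cases h1 : τ u = v
    · exact ⟨u, by rw [h1]; exact Ne.symm huv, by rw [h1]⟩
    by_cases h2 : τ v = u
    · exact ⟨v, by rw [h2]; exact huv, by rw [h2, Sym2.eq_swap]⟩
    simp [huv, h1, h2] at h

lemma sameCycle_fix {τ : Perm V} {v u : V} (h : τ.SameCycle v u) (hv : τ v ≠ v) : τ u ≠ u :=
  fun hu => hv (h.apply_eq_self_iff.2 hu)

lemma cycleEdges_singleton {τ : Perm V} {v : V} (h : τ (τ v) = v) :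
    cycleEdges τ v = {s(v, τ v)} := by
  ext e
  constructor
  · rintro ⟨u, ⟨i, rfl⟩, rfl⟩
    have h2 : (τ ^ (2 : ℤ)) v = v := by
      rw [show (2:ℤ) = 1 + 1 by norm_num, zpow_add, zpow_one, Perm.mul_apply, h]
    have h3 : ∀ j : ℤ, (τ ^ (2 * j)) v = v := fun j => by
      rw [zpow_mul]; exact Perm.zpow_apply_eq_self_of_apply_eq_self h2 j
    rcases Int.even_or_odd' i with ⟨j, rfl | rfl⟩
    · rw [h3]; rfl
    · rw [add_comm, zpow_add, Perm.mul_apply, h3, zpow_one, h, Sym2.eq_swap]; rfl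
  · rintro rfl
    exact ⟨v, Perm.SameCycle.refl τ v, rfl⟩

lemma isOddCycle_cycleEdges {τ : Perm V} {v : V} (hv : τ v ≠ v)
    (hodd : ∃ k : ℕ, Odd k ∧ τ^[k] v = v) : IsOddCycleEdgeSet (cycleEdges τ v) := by
  obtain ⟨k, hk, hkv⟩ := hodd
  set n := minimalPeriod τ v with hn
  have hdvd : n ∣ k := IsPeriodicPt.minimalPeriod_dvd hkv
  have hno : Odd n := Odd.of_dvd_nat hk hdvd
  have hn1 : n ≠ 1 := fun h => hv (minimalPeriod_eq_one_iff_isFixedPt.1 (hn ▸ h))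
  have hn3 : 3 ≤ n := by
    obtain ⟨j, hj⟩ := hno
    omega
  have : NeZero n := ⟨by omega⟩
  have hstep : ∀ i : ZMod n, τ^[(i + 1).val] v = τ (τ^[i.val] v) := by
    intro i
    rw [← iterate_succ_apply' (⇑τ)]
    have : (i + 1).val = (i.val + 1) % n := by
      rw [ZMod.val_add, ZMod.val_one'' hn1]
    rw [this]
    exact iterate_mod_minimalPeriod_eq
  refine ⟨n, hn3, hno, fun i => τ^[i.val] v, ?_, ?_⟩
  · intro i j h
    have := (iterate_eq_iterate_iff_of_lt_minimalPeriod (ZMod.val_lt i) (ZMod.val_lt j)).1 h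
    exact ZMod.val_injective n this
  · ext e
    constructor
    · rintro ⟨u, hu, rfl⟩
      obtain ⟨i, hi⟩ := hu.exists_nat_pow_eq
      refine ⟨(i : ZMod n), ?_⟩
      have : τ^[(i : ZMod n).val] v = u := by
        rw [ZMod.val_natCast, ← hi, ← Perm.iterate_eq_pow]
        exact iterate_mod_minimalPeriod_eq
      simp only [hstep, this]
    · rintro ⟨i, rfl⟩
      refine ⟨τ^[i.val] v, ?_, by simp only [hstep]⟩
      exact ⟨i.val, by rw [Perm.iterate_eq_pow, zpow_natCast]⟩

lemma not_isOddCycle_singleton (e : Sym2 V) : ¬ IsOddCycleEdgeSet ({e} : Set (Sym2 V)) := by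
  rintro ⟨n, hn, -, f, hf, h⟩
  have hmem : ∀ i : ZMod n, s(f i, f (i + 1)) = e := fun i => by
    have : s(f i, f (i + 1)) ∈ ({e} : Set (Sym2 V)) := h ▸ ⟨i, rfl⟩
    exact this
  have h01 := (hmem 0).trans (hmem 1).symm
  have : NeZero n := ⟨by omega⟩
  have h1 : (1 : ZMod n) ≠ 0 := by
    intro h
    have := (ZMod.natCast_eq_zero_iff 1 n).1 (by simpa using h)
    have := Nat.le_of_dvd one_pos this
    omega
  have h2 : (1 + 1 : ZMod n) ≠ 0 := by
    intro h
    have := (ZMod.natCast_eq_zero_iff 2 n).1 (by rw [← h]; norm_num)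
    have := Nat.le_of_dvd two_pos this
    omega
  rw [Sym2.eq_iff] at h01
  rcases h01 with ⟨h, -⟩ | ⟨h, -⟩
  · exact h1 (hf h).symm
  · exact h2 (hf h).symm

/-- For `c > 0` the cycles of a good permutation `τ` exhibit `c • permWeight τ` as a weight of the
required shape; for `c = 0` the empty family does. -/
lemma exists_components [Nonempty V] {τ : Perm V} (hτ : GoodPerm τ) {c : ℝ} (hc : 0 ≤ c)
    (G : SimpleGraph V) (hG : ∀ e, c * permWeight τ e ≠ 0 → e ∈ G.edgeSet) :
    ∃ 𝒞 : Set (Set (Sym2 V)),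
        (⋃ C ∈ 𝒞, C) = {e | c * permWeight τ e ≠ 0} ∧
        (∀ C ∈ 𝒞, C ⊆ G.edgeSet) ∧
        (∀ C ∈ 𝒞, IsOddCycleEdgeSet C ∨ ∃ e : Sym2 V, ¬ e.IsDiag ∧ C = {e}) ∧
        (∀ C ∈ 𝒞, ∀ C' ∈ 𝒞, C ≠ C' → ∀ v : V,
          ¬((∃ e ∈ C, v ∈ e) ∧ (∃ e ∈ C', v ∈ e))) ∧
        (∀ e, c * permWeight τ e ≠ 0 →
          ((∃ C ∈ 𝒞, IsOddCycleEdgeSet C ∧ e ∈ C) →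
            c * permWeight τ e = wMaxDeg (fun e => c * permWeight τ e) / 2) ∧
          ((∃ C ∈ 𝒞, C = {e}) →
            c * permWeight τ e = wMaxDeg (fun e => c * permWeight τ e))) := by
  rcases hc.eq_or_lt with rfl | hpos
  · exact ⟨∅, by simp⟩
  have hsub : ∀ v, τ v ≠ v → ∀ e ∈ cycleEdges τ v, c * permWeight τ e ≠ 0 := by
    rintro v hv e ⟨u, hu, rfl⟩
    rw [permWeight_apply τ (sameCycle_fix hu hv)]
    refine mul_ne_zero hpos.ne' ?_
    split_ifs <;> norm_num
  refine ⟨{C | ∃ v, τ v ≠ v ∧ C = cycleEdges τ v}, ?_, ?_, ?_, ?_, ?_⟩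
  · ext e
    simp only [Set.mem_iUnion, Set.mem_ofPred_eq]
    constructor
    · rintro ⟨_, ⟨v, hv, rfl⟩, he⟩
      exact hsub v hv e he
    · intro he
      obtain ⟨u, hu, rfl⟩ := exists_of_permWeight_ne_zero (right_ne_zero_of_mul he)
      exact ⟨_, ⟨u, hu, rfl⟩, u, Perm.SameCycle.refl τ u, rfl⟩
  · rintro _ ⟨v, hv, rfl⟩ e he
    exact hG e (hsub v hv e he)
  · rintro _ ⟨v, hv, rfl⟩
    rcases hτ v with h | h
    · right
      exact ⟨s(v, τ v), by simpa using Ne.symm hv, cycleEdges_singleton h⟩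
    · exact Or.inl (isOddCycle_cycleEdges hv h)
  · rintro _ ⟨v, hv, rfl⟩ _ ⟨v', hv', rfl⟩ hne x ⟨⟨e, he, hx⟩, ⟨e', he', hx'⟩⟩
    exact hne (cycleEdges_eq ((sameCycle_of_mem he hx).trans (sameCycle_of_mem he' hx').symm))
  · intro e _
    constructor
    · rintro ⟨_, ⟨v, hv, rfl⟩, hC, u, hu, rfl⟩
      have hu' := sameCycle_fix hu hv
      rw [wMaxDeg_permWeight hc τ hv, permWeight_apply τ hu', if_neg]
      · ring
      · intro h
        rw [cycleEdges_eq hu, cycleEdges_singleton h] at hC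
        exact not_isOddCycle_singleton _ hC
    · rintro ⟨_, ⟨v, hv, rfl⟩, hC⟩
      have h1 : s(v, τ v) = e := by
        have : s(v, τ v) ∈ cycleEdges τ v := ⟨v, Perm.SameCycle.refl τ v, rfl⟩
        rwa [hC] at this
      have h2 : s(τ v, τ (τ v)) = e := by
        have : s(τ v, τ (τ v)) ∈ cycleEdges τ v :=
          ⟨τ v, Perm.sameCycle_apply_right.2 (Perm.SameCycle.refl τ v), rfl⟩
        rwa [hC] at this
      have h3 : τ (τ v) = v := by
        rcases Sym2.eq_iff.1 (h1.trans h2.symm) with ⟨h, -⟩ | ⟨h, -⟩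
        · exact absurd h.symm hv
        · exact h.symm
      rw [wMaxDeg_permWeight hc τ hv, ← h1, permWeight_apply τ hv, if_pos h3, mul_one]

/-! ### The decomposition into permutation weights -/

/-- Birkhoff–von Neumann, applied to `w / Δ(w)` completed to a doubly stochastic matrix by putting
the slacks of the vertices on the diagonal. -/
lemma exists_birkhoff [Nonempty V] (w : Sym2 V → ℝ) (hw0 : ∀ e, 0 ≤ w e)
    (hdiag : ∀ v, w s(v, v) = 0) :
    ∃ l : Perm V → ℝ, (∀ σ, 0 ≤ l σ) ∧ ∑ σ, l σ = 1 ∧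
      ∀ e, w e = wMaxDeg w * ∑ σ, l σ * permWeight σ e := by
  set D := wMaxDeg w with hD
  have hle : ∀ v, ∑ u, w s(v, u) ≤ D := fun v => by
    rw [← wDeg_eq]; exact wDeg_le_wMaxDeg w v
  have hsumnn : ∀ v, 0 ≤ ∑ u, w s(v, u) := fun v => Finset.sum_nonneg fun u _ => hw0 _
  have hD0 : 0 ≤ D := (hsumnn (Classical.arbitrary V)).trans (hle _)
  let A : Matrix V V ℝ := fun u v =>
    w s(u, v) / D + if u = v then 1 - (∑ x, w s(u, x)) / D else 0
  have hAsymm : ∀ u v, A u v = A v u := by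
    intro u v
    by_cases h : u = v
    · rw [h]
    · simp only [A, h, Ne.symm h, if_false, Sym2.eq_swap]
  have hrow : ∀ u, ∑ v, A u v = 1 := by
    intro u
    simp only [A, Finset.sum_add_distrib, ← Finset.sum_div, Finset.sum_ite_eq, Finset.mem_univ,
      if_true]
    ring
  have hA : A ∈ doublyStochastic ℝ V := by
    rw [mem_doublyStochastic_iff_sum]
    refine ⟨fun u v => ?_, hrow, fun v => ?_⟩
    · refine add_nonneg (div_nonneg (hw0 _) hD0) ?_
      split_ifs
      · exact sub_nonneg.2 (div_le_one_of_le₀ (hle u) hD0)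
      · exact le_rfl
    · rw [← hrow v]; exact Finset.sum_congr rfl fun u _ => hAsymm u v
  obtain ⟨l, hl0, hl1, hl⟩ := exists_eq_sum_perm_of_mem_doublyStochastic hA
  refine ⟨l, hl0, hl1, fun e => ?_⟩
  have hent : ∀ u v, A u v = ∑ σ, l σ * if σ u = v then 1 else 0 := by
    intro u v
    rw [← hl, Matrix.sum_apply]
    refine Finset.sum_congr rfl fun σ _ => ?_
    rw [Matrix.smul_apply, smul_eq_mul, Perm.permMatrix, PEquiv.toMatrix_apply]
    simp [Equiv.toPEquiv_apply, eq_comm]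
  induction e with
  | _ u v =>
    by_cases huv : u = v
    · subst huv; simp [hdiag, permWeight_mk]
    have h1 : ∑ σ, l σ * permWeight σ s(u, v) = (A u v + A v u) / 2 := by
      rw [hent, hent, ← Finset.sum_add_distrib, Finset.sum_div]
      refine Finset.sum_congr rfl fun σ _ => ?_
      rw [permWeight_mk, if_neg huv]
      ring
    have h2 : A u v = w s(u, v) / D := by simp [A, huv]
    rw [h1, hAsymm v u, h2]
    by_cases hDz : D = 0
    · have : w s(u, v) ≤ D :=
        (Finset.single_le_sum (f := fun x => w s(u, x)) (fun x _ => hw0 _)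
          (Finset.mem_univ v)).trans (hle u)
      have h3 : w s(u, v) = 0 := le_antisymm (hDz ▸ this) (hw0 _)
      simp [h3]
    · field_simp
      ring

end

/-- Any nonnegative weight `w` on the edges of a finite simple graph `G` decomposes as
`w = w₁ + ⋯ + w_p` with `Δ(w₁) + ⋯ + Δ(w_p) = Δ(w)`, where the support of each `wᵢ` is a
vertex-disjoint union of odd cycles and single edges of `G`, and on this support `wᵢ` takes
the value `Δ(wᵢ)/2` on the edges of the odd cycles and `Δ(wᵢ)` on the isolated single
edges. -/
theorem stmt_14 {V : Type} [Fintype V] [DecidableEq V] [Nonempty V]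
    (G : SimpleGraph V) (w : Sym2 V → ℝ)
    (hw0 : ∀ e, 0 ≤ w e) (hwsupp : ∀ e, w e ≠ 0 → e ∈ G.edgeSet) :
    ∃ (p : ℕ) (W : Fin p → Sym2 V → ℝ),
      (∀ i e, 0 ≤ W i e) ∧
      (∀ e, ∑ i, W i e = w e) ∧
      (∑ i, wMaxDeg (W i)) = wMaxDeg w ∧
      ∀ i, ∃ 𝒞 : Set (Set (Sym2 V)),
        (⋃ C ∈ 𝒞, C) = {e | W i e ≠ 0} ∧
        (∀ C ∈ 𝒞, C ⊆ G.edgeSet) ∧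
        (∀ C ∈ 𝒞, IsOddCycleEdgeSet C ∨ ∃ e : Sym2 V, ¬ e.IsDiag ∧ C = {e}) ∧
        (∀ C ∈ 𝒞, ∀ C' ∈ 𝒞, C ≠ C' → ∀ v : V,
          ¬((∃ e ∈ C, v ∈ e) ∧ (∃ e ∈ C', v ∈ e))) ∧
        (∀ e, W i e ≠ 0 →
          ((∃ C ∈ 𝒞, IsOddCycleEdgeSet C ∧ e ∈ C) → W i e = wMaxDeg (W i) / 2) ∧
          ((∃ C ∈ 𝒞, C = {e}) → W i e = wMaxDeg (W i))) := by
  classical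
  have hdiag : ∀ v, w s(v, v) = 0 := fun v => by
    by_contra h
    exact G.loopless.irrefl v (hwsupp _ h)
  obtain ⟨l, hl0, hl1, hl⟩ := exists_birkhoff w hw0 hdiag
  choose τ hτ hsplit using exists_split (V := V)
  have hD0 : 0 ≤ wMaxDeg w := by
    refine le_trans ?_ (wDeg_le_wMaxDeg w (Classical.arbitrary V))
    rw [wDeg_eq]
    exact Finset.sum_nonneg fun u _ => hw0 _
  let ι := Equiv.Perm V × Bool
  let c : ι → ℝ := fun i => wMaxDeg w * l i.1 / 2
  have hc0 : ∀ i, 0 ≤ c i := fun i =>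
    div_nonneg (mul_nonneg hD0 (hl0 _)) (by norm_num)
  let U : ι → Sym2 V → ℝ := fun i e => c i * permWeight (τ i.1 i.2) e
  have hU0 : ∀ i e, 0 ≤ U i e := fun i e => mul_nonneg (hc0 i) (permWeight_nonneg _ _)
  have hUsum : ∀ e, ∑ i, U i e = w e := by
    intro e
    rw [hl e, Fintype.sum_prod_type, Finset.mul_sum]
    refine Finset.sum_congr rfl fun σ _ => ?_
    rw [Fintype.sum_bool, hsplit σ e]
    simp only [U, c]
    ring
  have hcsum : ∑ i, c i = wMaxDeg w := by
    rw [Fintype.sum_prod_type]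
    calc ∑ σ, ∑ b : Bool, c (σ, b) = ∑ σ, wMaxDeg w * l σ :=
          Finset.sum_congr rfl fun σ _ => by
            rw [Fintype.sum_bool]
            simp only [c]
            ring
      _ = wMaxDeg w := by rw [← Finset.mul_sum, hl1, mul_one]
  have hUmax : ∑ i, wMaxDeg (U i) = wMaxDeg w := by
    refine le_antisymm ?_ ?_
    · rw [← hcsum]
      exact Finset.sum_le_sum fun i _ => wMaxDeg_permWeight_le (hc0 i) _
    · refine ciSup_le fun v => ?_
      have : wDeg w v = ∑ i, wDeg (U i) v := by
        simp only [wDeg_eq]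
        rw [Finset.sum_comm]
        exact Finset.sum_congr rfl fun u _ => (hUsum _).symm
      rw [this]
      exact Finset.sum_le_sum fun i _ => wDeg_le_wMaxDeg _ _
  have hUG : ∀ i e, U i e ≠ 0 → e ∈ G.edgeSet := by
    intro i e h
    refine hwsupp e (ne_of_gt ?_)
    calc 0 < U i e := lt_of_le_of_ne (hU0 i e) (Ne.symm h)
      _ ≤ ∑ i, U i e := Finset.single_le_sum (f := fun i => U i e) (fun i _ => hU0 i e)
          (Finset.mem_univ i)
      _ = w e := hUsum e
  let φ := (Fintype.equivFin ι).symm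
  refine ⟨Fintype.card ι, fun i => U (φ i), fun i e => hU0 _ e, fun e => ?_, ?_, fun i => ?_⟩
  · rw [← hUsum e]
    exact φ.sum_comp fun i => U i e
  · rw [← hUmax]
    exact φ.sum_comp fun i => wMaxDeg (U i)
  · exact exists_components (hτ _ _) (hc0 (φ i)) G (hUG (φ i))
end

section
/- Let H be a finite simple graph, let M be a matching in H whose edges all belong to a common strong clique of H, and let T be a tree subgraph of H that is vertex-disjoint from the edges of M such that for every edge of M at least one of its endpoints is adjacent in H to some vertex of T. Then H contains a complete graph on |M| + 1 vertices as a minor. -/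
lemma induce_edge_connected {V : Type} (H : SimpleGraph V) (e : Sym2 V) (he : e ∈ H.edgeSet) :
    (H.induce {x | x ∈ e}).Connected := by
  induction e with
  | h a b =>
    have hset : {x | x ∈ s(a, b)} = ({a, b} : Set V) := by
      ext x
      simp
    rw [hset]
    exact SimpleGraph.induce_pair_connected_of_adj he

/-- If `M` is a matching of edges belonging to a common strong clique of `H` and `T` is a
tree subgraph of `H` vertex-disjoint from the edges of `M` such that some endpoint of every
edge of `M` is adjacent to a vertex of `T`, then `H` has a clique minor of order
`|M| + 1`. -/
theorem stmt_18 {V : Type} [Fintype V] (H : SimpleGraph V)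
    (M : Finset (Sym2 V)) (hMedge : (M : Set (Sym2 V)) ⊆ H.edgeSet)
    (hMmatch : ∀ e ∈ M, ∀ f ∈ M, e ≠ f → ¬ ∃ x, x ∈ e ∧ x ∈ f)
    (hMclique : ∃ S : Set (Sym2 V), IsStrongCliqueSet H S ∧ (M : Set (Sym2 V)) ⊆ S)
    (T : H.Subgraph) (hT : T.coe.IsTree)
    (hdisj : ∀ e ∈ M, ∀ x, x ∈ e → x ∉ T.verts)
    (hadj : ∀ e ∈ M, ∃ x ∈ e, ∃ y ∈ T.verts, H.Adj x y) :
    HasCliqueMinor H (M.card + 1) := by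
  obtain ⟨S, ⟨-, hS⟩, hMS⟩ := hMclique
  let edge : Fin M.card → Sym2 V := fun i => (M.equivFin.symm i).1
  have hmem : ∀ i, edge i ∈ M := fun i => (M.equivFin.symm i).2
  have hne : ∀ i j, i ≠ j → edge i ≠ edge j := fun i j hij h =>
    hij (M.equivFin.symm.injective (Subtype.ext h))
  refine ⟨Fin.cons T.verts fun i => {x | x ∈ edge i}, ?_, ?_, ?_⟩
  · intro i
    refine Fin.cases ?_ (fun i => ?_) i
    · exact hT.connected.mono (fun _ _ h => T.adj_sub h)
    · exact induce_edge_connected H (edge i) (hMedge (hmem i))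
  · intro i j
    refine Fin.cases ?_ (fun i => ?_) i <;> refine Fin.cases ?_ (fun j => ?_) j
    · exact fun h => (h rfl).elim
    · exact fun _ => Set.disjoint_left.2 fun x hx hxe => hdisj _ (hmem j) x hxe hx
    · exact fun _ => Set.disjoint_left.2 fun x hxe hx => hdisj _ (hmem i) x hxe hx
    · exact fun hij => Set.disjoint_left.2 fun x hx hy =>
        hMmatch _ (hmem i) _ (hmem j) (hne i j fun h => hij (congrArg Fin.succ h)) ⟨x, hx, hy⟩
  · intro i j
    refine Fin.cases ?_ (fun i => ?_) i <;> refine Fin.cases ?_ (fun j => ?_) j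
    · exact fun h => (h rfl).elim
    · obtain ⟨x, hx, y, hy, hxy⟩ := hadj _ (hmem j)
      exact fun _ => ⟨y, hy, x, hx, hxy.symm⟩
    · obtain ⟨x, hx, y, hy, hxy⟩ := hadj _ (hmem i)
      exact fun _ => ⟨x, hx, y, hy, hxy⟩
    · intro hij
      have hij' := hne i j fun h => hij (congrArg Fin.succ h)
      rcases hS _ (hMS (hmem i)) _ (hMS (hmem j)) hij' with h | ⟨x, y, hx, hy, hxy⟩
      · exact (hMmatch _ (hmem i) _ (hmem j) hij' h).elim
      · exact ⟨x, hx, y, hy, hxy⟩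
end
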